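/- arXiv:2107.00550 — 3 statements merged into one kernel-verified Lean document; each statement's English description precedes it below -/
import Mathlib

section
/- Fix an integer s ≥ 2 and a real number r ∈ (0, binom(s,2)], and for n ≥ s let P_n(s,r) ⊆ [0,1]^{E(K_n)} be the set of edge-weightings w : E(K_n) → [0,1] such that w(S) ≤ r for every s-element subset S of [n]. Then vol(P_n(s,r)) = (r/binom(s,2) + o(1))^{binom(n,2)}; that is, vol(P_n(s,r))^{1/binom(n,2)} → r/binom(s,2) as n → ∞. -/
open MeasureTheory Filter Set

noncomputable section

/-- The edge set of the complete graph `K_n`, encoded as ordered pairs `(i,j)` with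
`i < j`. -/
def EdgeType (n : ℕ) : Type := {p : Fin n × Fin n // p.1 < p.2}

instance (n : ℕ) : Fintype (EdgeType n) := Subtype.fintype _
instance (n : ℕ) : DecidableEq (EdgeType n) := Subtype.instDecidableEq

/-- The edges of `K_n` lying inside a vertex subset `S`. -/
def edgesIn {n : ℕ} (S : Finset (Fin n)) : Finset (EdgeType n) :=
  Finset.univ.filter (fun e => e.val.1 ∈ S ∧ e.val.2 ∈ S)

/-- The hereditary property `P_n(s,r)`: edge-weightings `w : E(K_n) → [0,1]` in which
every `s`-set of vertices has weight at most `r`. -/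
def weightedProp (n s : ℕ) (r : ℝ) : Set (EdgeType n → ℝ) :=
  {w | (∀ e, w e ∈ Set.Icc (0:ℝ) 1) ∧
    ∀ S : Finset (Fin n), S.card = s → ∑ e ∈ edgesIn S, w e ≤ r}


/-- Overwrite coordinates `i`, `j` of a tuple. -/
def updT {n s : ℕ} (i j : Fin s) (t : Fin s → Fin n) (q : Fin n × Fin n) : Fin s → Fin n :=
  Function.update (Function.update t i q.1) j q.2

lemma updT_fst {n s : ℕ} {i j : Fin s} (h : i ≠ j) (t : Fin s → Fin n) (q : Fin n × Fin n) :
    updT i j t q i = q.1 := by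
  simp [updT, Function.update_of_ne h]

lemma updT_snd {n s : ℕ} {i j : Fin s} (t : Fin s → Fin n) (q : Fin n × Fin n) :
    updT i j t q j = q.2 := by
  simp [updT]

lemma updT_of_ne {n s : ℕ} {i j l : Fin s} (hi : l ≠ i) (hj : l ≠ j) (t : Fin s → Fin n)
    (q : Fin n × Fin n) : updT i j t q l = t l := by
  simp [updT, Function.update_of_ne hi, Function.update_of_ne hj]

lemma updT_updT {n s : ℕ} {i j : Fin s} (t : Fin s → Fin n)
    (q : Fin n × Fin n) : updT i j (updT i j t q) (t i, t j) = t := by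
  funext l
  by_cases hj : l = j
  · subst hj; rw [updT_snd]
  · by_cases hi : l = i
    · subst hi; rw [updT_fst hj]
    · rw [updT_of_ne hi hj, updT_of_ne hi hj]

lemma updT_sum {n s : ℕ} {i j : Fin s} (h : i ≠ j) (g : (Fin s → Fin n) → ℝ) :
    ∑ q : Fin n × Fin n, ∑ t, g (updT i j t q) = (n : ℝ) ^ 2 * ∑ v, g v := by
  have hinv : Function.Involutive
      (fun z : (Fin n × Fin n) × (Fin s → Fin n) =>
        (((z.2 i, z.2 j), updT i j z.2 z.1) : (Fin n × Fin n) × (Fin s → Fin n))) := by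
    rintro ⟨q, t⟩
    simp only [updT_updT, updT_fst h, updT_snd]
  have h1 := Equiv.sum_comp hinv.toPerm
    (fun z : (Fin n × Fin n) × (Fin s → Fin n) => g z.2)
  simp only [Function.Involutive.coe_toPerm] at h1
  have e1 : ∑ q : Fin n × Fin n, ∑ t, g (updT i j t q)
      = ∑ z : (Fin n × Fin n) × (Fin s → Fin n), g (updT i j z.2 z.1) :=
    (Fintype.sum_prod_type
      (fun z : (Fin n × Fin n) × (Fin s → Fin n) => g (updT i j z.2 z.1))).symm
  have e2 : ∑ z : (Fin n × Fin n) × (Fin s → Fin n), g z.2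
      = ∑ q : Fin n × Fin n, ∑ t, g t :=
    Fintype.sum_prod_type (fun z : (Fin n × Fin n) × (Fin s → Fin n) => g z.2)
  rw [e1, h1, e2]
  simp [pow_two]

/-- The record lemma. -/
lemma record_card {X : Type*} [Fintype X] [DecidableEq X] (m : ℕ) (f : X → ℕ) :
    (m + 1) * (Finset.univ.filter (fun u : Fin (m+1) → X => ∀ l, l ≠ 0 → f (u l) < f (u 0))).card
      ≤ Fintype.card X ^ (m+1) := by
  classical
  have h := Finset.card_le_card_of_injOn
    (s := (Finset.univ : Finset (Fin (m+1))) ×ˢ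
      (Finset.univ.filter (fun u : Fin (m+1) → X => ∀ l, l ≠ 0 → f (u l) < f (u 0))))
    (t := (Finset.univ : Finset (Fin (m+1) → X)))
    (fun z => z.2 ∘ (Equiv.swap 0 z.1)) (fun _ _ => by simp) ?_
  · simpa using h
  · rintro ⟨j, u⟩ hu ⟨j', u'⟩ hu' heq
    simp only [Finset.coe_product, Set.mem_prod, Finset.coe_univ, Set.mem_univ, true_and,
      Finset.coe_filter, Finset.mem_univ, Set.mem_ofPred_eq] at hu hu'
    have key : ∀ l, u (Equiv.swap 0 j l) = u' (Equiv.swap 0 j' l) := fun l => congrFun heq l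
    have hj : j = j' := by
      by_contra hne
      have a1 := key j
      have a2 := key j'
      rw [Equiv.swap_apply_right] at a1 a2
      have b1 : Equiv.swap 0 j' j ≠ 0 := by
        intro h0
        rw [Equiv.swap_apply_eq_iff, Equiv.swap_apply_left] at h0
        exact hne h0
      have b2 : Equiv.swap 0 j j' ≠ 0 := by
        intro h0
        rw [Equiv.swap_apply_eq_iff, Equiv.swap_apply_left] at h0
        exact hne h0.symm
      have c1 := hu' _ b1
      have c2 := hu _ b2
      rw [← a1] at c1
      rw [a2] at c2
      omega
    subst hj
    have : u = u' := by
      funext l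
      have := key (Equiv.swap 0 j l)
      simpa using this
    rw [this]

lemma coord_sum {X : Type*} [Fintype X] [DecidableEq X] (m : ℕ) (a : Fin (m+1)) (g : X → ℝ) :
    ∑ T : Fin (m+1) → X, g (T a) = (Fintype.card X : ℝ) ^ m * ∑ x, g x := by
  have h := Equiv.sum_comp (Fin.insertNthEquiv (fun _ : Fin (m+1) => X) a)
    (fun T : Fin (m+1) → X => g (T a))
  rw [← h, Fintype.sum_prod_type]
  simp [Finset.mul_sum]

lemma record_sum {X : Type*} [Fintype X] [DecidableEq X] (m : ℕ) (f : X → ℕ) :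
    ∑ T : Fin m → X, ∑ t : X, (if ∀ a, f (T a) < f t then (1:ℝ) else 0)
      ≤ (Fintype.card X : ℝ) ^ (m+1) / (m+1) := by
  have h := record_card m f
  rw [Finset.card_filter] at h
  have h2 := Equiv.sum_comp (Fin.consEquiv (fun _ : Fin (m+1) => X))
    (fun u : Fin (m+1) → X => if ∀ l, l ≠ 0 → f (u l) < f (u 0) then 1 else 0)
  rw [← h2, Fintype.sum_prod_type, Finset.sum_comm] at h
  rw [le_div_iff₀ (by positivity), mul_comm]
  have h3 : ((( m + 1) * ∑ T : Fin m → X, ∑ t : X, (if ∀ a, f (T a) < f t then 1 else 0) : ℕ) : ℝ)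
      ≤ ((Fintype.card X ^ (m+1) : ℕ) : ℝ) := by
    norm_cast
    convert h using 6
    simp [Fin.consEquiv, Fin.forall_fin_succ]
  push_cast at h3
  exact h3

/-- The container function built from the tuples `T`. -/
def bT {n m : ℕ} (k R : ℕ) (Q : Fin m → Fin n × Fin n → ℕ)
    (q : Fin n × Fin n) : ℕ :=
  min k (R - Finset.univ.sup (fun a => Q a q))

lemma choose_T {n s m k R : ℕ} {i j : Fin s} (hij : i ≠ j) (hn : 0 < n)
    (c : Fin n → Fin n → ℕ) (hck : ∀ x y, c x y ≤ k) (Q : (Fin s → Fin n) → ℕ) (ε ε' : ℝ)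
    (hε : ((m:ℝ) + 2) * ε' + 1 / ((m:ℝ) + 2) ≤ ε)
    (hv : ∑ v : Fin s → Fin n, (if R < c (v i) (v j) + Q v then (1:ℝ) else 0) ≤ ε' * n ^ s) :
    ∃ T : Fin (m+1) → (Fin s → Fin n),
      ∑ q : Fin n × Fin n,
        (if bT k R (fun a q => Q (updT i j (T a) q)) q < c q.1 q.2 then (1:ℝ) else 0)
          ≤ ε * n ^ 2 ∧
      ∑ v : Fin s → Fin n,
        (if R < bT k R (fun a q => Q (updT i j (T a) q)) (v i, v j) + Q v then (1:ℝ) else 0)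
          ≤ ε * n ^ s := by
  classical
  set N : ℝ := (n:ℝ) ^ s with hN
  have hn' : (0:ℝ) < n := by exact_mod_cast hn
  have hNpos : 0 < N := by positivity
  have hcard : (Fintype.card (Fin s → Fin n) : ℝ) = N := by simp [hN]
  set viol : (Fin s → Fin n) → ℝ := fun v => if R < c (v i) (v j) + Q v then (1:ℝ) else 0 with hviol
  have hviol0 : ∀ v, 0 ≤ viol v := fun v => by simp only [hviol]; split_ifs <;> norm_num
  set A1 : (Fin (m+1) → (Fin s → Fin n)) → ℝ := fun T => ∑ q : Fin n × Fin n,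
        (if bT k R (fun a q => Q (updT i j (T a) q)) q < c q.1 q.2 then (1:ℝ) else 0) with hA1
  set A2 : (Fin (m+1) → (Fin s → Fin n)) → ℝ := fun T => ∑ v : Fin s → Fin n,
        (if R < bT k R (fun a q => Q (updT i j (T a) q)) (v i, v j) + Q v then (1:ℝ) else 0)
    with hA2
  have A1nn : ∀ T, 0 ≤ A1 T := fun T => Finset.sum_nonneg fun q _ => by split_ifs <;> norm_num
  have A2nn : ∀ T, 0 ≤ A2 T := fun T => Finset.sum_nonneg fun q _ => by split_ifs <;> norm_num
  -- first count
  have p1 : ∀ (T : Fin (m+1) → (Fin s → Fin n)) (q : Fin n × Fin n),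
      (if bT k R (fun a q => Q (updT i j (T a) q)) q < c q.1 q.2 then (1:ℝ) else 0)
        ≤ ∑ a : Fin (m+1), viol (updT i j (T a) q) := by
    intro T q
    split_ifs with hlt
    · obtain ⟨a, -, ha⟩ := Finset.exists_mem_eq_sup (Finset.univ : Finset (Fin (m+1)))
        Finset.univ_nonempty (fun a => Q (updT i j (T a) q))
      have hv1 : viol (updT i j (T a) q) = 1 := by
        simp only [hviol, updT_fst hij, updT_snd]
        rw [if_pos]
        unfold bT at hlt
        rw [ha] at hlt
        have := hck q.1 q.2
        omega
      rw [← hv1]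
      exact Finset.single_le_sum (f := fun a => viol (updT i j (T a) q))
        (fun a _ => hviol0 _) (Finset.mem_univ a)
    · exact Finset.sum_nonneg fun a _ => hviol0 _
  have s1 : ∑ T, A1 T ≤ (m+1) * (N ^ m * ((n:ℝ)^2 * ∑ v, viol v)) := by
    calc ∑ T, A1 T ≤ ∑ T : Fin (m+1) → (Fin s → Fin n), ∑ q : Fin n × Fin n,
            ∑ a : Fin (m+1), viol (updT i j (T a) q) :=
          Finset.sum_le_sum fun T _ => Finset.sum_le_sum fun q _ => p1 T q
      _ = ∑ q : Fin n × Fin n, ∑ a : Fin (m+1), ∑ T : Fin (m+1) → (Fin s → Fin n),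
            viol (updT i j (T a) q) := by
          rw [Finset.sum_comm]
          exact Finset.sum_congr rfl fun q _ => Finset.sum_comm
      _ = ∑ q : Fin n × Fin n, ∑ a : Fin (m+1), N ^ m * ∑ t, viol (updT i j t q) := by
          refine Finset.sum_congr rfl fun q _ => Finset.sum_congr rfl fun a _ => ?_
          rw [coord_sum m a (fun t => viol (updT i j t q)), hcard]
      _ = (m+1) * (N ^ m * ((n:ℝ)^2 * ∑ v, viol v)) := by
          rw [← updT_sum hij viol]
          simp [Finset.mul_sum]
  -- second count
  have p2 : ∀ (T : Fin (m+1) → (Fin s → Fin n)) (q : Fin n × Fin n) (t : Fin s → Fin n),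
      (if R < bT k R (fun a q => Q (updT i j (T a) q)) (updT i j t q i, updT i j t q j)
        + Q (updT i j t q) then (1:ℝ) else 0)
        ≤ viol (updT i j t q) +
          (if ∀ a : Fin (m+1), Q (updT i j (T a) q) < Q (updT i j t q) then (1:ℝ) else 0) := by
    intro T q t
    rw [updT_fst hij, updT_snd]
    by_cases hlt : R < bT k R (fun a q => Q (updT i j (T a) q)) (q.1, q.2) + Q (updT i j t q)
    · rw [if_pos hlt]
      by_cases hr : ∀ a : Fin (m+1), Q (updT i j (T a) q) < Q (updT i j t q)
      · rw [if_pos hr]; linarith [hviol0 (updT i j t q)]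
      · rw [if_neg hr]
        push Not at hr
        obtain ⟨a, ha⟩ := hr
        have hsup := Finset.le_sup (f := fun a => Q (updT i j (T a) q)) (Finset.mem_univ a)
        have : viol (updT i j t q) = 1 := by
          simp only [hviol]
          rw [if_pos]
          unfold bT at hlt
          simp only [Prod.mk.eta] at hlt hsup
          omega
        rw [this]; norm_num
    · rw [if_neg hlt]
      have := hviol0 (updT i j t q)
      split_ifs <;> linarith
  have s2 : ∑ T, (n:ℝ)^2 * A2 T ≤ N ^ (m+1) * ((n:ℝ)^2 * ∑ v, viol v)
      + (n:ℝ)^2 * (N ^ (m+2) / (m+2)) := by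
    calc ∑ T, (n:ℝ)^2 * A2 T ≤ ∑ T : Fin (m+1) → (Fin s → Fin n), ∑ q : Fin n × Fin n,
            ∑ t, (viol (updT i j t q) +
            (if ∀ a : Fin (m+1), Q (updT i j (T a) q) < Q (updT i j t q) then (1:ℝ) else 0)) := by
          refine Finset.sum_le_sum fun T _ => ?_
          simp only [hA2]
          rw [← updT_sum hij]
          exact Finset.sum_le_sum fun q _ => Finset.sum_le_sum fun t _ => p2 T q t
      _ = ∑ T : Fin (m+1) → (Fin s → Fin n), ∑ q : Fin n × Fin n, ∑ t, viol (updT i j t q)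
          + ∑ q : Fin n × Fin n, ∑ T : Fin (m+1) → (Fin s → Fin n), ∑ t,
            (if ∀ a : Fin (m+1), Q (updT i j (T a) q) < Q (updT i j t q) then (1:ℝ) else 0) := by
          simp only [Finset.sum_add_distrib]
          congr 1
          exact Finset.sum_comm
      _ ≤ N ^ (m+1) * ((n:ℝ)^2 * ∑ v, viol v) + ∑ q : Fin n × Fin n, N ^ (m+2) / (m+2) := by
          refine add_le_add (le_of_eq ?_) (Finset.sum_le_sum fun q _ => ?_)
          · rw [updT_sum hij]
            simp [hN]
          · have := record_sum (m+1) (fun t => Q (updT i j t q))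
            rw [hcard] at this
            refine this.trans (le_of_eq ?_)
            push_cast; ring
      _ = _ := by simp [pow_two]
  have tot : ∑ T, (N * A1 T + (n:ℝ)^2 * A2 T)
      ≤ ∑ T : Fin (m+1) → (Fin s → Fin n), (n:ℝ)^2 * N * ε := by
    rw [Finset.sum_add_distrib, ← Finset.mul_sum, Finset.sum_const, nsmul_eq_mul]
    have hc2 : ((Finset.univ : Finset (Fin (m+1) → (Fin s → Fin n))).card : ℝ) = N ^ (m+1) := by
      simp [hN]
    rw [hc2]
    have h1 : N * ∑ T, A1 T ≤ N * ((m+1) * (N ^ m * ((n:ℝ)^2 * (ε' * N)))) := by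
      refine mul_le_mul_of_nonneg_left (s1.trans ?_) hNpos.le
      gcongr
    have h2 : ∑ T, (n:ℝ)^2 * A2 T ≤ N ^ (m+1) * ((n:ℝ)^2 * (ε' * N))
      + (n:ℝ)^2 * (N ^ (m+2) / (m+2)) := by
      refine s2.trans ?_
      gcongr
    have h3 : N ^ (m+1) * ((n:ℝ)^2 * N * (((m:ℝ) + 2) * ε' + 1 / ((m:ℝ) + 2)))
        ≤ N ^ (m+1) * ((n:ℝ)^2 * N * ε) := by gcongr
    refine (add_le_add h1 h2).trans (le_trans (le_of_eq ?_) h3)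
    have : (m:ℝ) + 2 ≠ 0 := by positivity
    field_simp
    ring
  have : Nonempty (Fin n) := ⟨⟨0, hn⟩⟩
  obtain ⟨T, -, hT⟩ := Finset.exists_le_of_sum_le Finset.univ_nonempty tot
  refine ⟨T, ?_, ?_⟩
  · have h1 : N * A1 T ≤ N * (ε * n^2) := by
      have := A2nn T
      nlinarith [mul_nonneg (sq_nonneg (n:ℝ)) this]
    exact le_of_mul_le_mul_left h1 hNpos
  · have h1 : (n:ℝ)^2 * A2 T ≤ (n:ℝ)^2 * (ε * N) := by
      have := A1nn T
      nlinarith [mul_nonneg hNpos.le this]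
    exact le_of_mul_le_mul_left h1 (by positivity)

/-- Symmetric colourings with all injective `s`-tuples of weight at most `R`. -/
def IsCol (n s k R : ℕ) (c : Fin n → Fin n → ℕ) : Prop :=
  (∀ x y, c x y ≤ k) ∧ (∀ x y, c x y = c y x) ∧
    ∀ v : Fin s → Fin n, Function.Injective v →
      ∑ p : EdgeType s, c (v p.val.1) (v p.val.2) ≤ R

/-- The partially replaced colouring. -/
def mixW {n s : ℕ} (A : Finset (EdgeType s)) (b : EdgeType s → Fin n → Fin n → ℕ)
    (c : Fin n → Fin n → ℕ) (p : EdgeType s) : Fin n → Fin n → ℕ :=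
  if p ∈ A then b p else c

/-- `b` is an `ε`-approximate container for `c` on the pairs of `A`. -/
def GoodC {n s : ℕ} (R : ℕ) (A : Finset (EdgeType s)) (ε : ℝ)
    (b : EdgeType s → Fin n → Fin n → ℕ) (c : Fin n → Fin n → ℕ) : Prop :=
  (∀ p ∈ A, ∑ q : Fin n × Fin n, (if b p q.1 q.2 < c q.1 q.2 then (1:ℝ) else 0) ≤ ε * n ^ 2) ∧
  ∑ v : Fin s → Fin n,
    (if R < ∑ p : EdgeType s, mixW A b c p (v p.val.1) (v p.val.2) then (1:ℝ) else 0) ≤ ε * n ^ s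

/-- The weight decoded from the information `σ`. -/
def decQ {n s m k : ℕ} (A : Finset (EdgeType s)) (p0 : EdgeType s)
    (b : EdgeType s → Fin n → Fin n → ℕ) (T : Fin m → Fin s → Fin n)
    (σ : Fin m → Fin s → Fin n → Fin (k+1)) (a : Fin m) (q : Fin n × Fin n) : ℕ :=
  ∑ p ∈ Finset.univ.erase p0,
    if p ∈ A then b p (updT p0.val.1 p0.val.2 (T a) q p.val.1)
      (updT p0.val.1 p0.val.2 (T a) q p.val.2)
    else if p.val.1 ≠ p0.val.1 ∧ p.val.1 ≠ p0.val.2 then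
      (σ a p.val.1 (updT p0.val.1 p0.val.2 (T a) q p.val.2) : ℕ)
    else (σ a p.val.2 (updT p0.val.1 p0.val.2 (T a) q p.val.1) : ℕ)

lemma decQ_eq {n s m k : ℕ} (A : Finset (EdgeType s)) (p0 : EdgeType s)
    (b : EdgeType s → Fin n → Fin n → ℕ) (T : Fin m → Fin s → Fin n)
    (c : Fin n → Fin n → ℕ) (hck : ∀ x y, c x y ≤ k) (hsym : ∀ x y, c x y = c y x)
    (a : Fin m) (q : Fin n × Fin n) :
    decQ A p0 b T (fun a l x => (⟨c (T a l) x, Nat.lt_succ_of_le (hck _ _)⟩ : Fin (k+1))) a q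
      = ∑ p ∈ Finset.univ.erase p0, mixW A b c p (updT p0.val.1 p0.val.2 (T a) q p.val.1)
      (updT p0.val.1 p0.val.2 (T a) q p.val.2) := by
  unfold decQ mixW
  refine Finset.sum_congr rfl fun p hp => ?_
  have hpne : p ≠ p0 := Finset.ne_of_mem_erase hp
  by_cases hA : p ∈ A
  · simp [hA]
  · simp only [hA, if_false]
    split_ifs with h
    · rw [updT_of_ne h.1 h.2 (T a) q]
    · have h0 := p0.2
      have h1 := p.2
      have hne : ¬ (p.val.1 = p0.val.1 ∧ p.val.2 = p0.val.2) := by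
        rintro ⟨e1, e2⟩
        exact hpne (Subtype.ext (Prod.ext e1 e2))
      have g1 : p.val.2 ≠ p0.val.1 := by
        intro e; simp only [Fin.ext_iff, Fin.lt_def] at *; omega
      have g2 : p.val.2 ≠ p0.val.2 := by
        intro e; simp only [Fin.ext_iff, Fin.lt_def] at *; omega
      rw [updT_of_ne g1 g2 (T a) q]
      exact hsym _ _

lemma noninj_sum {n s : ℕ} (p : EdgeType s) (hn : 0 < n) :
    ∑ v : Fin s → Fin n, (if v p.val.1 = v p.val.2 then (1:ℝ) else 0) = (n:ℝ)^s / n := by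
  have hne : p.val.1 ≠ p.val.2 := ne_of_lt p.2
  have h := updT_sum (n := n) hne (fun v => if v p.val.1 = v p.val.2 then (1:ℝ) else 0)
  simp only [updT_fst hne, updT_snd] at h
  have hn' : (0:ℝ) < n := by exact_mod_cast hn
  have e : ∑ q : Fin n × Fin n, ∑ t : Fin s → Fin n, (if q.1 = q.2 then (1:ℝ) else 0)
      = n * (n:ℝ)^s := by
    rw [Fintype.sum_prod_type]
    simp
  rw [e] at h
  rw [eq_div_iff hn'.ne']
  have : (n:ℝ) * ((n:ℝ) ^ s) = n * ((∑ v : Fin s → Fin n, (if v p.val.1 = v p.val.2 then (1:ℝ) else 0)) * n) := by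
    rw [h]; ring
  exact (mul_left_cancel₀ hn'.ne' this).symm

lemma container (s k R : ℕ) (A : Finset (EdgeType s)) :
    ∀ ε : ℝ, 0 < ε → ∃ K n0 : ℕ, ∀ n, n0 ≤ n →
      ∃ (I : Type) (_ : Fintype I) (dec : I → EdgeType s → Fin n → Fin n → ℕ),
        Fintype.card I ≤ K ^ n ∧ (∀ i p x y, dec i p x y ≤ k) ∧
        ∀ c, IsCol n s k R c → ∃ i, GoodC R A ε (dec i) c := by
  classical
  induction A using Finset.induction_on with
  | empty =>
    intro ε hε
    obtain ⟨n0, hn0⟩ := exists_nat_gt ((Fintype.card (EdgeType s) : ℝ) / ε)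
    refine ⟨1, n0 + 1, fun n hn => ⟨Unit, inferInstance, fun _ _ _ _ => 0, by simp, by simp, ?_⟩⟩
    rintro c ⟨-, -, hc⟩
    refine ⟨(), by simp, ?_⟩
    have hnpos : 0 < n := by omega
    have hn' : (0:ℝ) < n := by exact_mod_cast hnpos
    calc ∑ v : Fin s → Fin n, (if R < ∑ p : EdgeType s, mixW ∅ (fun _ _ _ => 0) c p (v p.val.1) (v p.val.2) then (1:ℝ) else 0)
        ≤ ∑ v : Fin s → Fin n, ∑ p : EdgeType s, (if v p.val.1 = v p.val.2 then (1:ℝ) else 0) := by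
          refine Finset.sum_le_sum fun v _ => ?_
          have hnn : ∀ p : EdgeType s, (0:ℝ) ≤ (if v p.val.1 = v p.val.2 then (1:ℝ) else 0) :=
            fun p => by split_ifs <;> norm_num
          split_ifs with h
          · have hni : ¬ Function.Injective v := by
              intro hi
              have := hc v hi
              simp only [mixW, Finset.notMem_empty, if_false] at h
              omega
            rw [Function.Injective] at hni
            push Not at hni
            obtain ⟨x, y, hxy, hne⟩ := hni
            obtain ⟨p, hp⟩ : ∃ p : EdgeType s, v p.val.1 = v p.val.2 := by
              rcases lt_or_gt_of_ne hne with hl | hl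
              · exact ⟨⟨(x, y), hl⟩, hxy⟩
              · exact ⟨⟨(y, x), hl⟩, hxy.symm⟩
            have := Finset.single_le_sum (fun p _ => hnn p) (Finset.mem_univ p)
            rw [if_pos hp] at this
            exact this
          · exact Finset.sum_nonneg fun p _ => hnn p
      _ = Fintype.card (EdgeType s) * ((n:ℝ)^s / n) := by
          rw [Finset.sum_comm]
          simp only [noninj_sum _ hnpos]
          simp
      _ ≤ ε * n ^ s := by
          have h1 : (Fintype.card (EdgeType s) : ℝ) ≤ ε * n := by
            rw [div_lt_iff₀ hε] at hn0
            have : (n0:ℝ) ≤ n := by exact_mod_cast (by omega : n0 ≤ n)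
            nlinarith
          rw [mul_div_assoc', div_le_iff₀ hn']
          nlinarith [pow_pos hn' s]
  | insert p0 A hp0 ih =>
    intro ε hε
    obtain ⟨m, hm⟩ := exists_nat_gt (2 / ε)
    have hm2 : (0:ℝ) < (m:ℝ) + 2 := by positivity
    have hεm : 1 / ((m:ℝ)+2) ≤ ε / 2 := by
      rw [div_lt_iff₀ hε] at hm
      rw [div_le_iff₀ hm2]
      nlinarith
    set ε' : ℝ := ε / 2 / ((m:ℝ)+2) with hε'
    have hε'pos : 0 < ε' := by positivity
    have hε'le : ε' ≤ ε := by
      rw [hε', div_le_iff₀ hm2]; nlinarith [Nat.cast_nonneg (α := ℝ) m]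
    have hsum : ((m:ℝ)+2) * ε' + 1 / ((m:ℝ)+2) ≤ ε := by
      have : ((m:ℝ)+2) * ε' = ε / 2 := by rw [hε']; field_simp
      linarith
    obtain ⟨K, n0, hK⟩ := ih ε' hε'pos
    refine ⟨K * (2 ^ (s * (m+1)) * (k+1) ^ (s * (m+1))), n0 + 1, fun n hn => ?_⟩
    obtain ⟨I, hI, dec, hcard, hdk, hdec⟩ := hK n (by omega)
    refine ⟨I × (Fin (m+1) → Fin s → Fin n) × (Fin (m+1) → Fin s → Fin n → Fin (k+1)),
      inferInstance, fun z => Function.update (dec z.1) p0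
        (fun x y => bT k R (decQ A p0 (dec z.1) z.2.1 z.2.2) (x, y)), ?_, ?_, ?_⟩
    · simp only [Fintype.card_prod, Fintype.card_fun, Fintype.card_fin]
      rw [mul_pow, mul_pow]
      refine Nat.mul_le_mul hcard (Nat.mul_le_mul ?_ (le_of_eq ?_))
      · rw [← pow_mul, ← pow_mul, mul_comm (s * (m+1)) n, pow_mul 2]
        exact Nat.pow_le_pow_left (Nat.lt_two_pow_self).le _
      · rw [← pow_mul, ← pow_mul, ← pow_mul]; congr 1; ring
    · intro z p x y
      by_cases hp : p = p0
      · subst hp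
        simp only [Function.update_self]
        exact min_le_left _ _
      · simp only [Function.update_of_ne hp]
        exact hdk _ _ _ _
    · intro c hc
      obtain ⟨i, hi1, hi2⟩ := hdec c hc
      obtain ⟨hck, hsym, -⟩ := hc
      have hne : p0.val.1 ≠ p0.val.2 := ne_of_lt p0.2
      set Q : (Fin s → Fin n) → ℕ := fun v =>
        ∑ p ∈ Finset.univ.erase p0, mixW A (dec i) c p (v p.val.1) (v p.val.2) with hQ
      have hsplit : ∀ v : Fin s → Fin n,
          ∑ p : EdgeType s, mixW A (dec i) c p (v p.val.1) (v p.val.2)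
            = c (v p0.val.1) (v p0.val.2) + Q v := by
        intro v
        rw [← Finset.add_sum_erase _ _ (Finset.mem_univ p0)]
        simp [mixW, hp0, hQ]
      simp only [hsplit] at hi2
      obtain ⟨T, hT1, hT2⟩ := choose_T (k := k) hne (by omega) c hck Q ε ε' hsum hi2
      refine ⟨(i, T, fun a l x => (⟨c (T a l) x, Nat.lt_succ_of_le (hck _ _)⟩ : Fin (k+1))), ?_, ?_⟩
      · intro p hp
        by_cases hpp : p = p0
        · subst hpp
          simp only [Function.update_self, Prod.mk.eta]
          convert hT1 using 5 with q
          funext a q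
          exact decQ_eq A p (dec i) T c hck hsym a q
        · simp only [Function.update_of_ne hpp]
          refine (hi1 p (Finset.mem_of_mem_insert_of_ne hp hpp)).trans ?_
          gcongr
      · convert hT2 using 4 with v
        rw [← Finset.add_sum_erase _ _ (Finset.mem_univ p0)]
        congr 1
        · simp only [mixW, Finset.mem_insert_self, if_true, Function.update_self]
          congr 1
          funext a q
          exact decQ_eq A p0 (dec i) T c hck hsym a q
        · refine Finset.sum_congr rfl fun p hp => ?_
          have hpne : p ≠ p0 := Finset.ne_of_mem_erase hp
          simp [mixW, hpne]

lemma card_edgesIn {n : ℕ} (S : Finset (Fin n)) : (edgesIn S).card = S.card.choose 2 := by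
  classical
  rw [← Finset.card_powersetCard]
  refine Finset.card_bij (fun e _ => {e.val.1, e.val.2}) ?_ ?_ ?_
  · intro e he
    simp only [edgesIn, Finset.mem_filter, Finset.mem_univ, true_and] at he
    rw [Finset.mem_powersetCard]
    refine ⟨?_, Finset.card_pair (ne_of_lt e.2)⟩
    intro x hx
    simp only [Finset.mem_insert, Finset.mem_singleton] at hx
    rcases hx with rfl | rfl
    · exact he.1
    · exact he.2
  · rintro ⟨⟨a, b⟩, hab⟩ _ ⟨⟨a', b'⟩, hab'⟩ _ h
    simp only at h hab hab'
    have h1 : a ∈ ({a', b'} : Finset (Fin n)) := by rw [← h]; simp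
    have h2 : b ∈ ({a', b'} : Finset (Fin n)) := by rw [← h]; simp
    simp only [Finset.mem_insert, Finset.mem_singleton] at h1 h2
    apply Subtype.ext
    apply Prod.ext <;> simp only [Fin.ext_iff] at * <;> omega
  · intro t ht
    rw [Finset.mem_powersetCard] at ht
    obtain ⟨hS, hc⟩ := ht
    obtain ⟨x, y, hxy, rfl⟩ := Finset.card_eq_two.mp hc
    have hx : x ∈ S := hS (by simp)
    have hy : y ∈ S := hS (by simp)
    rcases lt_or_gt_of_ne hxy with hl | hl
    · exact ⟨⟨(x, y), hl⟩, Finset.mem_filter.mpr ⟨Finset.mem_univ _, hx, hy⟩, rfl⟩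
    · exact ⟨⟨(y, x), hl⟩, Finset.mem_filter.mpr ⟨Finset.mem_univ _, hy, hx⟩, Finset.pair_comm _ _⟩

lemma card_EdgeType (n : ℕ) : Fintype.card (EdgeType n) = n.choose 2 := by
  have h := card_edgesIn (Finset.univ : Finset (Fin n))
  simpa [edgesIn] using h

/-- Symmetric extension of an edge function, shifted by one. -/
def extC {n k : ℕ} (c : EdgeType n → Fin k) (x y : Fin n) : ℕ :=
  if h : x < y then (c ⟨(x, y), h⟩ : ℕ) + 1
  else if h : y < x then (c ⟨(y, x), h⟩ : ℕ) + 1 else 0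

lemma extC_symm {n k : ℕ} (c : EdgeType n → Fin k) (x y : Fin n) : extC c x y = extC c y x := by
  unfold extC
  rcases lt_trichotomy x y with h | h | h
  · simp [h, h.not_gt]
  · simp [h]
  · simp [h, h.not_gt]

lemma extC_edge {n k : ℕ} (c : EdgeType n → Fin k) (e : EdgeType n) :
    extC c e.val.1 e.val.2 = (c e : ℕ) + 1 := by
  have := e.2
  unfold extC
  rw [dif_pos this]
  rfl

/-- The discretised family. -/
def BB (n s k R : ℕ) : Finset (EdgeType n → Fin k) :=
  open Classical in Finset.univ.filter (fun c => ∀ S : Finset (Fin n), S.card = s →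
    ∑ e ∈ edgesIn S, ((c e : ℕ) + 1) ≤ R)

lemma isCol_extC {n s k R : ℕ} (c : EdgeType n → Fin k) (hc : c ∈ BB n s k R) :
    IsCol n s k R (extC c) := by
  classical
  refine ⟨?_, extC_symm c, ?_⟩
  · intro x y
    unfold extC
    split_ifs with h1 h2
    · exact (c _).2
    · exact (c _).2
    · exact Nat.zero_le _
  · intro v hv
    simp only [BB, Finset.mem_filter, Finset.mem_univ, true_and] at hc
    have h := hc (Finset.univ.image v) (by rw [Finset.card_image_of_injective _ hv]; simp)
    refine le_trans ?_ h
    have hex : ∀ p : EdgeType s, ∃ e : EdgeType n,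
        (e.val.1 = v p.val.1 ∧ e.val.2 = v p.val.2) ∨ (e.val.1 = v p.val.2 ∧ e.val.2 = v p.val.1) := by
      intro p
      have hne : v p.val.1 ≠ v p.val.2 := fun h => (ne_of_lt p.2) (hv h)
      rcases lt_or_gt_of_ne hne with hl | hl
      · exact ⟨⟨(_, _), hl⟩, Or.inl ⟨rfl, rfl⟩⟩
      · exact ⟨⟨(_, _), hl⟩, Or.inr ⟨rfl, rfl⟩⟩
    choose φ hφ using hex
    have hval : ∀ p, extC c (v p.val.1) (v p.val.2) = (c (φ p) : ℕ) + 1 := by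
      intro p
      rw [← extC_edge c (φ p)]
      rcases hφ p with h | h
      · rw [h.1, h.2]
      · rw [h.1, h.2, extC_symm]
    have hinj : Function.Injective φ := by
      intro p p' hpp
      have h1 := hφ p
      have h2 := hφ p'
      rw [← hpp] at h2
      have l1 := p.2
      have l2 := p'.2
      have key : p.val.1 = p'.val.1 ∧ p.val.2 = p'.val.2 := by
        rcases h1 with ⟨a, b⟩ | ⟨a, b⟩ <;> rcases h2 with ⟨a', b'⟩ | ⟨a', b'⟩
        · exact ⟨hv (a.symm.trans a'), hv (b.symm.trans b')⟩
        · have e1 := hv (a.symm.trans a')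
          have e2 := hv (b.symm.trans b')
          rw [e1, e2] at l1
          exact absurd l1 l2.not_gt
        · have e1 := hv (a.symm.trans a')
          have e2 := hv (b.symm.trans b')
          rw [e1, e2] at l1
          exact absurd l1 l2.not_gt
        · exact ⟨hv (b.symm.trans b'), hv (a.symm.trans a')⟩
      exact Subtype.ext (Prod.ext key.1 key.2)
    simp only [hval]
    rw [← Finset.sum_image (s := Finset.univ) (g := φ) (f := fun e => (c e : ℕ) + 1)
      (fun x _ y _ h => hinj h)]
    refine Finset.sum_le_sum_of_subset ?_
    intro e he
    obtain ⟨p, -, rfl⟩ := Finset.mem_image.mp he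
    simp only [edgesIn, Finset.mem_filter, Finset.mem_univ, true_and, Finset.mem_image]
    rcases hφ p with ⟨a, b⟩ | ⟨a, b⟩
    · exact ⟨⟨_, a.symm⟩, ⟨_, b.symm⟩⟩
    · exact ⟨⟨_, a.symm⟩, ⟨_, b.symm⟩⟩

lemma box_count {E : Type*} [Fintype E] [DecidableEq E] (k : ℕ) (β : E → ℕ) (lam D : ℝ)
    (h0 : 0 < lam) (h1 : lam ≤ 1) (Fm : Finset (E → Fin k))
    (hF : ∀ c ∈ Fm, ∑ e, (if β e < (c e : ℕ) + 1 then (1:ℝ) else 0) ≤ D) :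
    (Fm.card : ℝ) ≤ lam ^ (-D) * ∏ e, ((β e : ℝ) + lam * k) := by
  classical
  set f : E → Fin k → ℝ := fun e x => if β e < (x : ℕ) + 1 then lam else 1 with hf
  have hfpos : ∀ e x, 0 < f e x := fun e x => by simp only [hf]; split_ifs <;> linarith
  have hlow : ∀ c ∈ Fm, (1:ℝ) ≤ lam ^ (-D) * ∏ e, f e (c e) := by
    intro c hc
    have hp : ∏ e, f e (c e) = lam ^ (∑ e, (if β e < (c e : ℕ) + 1 then (1:ℝ) else 0)) := by
      rw [Real.rpow_sum_of_pos h0]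
      refine Finset.prod_congr rfl fun e _ => ?_
      simp only [hf]
      split_ifs <;> simp
    rw [hp, ← Real.rpow_add h0]
    refine Real.one_le_rpow_of_pos_of_le_one_of_nonpos h0 h1 ?_
    have := hF c hc
    linarith
  calc (Fm.card : ℝ) = ∑ c ∈ Fm, (1:ℝ) := by simp
    _ ≤ ∑ c ∈ Fm, lam ^ (-D) * ∏ e, f e (c e) := Finset.sum_le_sum hlow
    _ ≤ ∑ c : E → Fin k, lam ^ (-D) * ∏ e, f e (c e) := by
        refine Finset.sum_le_sum_of_subset_of_nonneg (Finset.subset_univ _) fun c _ _ => ?_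
        exact mul_nonneg (Real.rpow_nonneg h0.le _) (Finset.prod_nonneg fun e _ => (hfpos _ _).le)
    _ = lam ^ (-D) * ∏ e, ∑ x, f e x := by
        rw [← Finset.mul_sum, Finset.prod_univ_sum, Fintype.piFinset_univ]
    _ ≤ _ := by
        refine mul_le_mul_of_nonneg_left ?_ (Real.rpow_nonneg h0.le _)
        refine Finset.prod_le_prod (fun e _ => Finset.sum_nonneg fun x _ => (hfpos _ _).le)
          fun e _ => ?_
        calc ∑ x, f e x ≤ ∑ x : Fin k, ((if (x:ℕ) < β e then (1:ℝ) else 0) + lam) := by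
              refine Finset.sum_le_sum fun x _ => ?_
              simp only [hf]
              split_ifs with g1 g2
              · linarith
              · linarith
              · linarith
              · omega
          _ = ((Finset.univ.filter (fun x : Fin k => (x:ℕ) < β e)).card : ℝ) + lam * k := by
              rw [Finset.sum_add_distrib, Finset.card_filter]
              simp [mul_comm]
          _ ≤ _ := by
              gcongr
              have : (Finset.univ.filter (fun x : Fin k => (x:ℕ) < β e)).card
                  ≤ (Finset.range (β e)).card := by
                refine Finset.card_le_card_of_injOn (fun x => (x:ℕ)) ?_ ?_
                · intro x hx; simpa using hx
                · intro x _ y _ h; exact Fin.ext h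
              simpa using this

lemma amgm {E : Type*} [Fintype E] [Nonempty E] (z : E → ℝ) (hz : ∀ e, 0 ≤ z e) :
    ∏ e, z e ≤ ((∑ e, z e) / Fintype.card E) ^ Fintype.card E := by
  have hc : (0:ℝ) < Fintype.card E := by exact_mod_cast Fintype.card_pos
  have h := Real.geom_mean_le_arith_mean Finset.univ (fun _ : E => (1:ℝ)) z (by simp)
    (by simp [Fintype.card_pos]) (fun e _ => hz e)
  simp only [Real.rpow_one, one_mul, Finset.sum_const, nsmul_eq_mul, mul_one,
    Finset.card_univ] at h
  have hp : 0 ≤ ∏ e, z e := Finset.prod_nonneg fun e _ => hz e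
  calc ∏ e, z e = ((∏ e, z e) ^ ((Fintype.card E : ℝ)⁻¹)) ^ Fintype.card E := by
        rw [Real.rpow_inv_natCast_pow hp Fintype.card_ne_zero]
    _ ≤ _ := pow_le_pow_left₀ (Real.rpow_nonneg hp _) h _

lemma sum_b_le {n s k R : ℕ} (hn : 0 < n) (ε : ℝ) (b : EdgeType s → Fin n → Fin n → ℕ)
    (hb : ∀ p x y, b p x y ≤ k)
    (h : ∑ v : Fin s → Fin n,
      (if R < ∑ p : EdgeType s, b p (v p.val.1) (v p.val.2) then (1:ℝ) else 0) ≤ ε * n ^ s) :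
    ∑ p : EdgeType s, ∑ q : Fin n × Fin n, (b p q.1 q.2 : ℝ)
      ≤ (R + Fintype.card (EdgeType s) * k * ε) * n ^ 2 := by
  have hn' : (0:ℝ) < n := by exact_mod_cast hn
  set C : ℝ := (Fintype.card (EdgeType s) : ℝ) with hC
  have e1 : (n:ℝ)^s * ∑ p : EdgeType s, ∑ q : Fin n × Fin n, (b p q.1 q.2 : ℝ)
      = (n:ℝ)^2 * ∑ v : Fin s → Fin n, ∑ p : EdgeType s, (b p (v p.val.1) (v p.val.2) : ℝ) := by
    rw [Finset.sum_comm (s := (Finset.univ : Finset (Fin s → Fin n))), Finset.mul_sum,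
      Finset.mul_sum]
    refine Finset.sum_congr rfl fun p _ => ?_
    have hne : p.val.1 ≠ p.val.2 := ne_of_lt p.2
    rw [← updT_sum hne (fun v => (b p (v p.val.1) (v p.val.2) : ℝ))]
    simp only [updT_fst hne, updT_snd]
    simp [Finset.mul_sum]
  have e2 : ∑ v : Fin s → Fin n, ∑ p : EdgeType s, (b p (v p.val.1) (v p.val.2) : ℝ)
      ≤ (R + C * k * ε) * n ^ s := by
    calc ∑ v : Fin s → Fin n, ∑ p : EdgeType s, (b p (v p.val.1) (v p.val.2) : ℝ)
        ≤ ∑ v : Fin s → Fin n, ((R:ℝ) + C * k *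
          (if R < ∑ p : EdgeType s, b p (v p.val.1) (v p.val.2) then (1:ℝ) else 0)) := by
          refine Finset.sum_le_sum fun v _ => ?_
          split_ifs with hlt
          · have : ∑ p : EdgeType s, (b p (v p.val.1) (v p.val.2) : ℝ)
                ≤ ∑ p : EdgeType s, (k:ℝ) :=
              Finset.sum_le_sum fun p _ => by exact_mod_cast hb _ _ _
            simp only [Finset.sum_const, nsmul_eq_mul, Finset.card_univ] at this
            have hR : (0:ℝ) ≤ R := Nat.cast_nonneg R
            linarith
          · push Not at hlt
            have : ((∑ p : EdgeType s, b p (v p.val.1) (v p.val.2) : ℕ) : ℝ) ≤ R := by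
              exact_mod_cast hlt
            push_cast at this
            linarith
      _ = R * n ^ s + C * k * ∑ v : Fin s → Fin n,
          (if R < ∑ p : EdgeType s, b p (v p.val.1) (v p.val.2) then (1:ℝ) else 0) := by
          rw [Finset.sum_add_distrib, ← Finset.mul_sum]
          simp [mul_comm]
      _ ≤ R * n ^ s + C * k * (ε * n ^ s) := by gcongr
      _ = _ := by ring
  have hNpos : (0:ℝ) < (n:ℝ)^s := by positivity
  refine le_of_mul_le_mul_left ?_ hNpos
  rw [e1]
  calc (n:ℝ)^2 * _ ≤ (n:ℝ)^2 * ((R + C * k * ε) * n ^ s) := by gcongr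
    _ = _ := by ring

lemma edge_sum_le {n : ℕ} (g : Fin n → Fin n → ℝ) (hg : ∀ x y, 0 ≤ g x y) :
    ∑ e : EdgeType n, (g e.val.1 e.val.2 + g e.val.2 e.val.1) ≤ ∑ q : Fin n × Fin n, g q.1 q.2 := by
  classical
  have h1 : ∑ e : EdgeType n, g e.val.1 e.val.2
      = ∑ q : Fin n × Fin n, if q.1 < q.2 then g q.1 q.2 else 0 := by
    rw [← Finset.sum_filter]
    exact (Finset.sum_subtype _ (by simp) (fun q : Fin n × Fin n => g q.1 q.2)).symm
  have h2 : ∑ e : EdgeType n, g e.val.2 e.val.1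
      = ∑ q : Fin n × Fin n, if q.2 < q.1 then g q.1 q.2 else 0 := by
    rw [← Equiv.sum_comp (Equiv.prodComm (Fin n) (Fin n))
      (fun q : Fin n × Fin n => if q.2 < q.1 then g q.1 q.2 else 0)]
    change _ = ∑ q : Fin n × Fin n, if q.1 < q.2 then g q.2 q.1 else 0
    rw [← Finset.sum_filter]
    exact (Finset.sum_subtype _ (by simp) (fun q : Fin n × Fin n => g q.2 q.1)).symm
  rw [Finset.sum_add_distrib, h1, h2, ← Finset.sum_add_distrib]
  refine Finset.sum_le_sum fun q _ => ?_
  have := hg q.1 q.2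
  split_ifs with a b b
  · exact absurd a b.not_gt
  · linarith
  · linarith
  · linarith

lemma BB_bound (s k R : ℕ) (hs : 2 ≤ s) (ε lam : ℝ) (hε : 0 < ε) (h0 : 0 < lam) (h1 : lam ≤ 1) :
    ∃ K n0 : ℕ, ∀ n, n0 ≤ n →
      ((BB n s k R).card : ℝ) ≤ (K:ℝ) ^ n * (lam ^ (-(ε * n^2)) *
        (((R / (s.choose 2 : ℝ) + k * ε) * n^2 / 2) / (n.choose 2 : ℝ) + lam * k) ^ (n.choose 2)) := by
  classical
  obtain ⟨K, n0, hK⟩ := container s k R Finset.univ ε hε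
  refine ⟨K, n0 + 2, fun n hn => ?_⟩
  obtain ⟨I, hI, dec, hcard, hdk, hdec⟩ := hK n (by omega)
  have hn' : (0:ℝ) < n := by exact_mod_cast (by omega : 0 < n)
  set M : ℝ := lam ^ (-(ε * n^2)) *
        (((R / (s.choose 2 : ℝ) + k * ε) * n^2 / 2) / (n.choose 2 : ℝ) + lam * k) ^ (n.choose 2)
    with hM
  have hM0 : 0 ≤ M := by
    refine mul_nonneg (Real.rpow_nonneg h0.le _) (pow_nonneg ?_ _)
    positivity
  set Fi : I → Finset (EdgeType n → Fin k) := fun i =>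
    Finset.univ.filter (fun c => GoodC R Finset.univ ε (dec i) (extC c)) with hFi
  have hsub : BB n s k R ⊆ Finset.univ.biUnion Fi := by
    intro c hc
    obtain ⟨i, hi⟩ := hdec _ (isCol_extC c hc)
    simp only [Finset.mem_biUnion, Finset.mem_univ, true_and]
    exact ⟨i, by simp [hFi, hi]⟩
  have hFM : ∀ i, ((Fi i).card : ℝ) ≤ M := by
    intro i
    rcases (Fi i).eq_empty_or_nonempty with hemp | ⟨c0, hc0⟩
    · rw [hemp]; simpa using hM0
    · simp only [hFi, Finset.mem_filter, Finset.mem_univ, true_and] at hc0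
      have h2 := hc0.2
      simp only [mixW, Finset.mem_univ, if_true] at h2
      have h3 := sum_b_le (by omega) ε (dec i) (hdk i) h2
      have hCpos : 0 < s.choose 2 := Nat.choose_pos hs
      have hCpos' : (0:ℝ) < s.choose 2 := by exact_mod_cast hCpos
      have hne : Nonempty (EdgeType s) := by
        rw [← Fintype.card_pos_iff, card_EdgeType]; exact hCpos
      obtain ⟨p, -, hp⟩ : ∃ p ∈ (Finset.univ : Finset (EdgeType s)),
          ∑ q : Fin n × Fin n, (dec i p q.1 q.2 : ℝ) ≤ (R / (s.choose 2 : ℝ) + k * ε) * n^2 := by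
        refine Finset.exists_le_of_sum_le Finset.univ_nonempty (h3.trans (le_of_eq ?_))
        rw [Finset.sum_const, nsmul_eq_mul, Finset.card_univ, card_EdgeType]
        field_simp
      set β : EdgeType n → ℕ := fun e =>
        min (dec i p e.val.1 e.val.2) (dec i p e.val.2 e.val.1) with hβ
      have hβsum : ∑ e, (β e : ℝ) ≤ (R / (s.choose 2 : ℝ) + k * ε) * n^2 / 2 := by
        have g1 := edge_sum_le (fun x y => (dec i p x y : ℝ)) (fun _ _ => Nat.cast_nonneg _)
        have g2 : ∑ e, 2 * (β e : ℝ) ≤ ∑ e : EdgeType n,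
            ((dec i p e.val.1 e.val.2 : ℝ) + dec i p e.val.2 e.val.1) := by
          refine Finset.sum_le_sum fun e _ => ?_
          have : 2 * β e ≤ dec i p e.val.1 e.val.2 + dec i p e.val.2 e.val.1 := by
            simp only [hβ]; omega
          exact_mod_cast this
        rw [← Finset.mul_sum] at g2
        linarith
      have hF : ∀ c ∈ Fi i, ∑ e, (if β e < (c e : ℕ) + 1 then (1:ℝ) else 0) ≤ ε * n^2 := by
        intro c hc
        simp only [hFi, Finset.mem_filter, Finset.mem_univ, true_and] at hc
        refine le_trans ?_ (hc.1 p (Finset.mem_univ p))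
        refine le_trans ?_ (edge_sum_le
          (fun x y => if dec i p x y < extC c x y then (1:ℝ) else 0)
          (fun _ _ => by split_ifs <;> norm_num))
        refine Finset.sum_le_sum fun e _ => ?_
        rw [extC_symm c e.val.2 e.val.1, extC_edge]
        simp only [hβ]
        split_ifs with a b c' <;> first | omega | norm_num
      have h4 := box_count k β lam (ε * n^2) h0 h1 (Fi i) hF
      refine h4.trans ?_
      rw [hM]
      refine mul_le_mul_of_nonneg_left ?_ (Real.rpow_nonneg h0.le _)
      have hNpos : 0 < n.choose 2 := Nat.choose_pos (by omega)
      have hneE : Nonempty (EdgeType n) := by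
        rw [← Fintype.card_pos_iff, card_EdgeType]; exact hNpos
      have hNpos' : (0:ℝ) < n.choose 2 := by exact_mod_cast hNpos
      refine (amgm _ (fun e => by positivity)).trans ?_
      rw [card_EdgeType]
      refine pow_le_pow_left₀ (by positivity) ?_ _
      rw [Finset.sum_add_distrib, Finset.sum_const, nsmul_eq_mul, Finset.card_univ,
        card_EdgeType, add_div, mul_div_cancel_left₀ _ hNpos'.ne']
      gcongr
  calc ((BB n s k R).card : ℝ) ≤ ((Finset.univ.biUnion Fi).card : ℝ) := by
        exact_mod_cast Finset.card_le_card hsub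
    _ ≤ ((∑ i, (Fi i).card : ℕ) : ℝ) := by exact_mod_cast Finset.card_biUnion_le
    _ = ∑ i, ((Fi i).card : ℝ) := by push_cast; rfl
    _ ≤ ∑ i : I, M := Finset.sum_le_sum fun i _ => hFM i
    _ = (Fintype.card I : ℝ) * M := by simp
    _ ≤ (K:ℝ)^n * M := by
        refine mul_le_mul_of_nonneg_right ?_ hM0
        exact_mod_cast hcard

lemma vol_le (n s k : ℕ) (hk : 0 < k) (r : ℝ) :
    volume (weightedProp n s r) ≤ ENNReal.ofReal
      (((BB n s k (⌊(k:ℝ) * r⌋₊ + s.choose 2)).card : ℝ) * ((k:ℝ)⁻¹) ^ (n.choose 2)) := by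
  classical
  have hk' : (0:ℝ) < k := by exact_mod_cast hk
  set box : (EdgeType n → Fin k) → Set (EdgeType n → ℝ) := fun c =>
    Set.pi Set.univ (fun e => Set.Icc (((c e : ℕ):ℝ) / k) ((((c e : ℕ):ℝ) + 1) / k)) with hbox
  have hsub : weightedProp n s r ⊆ ⋃ c ∈ BB n s k (⌊(k:ℝ) * r⌋₊ + s.choose 2), box c := by
    rintro w ⟨hw, hS⟩
    set c : EdgeType n → Fin k := fun e => ⟨min (k-1) ⌊(k:ℝ) * w e⌋₊, by omega⟩ with hc
    have hce : ∀ e, (((c e : ℕ)):ℝ) ≤ k * w e := by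
      intro e
      have h1 : ((⌊(k:ℝ) * w e⌋₊ : ℕ) : ℝ) ≤ k * w e :=
        Nat.floor_le (mul_nonneg hk'.le (hw e).1)
      refine le_trans ?_ h1
      exact_mod_cast min_le_right _ _
    have hce2 : ∀ e, k * w e ≤ ((c e : ℕ):ℝ) + 1 := by
      intro e
      simp only [hc]
      rcases min_choice (k-1) ⌊(k:ℝ) * w e⌋₊ with h | h
      · rw [h]
        have : (((k - 1 : ℕ) : ℝ)) + 1 = k := by
          exact_mod_cast (by omega : k - 1 + 1 = k)
        rw [this]
        have := (hw e).2
        nlinarith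
      · rw [h]
        exact (Nat.lt_floor_add_one _).le
    simp only [Set.mem_iUnion]
    refine ⟨c, ?_, ?_⟩
    · simp only [BB, Finset.mem_filter, Finset.mem_univ, true_and]
      intro S hSc
      rw [Finset.sum_add_distrib, Finset.sum_const, card_edgesIn, hSc]
      simp only [smul_eq_mul, mul_one]
      gcongr
      apply Nat.le_floor
      push_cast
      calc ∑ e ∈ edgesIn S, ((c e : ℕ):ℝ) ≤ ∑ e ∈ edgesIn S, k * w e :=
            Finset.sum_le_sum fun e _ => hce e
        _ = k * ∑ e ∈ edgesIn S, w e := by rw [Finset.mul_sum]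
        _ ≤ k * r := by gcongr; exact hS S hSc
    · simp only [hbox, Set.mem_pi, Set.mem_univ, true_imp_iff, Set.mem_Icc]
      intro e
      constructor
      · rw [div_le_iff₀ hk']; linarith [hce e]
      · rw [le_div_iff₀ hk']; linarith [hce2 e]
  have hvol : ∀ c, volume (box c) = ENNReal.ofReal (((k:ℝ)⁻¹) ^ (n.choose 2)) := by
    intro c
    simp only [hbox]
    rw [volume_pi_pi]
    have : ∀ e : EdgeType n, volume (Set.Icc (((c e : ℕ):ℝ) / k) ((((c e : ℕ):ℝ) + 1) / k))
        = ENNReal.ofReal ((k:ℝ)⁻¹) := by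
      intro e
      rw [Real.volume_Icc]
      congr 1
      field_simp
      ring
    simp only [this]
    rw [Finset.prod_const, Finset.card_univ, card_EdgeType, ENNReal.ofReal_pow (by positivity)]
  calc volume (weightedProp n s r) ≤ _ := measure_mono hsub
    _ ≤ ∑ c ∈ BB n s k (⌊(k:ℝ) * r⌋₊ + s.choose 2), volume (box c) := measure_biUnion_finset_le _ _
    _ = _ := by
      simp only [hvol]
      rw [Finset.sum_const, nsmul_eq_mul, ENNReal.ofReal_mul (by positivity), ENNReal.ofReal_natCast]

lemma vol_ge (n s : ℕ) (hs : 2 ≤ s) (r : ℝ) (hr : r ∈ Set.Ioc (0:ℝ) (s.choose 2 : ℝ)) :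
    ENNReal.ofReal ((r / (s.choose 2 : ℝ)) ^ (n.choose 2)) ≤ volume (weightedProp n s r) := by
  have hC : (0:ℝ) < s.choose 2 := by exact_mod_cast Nat.choose_pos hs
  have hρ : 0 < r / (s.choose 2 : ℝ) := div_pos hr.1 hC
  have hρ1 : r / (s.choose 2 : ℝ) ≤ 1 := by rw [div_le_one hC]; exact hr.2
  have hsub : Set.pi Set.univ (fun _ : EdgeType n => Set.Icc (0:ℝ) (r / (s.choose 2 : ℝ)))
      ⊆ weightedProp n s r := by
    intro w hw
    simp only [Set.mem_pi, Set.mem_univ, true_imp_iff, Set.mem_Icc] at hw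
    refine ⟨fun e => ⟨(hw e).1, (hw e).2.trans hρ1⟩, fun S hS => ?_⟩
    calc ∑ e ∈ edgesIn S, w e ≤ ∑ e ∈ edgesIn S, r / (s.choose 2 : ℝ) :=
          Finset.sum_le_sum fun e _ => (hw e).2
      _ = r := by
          rw [Finset.sum_const, card_edgesIn, hS, nsmul_eq_mul]
          field_simp
  refine le_trans (le_of_eq ?_) (measure_mono hsub)
  rw [volume_pi_pi]
  simp only [Real.volume_Icc, sub_zero]
  rw [Finset.prod_const, Finset.card_univ, card_EdgeType, ENNReal.ofReal_pow hρ.le]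

lemma tendsto_aux1 : Tendsto (fun n : ℕ => (n:ℝ) * ((n.choose 2 : ℝ))⁻¹) atTop (nhds 0) := by
  have h : Tendsto (fun n : ℕ => (2:ℝ) / ((n:ℝ) + (-1))) atTop (nhds 0) :=
    tendsto_const_nhds.div_atTop
      (tendsto_atTop_add_const_right _ _ tendsto_natCast_atTop_atTop)
  refine h.congr' ?_
  filter_upwards [eventually_ge_atTop 2] with n hn
  have h2 : (2:ℝ) ≤ n := by exact_mod_cast hn
  have a : (n:ℝ) ≠ 0 := by linarith
  have b : (n:ℝ) - 1 ≠ 0 := by linarith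
  have b' : (n:ℝ) + (-1) ≠ 0 := by linarith
  rw [Nat.cast_choose_two]
  field_simp
  ring

lemma tendsto_aux2 : Tendsto (fun n : ℕ => (n:ℝ)^2 * ((n.choose 2 : ℝ))⁻¹) atTop (nhds 2) := by
  have h : Tendsto (fun n : ℕ => (2:ℝ) + (n:ℝ) * ((n.choose 2 : ℝ))⁻¹) atTop (nhds (2 + 0)) :=
    tendsto_const_nhds.add tendsto_aux1
  rw [add_zero] at h
  refine h.congr' ?_
  filter_upwards [eventually_ge_atTop 2] with n hn
  have h2 : (2:ℝ) ≤ n := by exact_mod_cast hn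
  have a : (n:ℝ) ≠ 0 := by linarith
  have b : (n:ℝ) - 1 ≠ 0 := by linarith
  rw [Nat.cast_choose_two]
  field_simp
  ring

lemma upper_bound (s : ℕ) (hs : 2 ≤ s) (r : ℝ) (hr : 0 < r) (u : ℝ)
    (hu : r / (s.choose 2 : ℝ) < u) :
    ∀ᶠ n : ℕ in atTop,
      ((volume (weightedProp n s r)).toReal) ^ ((n.choose 2 : ℝ)⁻¹) < u := by
  have hC : (0:ℝ) < s.choose 2 := by exact_mod_cast Nat.choose_pos hs
  set ρ : ℝ := r / (s.choose 2 : ℝ) with hρ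
  have hρ0 : 0 < ρ := div_pos hr hC
  set d : ℝ := min ((u - ρ) / 4) 1 with hd
  have hd0 : 0 < d := lt_min (by linarith) one_pos
  have hd1 : d ≤ 1 := min_le_right _ _
  have hd2 : d ≤ (u - ρ) / 4 := min_le_left _ _
  obtain ⟨k, hk⟩ := exists_nat_gt (1 / d)
  have hk' : (0:ℝ) < k := lt_trans (by positivity) hk
  have hk0 : 0 < k := by exact_mod_cast hk'
  have hkd : 1 / (k:ℝ) ≤ d := by
    rw [div_lt_iff₀ hd0] at hk
    rw [div_le_iff₀ hk']
    linarith
  -- choose `ε`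
  obtain ⟨ε, hε0, hε⟩ : ∃ ε : ℝ, 0 < ε ∧ d ^ (-(ε * 2)) * (ρ + 1 / k + ε + d) < u := by
    have hcont : Tendsto (fun ε : ℝ => d ^ (-(ε * 2)) * (ρ + 1 / k + ε + d)) (nhds 0)
        (nhds (d ^ (-((0:ℝ) * 2)) * (ρ + 1 / k + 0 + d))) := by
      have : Continuous (fun ε : ℝ => d ^ (-(ε * 2)) * (ρ + 1 / k + ε + d)) := by
        refine Continuous.mul ?_ (by fun_prop)
        exact Continuous.rpow continuous_const (by fun_prop) (fun _ => Or.inl hd0.ne')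
      exact this.tendsto 0
    have hlt : d ^ (-((0:ℝ) * 2)) * (ρ + 1 / k + 0 + d) < u := by
      simp only [zero_mul, neg_zero, Real.rpow_zero, one_mul, add_zero]
      linarith
    have hev := hcont.eventually (gt_mem_nhds hlt)
    have hev2 : ∀ᶠ ε in nhdsWithin (0:ℝ) (Set.Ioi 0),
      d ^ (-(ε * 2)) * (ρ + 1 / k + ε + d) < u := hev.filter_mono nhdsWithin_le_nhds
    obtain ⟨ε, h1, h2⟩ := (hev2.and self_mem_nhdsWithin).exists
    exact ⟨ε, h2, h1⟩
  set R : ℕ := ⌊(k:ℝ) * r⌋₊ + s.choose 2 with hR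
  have hRle : (R:ℝ) / (s.choose 2 : ℝ) / k ≤ ρ + 1 / k := by
    have h1 : (R:ℝ) ≤ k * r + s.choose 2 := by
      rw [hR]; push_cast
      have := Nat.floor_le (mul_nonneg hk'.le hr.le)
      linarith
    rw [div_div, div_le_iff₀ (by positivity)]
    refine h1.trans (le_of_eq ?_)
    rw [hρ]
    field_simp
  obtain ⟨K, n0, hK⟩ := BB_bound s k R hs ε d hε0 hd0 hd1
  set F : ℕ → ℝ := fun n => ((K:ℝ)+1) ^ ((n:ℝ) * ((n.choose 2 : ℝ))⁻¹) *
    (d ^ (-(ε * ((n:ℝ)^2 * ((n.choose 2 : ℝ))⁻¹))) *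
      (((R:ℝ) / (s.choose 2 : ℝ) / k + ε) * ((n:ℝ)^2 * ((n.choose 2 : ℝ))⁻¹) / 2 + d)) with hF
  have hFlim : Tendsto F atTop (nhds (((K:ℝ)+1) ^ (0:ℝ) * (d ^ (-(ε * 2)) *
      (((R:ℝ) / (s.choose 2 : ℝ) / k + ε) * 2 / 2 + d)))) := by
    refine Tendsto.mul ?_ (Tendsto.mul ?_ ?_)
    · exact Tendsto.rpow tendsto_const_nhds tendsto_aux1 (Or.inl (by positivity))
    · exact Tendsto.rpow tendsto_const_nhds ((tendsto_aux2.const_mul ε).neg) (Or.inl hd0.ne')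
    · exact ((tendsto_aux2.const_mul _).div_const 2).add_const d
  have hlim : ((K:ℝ)+1) ^ (0:ℝ) * (d ^ (-(ε * 2)) *
      (((R:ℝ) / (s.choose 2 : ℝ) / k + ε) * 2 / 2 + d)) < u := by
    rw [Real.rpow_zero, one_mul]
    refine lt_of_le_of_lt ?_ hε
    refine mul_le_mul_of_nonneg_left ?_ (Real.rpow_nonneg hd0.le _)
    linarith
  filter_upwards [hFlim.eventually (gt_mem_nhds hlim), eventually_ge_atTop n0,
    eventually_ge_atTop 2] with n hn1 hn2 hn3
  refine lt_of_le_of_lt ?_ hn1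
  have hN0 : n.choose 2 ≠ 0 := (Nat.choose_pos hn3).ne'
  have hN : (0:ℝ) < n.choose 2 := by exact_mod_cast Nat.choose_pos hn3
  have hBB := hK n hn2
  set Y : ℝ := ((R / (s.choose 2 : ℝ) + k * ε) * n^2 / 2) / (n.choose 2 : ℝ) + d * k with hY
  have hY0 : 0 ≤ Y := by positivity
  have hv1 : (volume (weightedProp n s r)).toReal
      ≤ ((K:ℝ)+1)^n * (d ^ (-(ε * n^2)) * (Y / k) ^ (n.choose 2)) := by
    have h1 := ENNReal.toReal_mono ENNReal.ofReal_ne_top (vol_le n s k hk0 r)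
    rw [ENNReal.toReal_ofReal (by positivity)] at h1
    refine h1.trans ?_
    have hKK : (K:ℝ)^n ≤ ((K:ℝ)+1)^n := by gcongr; linarith
    calc ((BB n s k R).card : ℝ) * ((k:ℝ)⁻¹) ^ (n.choose 2)
        ≤ ((K:ℝ) ^ n * (d ^ (-(ε * n^2)) * Y ^ (n.choose 2))) * ((k:ℝ)⁻¹) ^ (n.choose 2) := by
          gcongr
      _ ≤ (((K:ℝ)+1) ^ n * (d ^ (-(ε * n^2)) * Y ^ (n.choose 2))) * ((k:ℝ)⁻¹) ^ (n.choose 2) := by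
          have := Real.rpow_nonneg hd0.le (-(ε * n^2))
          gcongr
      _ = _ := by rw [div_eq_mul_inv, mul_pow]; ring
  have hdn : 0 ≤ d ^ (-(ε * (n:ℝ)^2)) := Real.rpow_nonneg hd0.le _
  calc ((volume (weightedProp n s r)).toReal) ^ ((n.choose 2 : ℝ)⁻¹)
      ≤ (((K:ℝ)+1)^n * (d ^ (-(ε * n^2)) * (Y / k) ^ (n.choose 2))) ^ ((n.choose 2 : ℝ)⁻¹) :=
        Real.rpow_le_rpow ENNReal.toReal_nonneg hv1 (by positivity)
    _ = F n := by
        rw [Real.mul_rpow (by positivity) (by positivity), Real.mul_rpow hdn (by positivity),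
          Real.pow_rpow_inv_natCast (by positivity) hN0, ← Real.rpow_natCast ((K:ℝ)+1) n,
          ← Real.rpow_mul (by positivity), ← Real.rpow_mul hd0.le]
        simp only [hF]
        congr 2
        · congr 1; ring
        · rw [hY]; field_simp

/-- **Corollary (volume of the weighted-graph property).**
For fixed `s ≥ 2` and `r ∈ (0, C(s,2)]`,
`vol(P_n(s,r)) = (r/C(s,2) + o(1))^{C(n,2)}`, i.e.
`vol(P_n(s,r))^{1/C(n,2)} → r/C(s,2)` as `n → ∞`. -/
theorem counting_weighted_graphs
    (s : ℕ) (hs : 2 ≤ s) (r : ℝ) (hr : r ∈ Set.Ioc (0:ℝ) (s.choose 2 : ℝ)) :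
    Tendsto (fun n : ℕ =>
      ((volume (weightedProp n s r)).toReal) ^ ((n.choose 2 : ℝ)⁻¹))
      atTop (nhds (r / (s.choose 2 : ℝ))) := by
  have hC : (0:ℝ) < s.choose 2 := by exact_mod_cast Nat.choose_pos hs
  have hρ0 : 0 < r / (s.choose 2 : ℝ) := div_pos hr.1 hC
  rw [tendsto_order]
  refine ⟨fun l hl => ?_, fun u hu => upper_bound s hs r hr.1 u hu⟩
  filter_upwards [eventually_ge_atTop 2] with n hn
  refine lt_of_lt_of_le hl ?_
  have hfin : volume (weightedProp n s r) ≠ ⊤ :=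
    ne_top_of_le_ne_top ENNReal.ofReal_ne_top (vol_le n s 1 one_pos r)
  have h1 := ENNReal.toReal_mono hfin (vol_ge n s hs r hr)
  rw [ENNReal.toReal_ofReal (by positivity)] at h1
  have h2 := Real.rpow_le_rpow (by positivity) h1 (by positivity : 0 ≤ ((n.choose 2 : ℝ)⁻¹))
  rwa [Real.pow_rpow_inv_natCast hρ0.le (Nat.choose_pos hn).ne'] at h2

end
end

section
/- For every k ≥ 2, the space of [k]-graphons modulo cut distance is compact: every sequence (W_n)_{n∈ℕ} of [k]-graphons has a subsequence (W_{n_j}) and a [k]-graphon W such that δ_{□,k}(W_{n_j}, W) → 0 as j → ∞. -/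
open MeasureTheory Filter Set

noncomputable section

/-- A `[k]`-graphon: a symmetric measurable function `W : [0,1]² → Δ([k])`, recorded
via its components `W x y i = W(x,y)(i)`. -/
structure KGraphon (k : ℕ) where
  W : unitInterval → unitInterval → Fin k → ℝ
  symm : ∀ x y, W x y = W y x
  meas : ∀ i : Fin k, Measurable fun p : unitInterval × unitInterval => W p.1 p.2 i
  nonneg : ∀ x y i, 0 ≤ W x y i
  sum_one : ∀ x y, ∑ i, W x y i = 1

/-- The cut distance `δ_{□,k}` between two `[k]`-graphons: the infimum over measure
preserving bijections `φ` of the supremum over measurable `S, T ⊆ [0,1]` of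
`Σ_i |∫_{S×T} (U_i(x,y) − W_i(φ x, φ y))|`. -/
def cutDistK {k : ℕ} (U V : KGraphon k) : ℝ :=
  ⨅ φ : {φ : unitInterval → unitInterval //
      MeasurePreserving φ volume volume ∧ Function.Bijective φ},
    ⨆ S : {S : Set unitInterval // MeasurableSet S},
      ⨆ T : {T : Set unitInterval // MeasurableSet T},
        ∑ i : Fin k,
          |∫ p in S.1 ×ˢ T.1, (U.W p.1 p.2 i - V.W (φ.1 p.1) (φ.1 p.2) i)|




/-- There is an uncountable Borel null set in the unit interval. -/
lemma exists_null_uncountable :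
    ∃ C : Set unitInterval, MeasurableSet C ∧ volume C = 0 ∧ ¬ C.Countable := by
  have hI : ¬ Countable unitInterval := by
    intro h
    have h1 : (Icc (0 : ℝ) 1).Countable := Set.countable_coe_iff.1 h
    have h2 := Cardinal.mk_Icc_real (zero_lt_one (α := ℝ))
    have h3 := Cardinal.le_aleph0_iff_set_countable.2 h1
    rw [h2] at h3
    exact absurd h3 (not_le.2 Cardinal.aleph0_lt_continuum)
  have hII : ¬ Countable (unitInterval × unitInterval) := by
    intro h
    exact hI (Function.Injective.countable (f := fun x : unitInterval => (x, x))
      (fun a b h => (Prod.mk.inj h).1))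
  let ψ : unitInterval ≃ᵐ unitInterval × unitInterval :=
    PolishSpace.measurableEquivOfNotCountable hI hII
  let A : unitInterval → Set unitInterval := fun x => ψ ⁻¹' ({x} ×ˢ univ)
  have hA : ∀ x, MeasurableSet (A x) := fun x =>
    ψ.measurable ((measurableSet_singleton x).prod MeasurableSet.univ)
  have hd : Pairwise (Function.onFun Disjoint A) := by
    intro x y hxy
    rw [Function.onFun, Set.disjoint_left]
    intro z hz hz'
    simp only [A, mem_preimage, mem_prod, mem_singleton_iff, mem_univ, and_true] at hz hz'
    exact hxy (hz.symm.trans hz')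
  have hc := Measure.countable_meas_pos_of_disjoint_iUnion (μ := (volume : Measure unitInterval)) hA hd
  obtain ⟨x, hx⟩ : ∃ x, x ∉ {i | 0 < volume (A i)} := by
    by_contra! h
    exact hI (countable_univ_iff.1 (hc.mono fun x _ => h x))
  refine ⟨A x, hA x, by simpa using hx, fun hcount => hI ?_⟩
  have := (hcount.image (fun z => (ψ z).2))
  refine countable_univ_iff.1 (this.mono ?_)
  intro y _
  exact ⟨ψ.symm (x, y), by simp [A], by simp⟩

/-- A measure preserving map of the unit interval which is injective off a null set agrees a.e.
with a measure preserving bijection. -/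
lemma exists_equiv_of_injOn (e : unitInterval → unitInterval)
    (he : MeasurePreserving e volume volume) (N : Set unitInterval) (hN : MeasurableSet N)
    (hN0 : volume N = 0) (hinj : InjOn e Nᶜ) :
    ∃ φ : unitInterval ≃ᵐ unitInterval, MeasurePreserving φ volume volume ∧
      ∀ᵐ x, φ x = e x := by
  classical
  obtain ⟨C, hC, hC0, hCu⟩ := exists_null_uncountable
  let M : Set unitInterval := N ∪ e ⁻¹' C ∪ C
  have hM : MeasurableSet M := (hN.union (he.measurable hC)).union hC
  have hM0 : volume M = 0 := by
    simp only [M, measure_union_null_iff]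
    exact ⟨⟨hN0, by rw [he.measure_preimage hC.nullMeasurableSet, hC0]⟩, hC0⟩
  have hMinj : InjOn e Mᶜ := hinj.mono (compl_subset_compl.2
    (subset_union_left.trans subset_union_left))
  let P : Set unitInterval := (e '' Mᶜ)ᶜ
  have hP : MeasurableSet P :=
    (hM.compl.image_of_measurable_injOn he.measurable hMinj).compl
  have hCP : C ⊆ P := by
    rintro x hx ⟨y, hy, rfl⟩
    exact hy (Or.inl (Or.inr hx))
  have hMu : ¬ Countable M := fun h => hCu ((Set.countable_coe_iff.1 h).mono subset_union_right)
  have hPu : ¬ Countable P := fun h => hCu ((Set.countable_coe_iff.1 h).mono hCP)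
  have := hM.standardBorel
  have := hP.standardBorel
  let ψ : M ≃ᵐ P := PolishSpace.measurableEquivOfNotCountable hMu hPu
  let f : unitInterval → unitInterval := fun x => if h : x ∈ M then (ψ ⟨x, h⟩ : unitInterval) else e x
  have hf : Measurable f := by
    refine Measurable.dite (s := M) (f := fun x => (ψ x : unitInterval)) (g := fun x => e x) ?_ ?_ hM
    · exact measurable_subtype_coe.comp ψ.measurable
    · exact he.measurable.comp measurable_subtype_coe
  have hfM : ∀ x (h : x ∈ M), f x = ψ ⟨x, h⟩ := fun x h => by simp [f, h]
  have hfM' : ∀ x (h : x ∉ M), f x = e x := fun x h => by simp [f, h]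
  have hfi : Function.Injective f := by
    intro x y hxy
    by_cases hx : x ∈ M <;> by_cases hy : y ∈ M
    · rw [hfM x hx, hfM y hy] at hxy
      have := ψ.injective (Subtype.ext hxy)
      simpa using this
    · rw [hfM x hx, hfM' y hy] at hxy
      exact absurd ⟨y, hy, hxy.symm⟩ (ψ ⟨x, hx⟩).2
    · rw [hfM' x hx, hfM y hy] at hxy
      exact absurd ⟨x, hx, hxy⟩ (ψ ⟨y, hy⟩).2
    · rw [hfM' x hx, hfM' y hy] at hxy
      exact hMinj hx hy hxy
  have hfs : Function.Surjective f := by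
    intro y
    by_cases hy : y ∈ P
    · refine ⟨ψ.symm ⟨y, hy⟩, ?_⟩
      rw [hfM _ (ψ.symm ⟨y, hy⟩).2]; simp
    · obtain ⟨x, hx, rfl⟩ := not_not.1 hy
      exact ⟨x, hfM' x hx⟩
  have hae : ∀ᵐ x, f x = e x := by
    have : ∀ᵐ x : unitInterval, x ∉ M := measure_eq_zero_iff_ae_notMem.1 hM0
    filter_upwards [this] with x hx using hfM' x hx
  have hemb : MeasurableEmbedding f := hf.measurableEmbedding hfi
  let φ : unitInterval ≃ᵐ unitInterval :=
    MeasurableEquiv.ofInvolutive id (fun x => rfl) measurable_id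
  let E : unitInterval ≃ᵐ unitInterval :=
    { toEquiv := Equiv.ofBijective f ⟨hfi, hfs⟩
      measurable_toFun := hf
      measurable_invFun := by
        intro s hs
        have : (Equiv.ofBijective f ⟨hfi, hfs⟩).symm ⁻¹' s = f '' s := by
          rw [← Equiv.image_eq_preimage_symm]; rfl
        rw [this]
        exact hemb.measurableSet_image.2 hs }
  refine ⟨E, ⟨hf, ?_⟩, hae⟩
  have : Measure.map f volume = Measure.map e (volume : Measure unitInterval) :=
    Measure.map_congr hae
  exact this.trans he.map_eq


/-- Greedy weak regularity lemma. -/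
lemma greedy (ε : ℝ) (hε : 0 < ε) (r : ℕ) : ∀ (R : unitInterval × unitInterval → ℝ),
    Measurable R → (∃ C, ∀ p, |R p| ≤ C) → ∫ p, R p ^ 2 ≤ 1 → ∫ p, R p ^ 2 ≤ r * ε ^ 2 →
    ∃ (c : ℕ → ℝ) (S T : ℕ → Set unitInterval), (∀ j, |c j| ≤ 1) ∧ (∀ j, MeasurableSet (S j)) ∧
      (∀ j, MeasurableSet (T j)) ∧ ∀ S' T' : Set unitInterval, MeasurableSet S' → MeasurableSet T' →
      |∫ p in S' ×ˢ T', (R p - ∑ j ∈ Finset.range r, c j * (S j ×ˢ T j).indicator 1 p)| ≤ ε := by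
  -- Cauchy-Schwarz
  have key : ∀ (R : unitInterval × unitInterval → ℝ), Measurable R → (∃ C, ∀ p, |R p| ≤ C) →
      ∀ E : Set (unitInterval × unitInterval), MeasurableSet E →
      ∫ p, (R p - (∫ p in E, R p) * E.indicator 1 p) ^ 2 ≤ (∫ p, R p ^ 2) - (∫ p in E, R p) ^ 2 := by
    intro R hR ⟨C, hC⟩ E hE
    set c := ∫ p in E, R p with hc
    have i1 : Integrable R := Integrable.of_bound hR.aestronglyMeasurable C
      (Eventually.of_forall fun p => by simpa using hC p)
    have i2 : Integrable (fun p => R p ^ 2) := Integrable.of_bound (hR.pow_const 2).aestronglyMeasurable (C ^ 2)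
      (Eventually.of_forall fun p => by
        have := hC p
        rw [Real.norm_eq_abs, abs_pow]
        gcongr)
    have i3 : Integrable (E.indicator R) := i1.indicator hE
    have i4 : Integrable (E.indicator (1 : unitInterval × unitInterval → ℝ)) :=
      (integrable_const (1 : ℝ)).indicator hE
    have e1 : ∀ p, (R p - c * E.indicator 1 p) ^ 2
        = R p ^ 2 - 2 * c * E.indicator R p + c ^ 2 * E.indicator 1 p := by
      intro p
      by_cases hp : p ∈ E <;> simp [hp]
      ring
    simp_rw [e1]
    have i5 : Integrable (fun p => R p ^ 2 - 2 * c * E.indicator R p) := i2.sub (i3.const_mul _)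
    rw [integral_add i5 (i4.const_mul _), integral_sub i2 (i3.const_mul _),
      integral_const_mul, integral_const_mul, integral_indicator hE, integral_indicator_one hE, ← hc]
    have h1 : (volume : Measure (unitInterval × unitInterval)).real E ≤ 1 := measureReal_le_one
    nlinarith [sq_nonneg c]
  have key2 : ∀ (R : unitInterval × unitInterval → ℝ), Measurable R → (∃ C, ∀ p, |R p| ≤ C) →
      ∀ E : Set (unitInterval × unitInterval), MeasurableSet E →
      (∫ p in E, R p) ^ 2 ≤ ∫ p, R p ^ 2 := by
    intro R hR hC E hE
    have h1 := key R hR hC E hE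
    have h2 : 0 ≤ ∫ p, (R p - (∫ p in E, R p) * E.indicator 1 p) ^ 2 :=
      integral_nonneg fun p => sq_nonneg _
    linarith
  induction r with
  | zero =>
    intro R hR hC h1 h2
    refine ⟨fun _ => 0, fun _ => ∅, fun _ => ∅, by simp, by simp, by simp, ?_⟩
    intro S' T' hS' hT'
    have := key2 R hR hC _ (hS'.prod hT')
    simp only [Finset.range_zero, Finset.sum_empty, sub_zero]
    have h3 : (∫ p in S' ×ˢ T', R p) ^ 2 ≤ 0 := this.trans (by simpa using h2)
    rw [pow_eq_zero_iff two_ne_zero |>.1 (le_antisymm h3 (sq_nonneg _))]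
    simpa using hε.le
  | succ r ih =>
    intro R hR hC h1 h2
    by_cases hb : ∀ S' T' : Set unitInterval, MeasurableSet S' → MeasurableSet T' →
        |∫ p in S' ×ˢ T', R p| ≤ ε
    · refine ⟨fun _ => 0, fun _ => ∅, fun _ => ∅, by simp, by simp, by simp, ?_⟩
      intro S' T' hS' hT'
      simpa using hb S' T' hS' hT'
    push Not at hb
    obtain ⟨S₀, T₀, hS₀, hT₀, hlt⟩ := hb
    have hE := hS₀.prod hT₀
    have k1 := key R hR hC _ hE
    have k2 := key2 R hR hC _ hE
    set c := ∫ p in S₀ ×ˢ T₀, R p with hc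
    have hc1 : |c| ≤ 1 := by
      rw [← sq_le_one_iff_abs_le_one]; linarith
    have hcε : ε ^ 2 ≤ c ^ 2 := by
      rw [← sq_abs c]; gcongr
    obtain ⟨c', S', T', h3, h4, h5, h6⟩ := ih (fun p => R p - c * (S₀ ×ˢ T₀).indicator 1 p)
      (hR.sub ((measurable_one.indicator hE).const_mul c))
      (by
        obtain ⟨C, hC⟩ := hC
        refine ⟨C + 1, fun p => ?_⟩
        have a1 : |(S₀ ×ˢ T₀).indicator (1 : unitInterval × unitInterval → ℝ) p| ≤ 1 := by
          by_cases hp : p ∈ S₀ ×ˢ T₀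
          · rw [indicator_of_mem hp]; simp
          · rw [indicator_of_notMem hp]; simp
        calc _ ≤ |R p| + |c * (S₀ ×ˢ T₀).indicator 1 p| := abs_sub _ _
          _ ≤ C + 1 := by
            rw [abs_mul]
            exact add_le_add (hC p) (mul_le_one₀ hc1 (abs_nonneg _) a1))
      (by nlinarith [sq_nonneg c])
      (by push_cast at h2; linarith)
    refine ⟨fun j => Nat.casesOn j c c', fun j => Nat.casesOn j S₀ S', fun j => Nat.casesOn j T₀ T',
      fun j => by cases j <;> simp [hc1, h3], fun j => by cases j <;> simp [hS₀, h4],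
      fun j => by cases j <;> simp [hT₀, h5], ?_⟩
    intro S1 T1 hS1 hT1
    convert h6 S1 T1 hS1 hT1 using 4 with p
    rw [Finset.sum_range_succ']
    rw [← sub_sub, sub_right_comm]
    rfl


/-- Sorting an injective random variable by a measure preserving bijection. -/
lemma exists_sort (Z : unitInterval → ℝ) (hZ : Measurable Z) (hinj : Function.Injective Z)
    (h0 : ∀ x, 0 ≤ Z x) (h1 : ∀ x, Z x ≤ 1) :
    ∃ (φ : unitInterval ≃ᵐ unitInterval) (q : unitInterval → ℝ),
      MeasurePreserving φ volume volume ∧ Monotone q ∧ (∀ x, q x ∈ Icc (0 : ℝ) 1) ∧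
      ∀ᵐ x, q (φ x) = Z x := by
  let μ : Measure ℝ := Measure.map Z volume
  have : IsProbabilityMeasure μ := Measure.isProbabilityMeasure_map hZ.aemeasurable
  have hμ : ∀ t, μ.real (Iic t) = volume.real {y | Z y ≤ t} := by
    intro t
    rw [measureReal_def, Measure.map_apply hZ measurableSet_Iic]; rfl
  have : NullSingletonClass μ := ⟨fun t => by
    rw [Measure.map_apply hZ (measurableSet_singleton t)]
    exact (Set.subsingleton_singleton.preimage hinj).measure_zero _⟩
  let F : ℝ → ℝ := fun t => μ.real (Iic t)
  have hFm : Monotone F := fun s t hst => measureReal_mono (Iic_subset_Iic.2 hst)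
  have hF01 : ∀ t, F t ∈ Icc (0 : ℝ) 1 := fun t => ⟨measureReal_nonneg, measureReal_le_one⟩
  have hFc : Continuous F := by
    have hcdf : F = ProbabilityTheory.cdf μ := by
      ext t; rw [ProbabilityTheory.cdf_eq_real]
    rw [hcdf, continuous_iff_continuousAt]
    intro a
    have ha : (ProbabilityTheory.cdf μ).measure {a} = 0 := by
      rw [ProbabilityTheory.measure_cdf]; exact measure_singleton a
    rw [StieltjesFunction.measure_singleton, ENNReal.ofReal_eq_zero] at ha
    rw [(ProbabilityTheory.cdf μ).mono.continuousAt_iff_leftLim_eq_rightLim,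
      StieltjesFunction.rightLim_eq]
    exact le_antisymm ((ProbabilityTheory.cdf μ).mono.leftLim_le le_rfl) (by linarith)
  have hFneg : F (-1) = 0 := by
    have : {y | Z y ≤ -1} = ∅ := by
      ext y; simp; linarith [h0 y]
    simp [F, hμ, this]
  have hF1 : F 1 = 1 := by
    have : {y | Z y ≤ 1} = univ := by
      ext y; simp [h1 y]
    simp [F, hμ, this]
  let e : unitInterval → unitInterval := fun x => ⟨F (Z x), hF01 _⟩
  have hem : Measurable e := (hFm.measurable.comp hZ).subtype_mk
  have hmp : MeasurePreserving e volume volume := by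
    refine ⟨hem, ?_⟩
    have : IsProbabilityMeasure (Measure.map e volume) :=
      Measure.isProbabilityMeasure_map hem.aemeasurable
    have hiv : ∀ s : unitInterval, ∃ t, F t = s := by
      intro s
      have := intermediate_value_Icc (show (-1 : ℝ) ≤ 1 by norm_num) hFc.continuousOn
      rw [hFneg, hF1] at this
      obtain ⟨t, -, ht⟩ := this s.2
      exact ⟨t, ht⟩
    have hle : ∀ s : unitInterval, (s : ℝ) ≤ volume.real {x | e x ≤ s} := by
      intro s
      obtain ⟨t, ht⟩ := hiv s
      rw [← ht]
      change μ.real (Iic t) ≤ _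
      rw [hμ]
      refine measureReal_mono ?_
      intro y hy
      change F (Z y) ≤ s
      rw [← ht]
      exact hFm hy
    have hge : ∀ s : unitInterval, volume.real {x | e x < s} ≤ s := by
      intro s
      obtain ⟨t, ht⟩ := hiv s
      rw [← ht]
      change _ ≤ μ.real (Iic t)
      rw [hμ]
      refine measureReal_mono ?_
      intro y hy
      change F (Z y) < s at hy
      rw [← ht] at hy
      exact (hFm.reflect_lt hy).le
    have heq : ∀ s : unitInterval, volume.real {x | e x ≤ s} = s := by
      intro s
      refine le_antisymm (le_of_forall_gt_imp_ge_of_dense ?_) (hle s)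
      intro a ha
      rcases le_or_gt 1 a with h | h
      · exact measureReal_le_one.trans h
      · have := hge ⟨a, (s.2.1.trans ha.le), h.le⟩
        refine le_trans (measureReal_mono ?_) this
        intro y hy
        exact lt_of_le_of_lt (show e y ≤ s from hy) (Subtype.mk_lt_mk.2 ha)
    refine Measure.ext_of_Iic _ _ fun s => ?_
    rw [unitInterval.volume_Iic, Measure.map_apply hem measurableSet_Iic, ← heq s,
      ofReal_measureReal]
    rfl
  let N : Set unitInterval := e ⁻¹' (Set.range fun r : ℚ => (⟨F r, hF01 _⟩ : unitInterval))
  have hcount : (Set.range fun r : ℚ => (⟨F r, hF01 _⟩ : unitInterval)).Countable :=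
    countable_range _
  have hN : MeasurableSet N := hem hcount.measurableSet
  have hN0 : volume N = 0 := by
    rw [hmp.measure_preimage hcount.measurableSet.nullMeasurableSet]
    exact hcount.measure_zero _
  have hlt : ∀ x y, e x = e y → Z x < Z y → x ∈ N := by
    intro x y hxy hZxy
    obtain ⟨r, hr1, hr2⟩ := exists_rat_btwn hZxy
    refine ⟨r, Subtype.ext ?_⟩
    have hxy' : F (Z x) = F (Z y) := congrArg (fun z : unitInterval => (z : ℝ)) hxy
    exact le_antisymm ((hFm hr2.le).trans hxy'.ge) (hFm hr1.le)
  have hNinj : InjOn e Nᶜ := by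
    intro x hx y hy hxy
    rcases lt_trichotomy (Z x) (Z y) with h | h | h
    · exact absurd (hlt x y hxy h) hx
    · exact hinj h
    · exact absurd (hlt y x hxy.symm h) hy
  obtain ⟨φ, hφ, hφe⟩ := exists_equiv_of_injOn e hmp N hN hN0 hNinj
  let q : unitInterval → ℝ := fun s => sSup (Z '' {y | e y ≤ s})
  have hbdd : ∀ s, BddAbove (Z '' {y | e y ≤ s}) := fun s =>
    ⟨1, by rintro _ ⟨y, -, rfl⟩; exact h1 y⟩
  have hq0 : ∀ s, 0 ≤ q s := fun s => Real.sSup_nonneg (by rintro _ ⟨y, -, rfl⟩; exact h0 y)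
  refine ⟨φ, q, hφ, ?_, fun s => ⟨hq0 s, Real.sSup_le (by rintro _ ⟨y, -, rfl⟩; exact h1 y)
    zero_le_one⟩, ?_⟩
  · intro s t hst
    refine Real.sSup_le ?_ (hq0 t)
    rintro _ ⟨y, hy, rfl⟩
    exact le_csSup (hbdd t) ⟨y, le_trans (show e y ≤ s from hy) hst, rfl⟩
  · have hNae : ∀ᵐ x : unitInterval, x ∉ N := measure_eq_zero_iff_ae_notMem.1 hN0
    filter_upwards [hφe, hNae] with x hx hxN
    rw [hx]
    refine le_antisymm (Real.sSup_le ?_ (h0 x)) (le_csSup (hbdd _) ⟨x, le_refl (e x), rfl⟩)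
    rintro _ ⟨y, hy, rfl⟩
    by_contra! hlt'
    have : e x = e y := le_antisymm (Subtype.mk_le_mk.2 (hFm hlt'.le)) hy
    exact hxN (hlt x y this hlt')


/-- Helly-type statement for monotone functions on the unit interval. -/
lemma helly (q : ℕ → unitInterval → ℝ) (hm : ∀ n, Monotone (q n))
    (h01 : ∀ n x, q n x ∈ Icc (0 : ℝ) 1) :
    ∃ g : ℕ → ℕ, StrictMono g ∧ ∃ Q : unitInterval → ℝ, Monotone Q ∧
      ∀ᵐ x, Tendsto (fun n => q (g n) x) atTop (nhds (Q x)) := by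
  let D : ℕ → unitInterval := TopologicalSpace.denseSeq unitInterval
  obtain ⟨L, g, hg, hL⟩ := CompactSpace.tendsto_subseq
    (fun n => (fun j => ⟨q n (D j), h01 n (D j)⟩ : ℕ → Icc (0 : ℝ) 1))
  have hL' : ∀ j, Tendsto (fun n => q (g n) (D j)) atTop (nhds (L j)) := by
    intro j
    have h1 := (continuous_apply j).continuousAt.tendsto.comp hL
    exact (continuous_subtype_val.tendsto _).comp h1
  let Q : unitInterval → ℝ := fun x => limsup (fun n => q (g n) x) atTop
  have hb : ∀ x, IsBoundedUnder (· ≤ ·) atTop (fun n => q (g n) x) := fun x =>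
    isBoundedUnder_of ⟨1, fun n => (h01 _ x).2⟩
  have hb' : ∀ x, IsCoboundedUnder (· ≤ ·) atTop (fun n => q (g n) x) := fun x =>
    (isBoundedUnder_of (r := (· ≥ ·)) ⟨0, fun n => (h01 _ x).1⟩).isCoboundedUnder_le
  have hQ : Monotone Q := fun x y hxy =>
    limsup_le_limsup (Eventually.of_forall fun n => hm _ hxy) (hb' x) (hb y)
  have hQD : ∀ j, Tendsto (fun n => q (g n) (D j)) atTop (nhds (Q (D j))) := by
    intro j
    have : Q (D j) = L j := (hL' j).limsup_eq
    rw [this]; exact hL' j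
  refine ⟨g, hg, Q, hQ, ?_⟩
  have hc : ∀ᵐ x : unitInterval, ContinuousAt Q x := by
    have := hQ.countable_not_continuousAt.measure_zero (volume : Measure unitInterval)
    exact this
  have h0 : ∀ᵐ x : unitInterval, x ≠ 0 := by
    simp [ae_iff]
  have h1 : ∀ᵐ x : unitInterval, x ≠ 1 := by
    simp [ae_iff]
  filter_upwards [hc, h0, h1] with x hx hx0 hx1
  have hx0' : 0 < x := lt_of_le_of_ne x.2.1 (Ne.symm hx0)
  have hx1' : x < 1 := lt_of_le_of_ne x.2.2 hx1
  have hD : Dense (Set.range D) := TopologicalSpace.denseRange_denseSeq _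
  refine tendsto_order.2 ⟨fun a ha => ?_, fun a ha => ?_⟩
  · obtain ⟨l, hl, hlx⟩ := exists_Ioc_subset_of_mem_nhds (hx.eventually (lt_mem_nhds ha)) ⟨0, hx0'⟩
    obtain ⟨_, ⟨j, rfl⟩, hj1, hj2⟩ := hD.exists_between hl
    have h2 : a < Q (D j) := hlx ⟨hj1, hj2.le⟩
    filter_upwards [(hQD j).eventually (lt_mem_nhds h2)] with n hn
    exact hn.trans_le (hm _ hj2.le)
  · obtain ⟨l, hl, hlx⟩ := exists_Ico_subset_of_mem_nhds (hx.eventually (gt_mem_nhds ha)) ⟨1, hx1'⟩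
    obtain ⟨_, ⟨j, rfl⟩, hj1, hj2⟩ := hD.exists_between hl
    have h2 : Q (D j) < a := hlx ⟨hj1.le, hj2⟩
    filter_upwards [(hQD j).eventually (gt_mem_nhds h2)] with n hn
    exact lt_of_le_of_lt (hm _ hj1.le) hn

lemma exists_rearrange (A : ℕ → ℕ → Set unitInterval) (hA : ∀ n j, MeasurableSet (A n j)) :
    ∃ g : ℕ → ℕ, StrictMono g ∧ ∃ e : ℕ → unitInterval ≃ᵐ unitInterval,
      (∀ n, MeasurePreserving (e n) volume volume) ∧
      ∃ B : ℕ → Set unitInterval, (∀ j, MeasurableSet (B j)) ∧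
        ∀ᵐ x, ∀ j, ∀ᶠ n in atTop, ((e n).symm x ∈ A (g n) j ↔ x ∈ B j) := by
  classical
  let D : ℕ → unitInterval := TopologicalSpace.denseSeq unitInterval
  have hD : Dense (Set.range D) := TopologicalSpace.denseRange_denseSeq _
  let A' : ℕ → ℕ → Set unitInterval := fun n j =>
    if Even j then A n (j / 2) else Iic (D (j / 2))
  have hA' : ∀ n j, MeasurableSet (A' n j) := by
    intro n j
    by_cases h : Even j
    · simp [A', h, hA]
    · simp [A', h]
  let f : ℕ → unitInterval → ℕ → Bool := fun n x j => decide (x ∈ A' n j)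
  have hf : ∀ n, Measurable (f n) := by
    intro n
    refine measurable_pi_iff.2 fun j => measurable_to_bool ?_
    convert hA' n j using 1
    ext x; simp [f]
  have hlt : ∀ n x y, x < y → f n x ≠ f n y := by
    intro n x y hxy h
    obtain ⟨_, ⟨j, rfl⟩, hj1, hj2⟩ := hD.exists_between hxy
    have h1 := congrFun h (2 * j + 1)
    have h2 : ¬ Even (2 * j + 1) := by simp
    have h3 : (2 * j + 1) / 2 = j := by omega
    simp only [f, A', h2, if_false, h3, mem_Iic, decide_eq_decide] at h1
    exact absurd (h1.1 hj1.le) (not_le.2 hj2)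
  have hfi : ∀ n, Function.Injective (f n) := by
    intro n x y h
    rcases lt_trichotomy x y with h' | h' | h'
    · exact absurd h (hlt n x y h')
    · exact h'
    · exact absurd h.symm (hlt n y x h')
  let ι : (ℕ → Bool) → ℝ := fun b => (cantorSetHomeomorphNatToBool.symm b : ℝ)
  have hι : Continuous ι := continuous_subtype_val.comp cantorSetHomeomorphNatToBool.symm.continuous
  have hιm : ∀ b, ι b ∈ cantorSet := fun b => (cantorSetHomeomorphNatToBool.symm b).2
  have hιi : Function.Injective ι :=
    Subtype.val_injective.comp cantorSetHomeomorphNatToBool.symm.injective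
  have hsort := fun n => exists_sort (fun x => ι (f n x)) (hι.measurable.comp (hf n))
    (hιi.comp (hfi n)) (fun x => (cantorSet_subset_unitInterval (hιm _)).1)
    (fun x => (cantorSet_subset_unitInterval (hιm _)).2)
  choose φ q hφ hq h01 hqφ using hsort
  obtain ⟨g, hg, Q, hQ, hQt⟩ := helly q hq h01
  let d : ℝ → ℕ → Bool := fun t =>
    if h : t ∈ cantorSet then cantorSetHomeomorphNatToBool ⟨t, h⟩ else fun _ => false
  have hd : Measurable d :=
    Measurable.dite (s := cantorSet) (f := fun x => cantorSetHomeomorphNatToBool x)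
      (g := fun x _ => false) cantorSetHomeomorphNatToBool.continuous.measurable
      measurable_const isClosed_cantorSet.measurableSet
  have hdι : ∀ b, d (ι b) = b := by
    intro b
    simp [d, hιm, ι]
  refine ⟨g, hg, fun n => φ (g n), fun n => hφ (g n), fun j => {x | d (Q x) (2 * j) = true}, ?_, ?_⟩
  · intro j
    exact ((measurable_pi_apply (2 * j)).comp (hd.comp hQ.measurable)) (measurableSet_singleton true)
  have hae : ∀ᵐ x, ∀ n, q n x = ι (f n ((φ n).symm x)) := by
    rw [ae_all_iff]
    intro n
    have := ((hφ n).symm _).quasiMeasurePreserving.ae (hqφ n)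
    filter_upwards [this] with x hx
    simpa using hx
  filter_upwards [hae, hQt] with x hx hxt j
  have hQx : Q x ∈ cantorSet := isClosed_cantorSet.mem_of_tendsto hxt
    (Eventually.of_forall fun n => by rw [hx]; exact hιm _)
  have ht : Tendsto (fun n => f (g n) ((φ (g n)).symm x)) atTop (nhds (d (Q x))) := by
    have h1 : Tendsto (fun n => cantorSetHomeomorphNatToBool.symm (f (g n) ((φ (g n)).symm x)))
        atTop (nhds (⟨Q x, hQx⟩ : cantorSet)) := by
      rw [tendsto_subtype_rng]
      refine hxt.congr fun n => ?_
      rw [hx]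
    have h2 := (cantorSetHomeomorphNatToBool.continuous.tendsto _).comp h1
    have h3 : d (Q x) = cantorSetHomeomorphNatToBool ⟨Q x, hQx⟩ := by simp [d, hQx]
    rw [h3]
    refine h2.congr fun n => ?_
    simp
  have h4 := ((continuous_apply (2 * j)).tendsto _).comp ht
  have h5 := h4.eventually (by rw [nhds_discrete]; exact mem_pure.2 rfl :
    ∀ᶠ b in nhds (d (Q x) (2 * j)), b = d (Q x) (2 * j))
  filter_upwards [h5] with n hn
  simp only [Function.comp_apply] at hn
  rw [← hn]
  simp [f, A']


lemma weak_limit_scalar (𝒰 : Ultrafilter ℕ) (R : ℕ → unitInterval × unitInterval → ℝ)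
    (hR : ∀ n, Measurable (R n)) (hb : ∀ n p, |R n p| ≤ 1) :
    ∃ w : unitInterval × unitInterval → ℝ, Measurable w ∧ Integrable w ∧
      ∀ E, MeasurableSet E → Tendsto (fun n => ∫ p in E, R n p) 𝒰 (nhds (∫ p in E, w p)) := by
  have hmem : ∀ n, MemLp (R n) 2 (volume : Measure (unitInterval × unitInterval)) := fun n =>
    MemLp.of_bound (hR n).aestronglyMeasurable 1 (Eventually.of_forall fun p => hb n p)
  let H := Lp ℝ 2 (volume : Measure (unitInterval × unitInterval))
  let v : ℕ → H := fun n => (hmem n).toLp (R n)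
  have hv : ∀ n, ‖v n‖ ≤ 1 := by
    intro n
    have := Lp.norm_le_of_ae_bound (f := v n) (zero_le_one (α := ℝ)) (by
      filter_upwards [(hmem n).coeFn_toLp] with p hp
      rw [hp]; exact hb n p)
    have hu : measureUnivNNReal (volume : Measure (unitInterval × unitInterval)) = 1 := by
      simp [measureUnivNNReal]
    simpa [hu] using this
  let ℓ : ℕ → WeakDual ℝ H := fun n => StrongDual.toWeakDual (InnerProductSpace.toDual ℝ H (v n))
  have hcomp := WeakDual.isCompact_closedBall (𝕜 := ℝ) (E := H) 0 1
  obtain ⟨L, -, hL⟩ := hcomp.ultrafilter_le_nhds (𝒰.map ℓ) (by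
    simp only [Ultrafilter.coe_map, le_principal_iff, mem_map]
    refine Filter.univ_mem' fun n => ?_
    simp only [mem_preimage, mem_closedBall_zero_iff, ℓ]
    simpa using hv n)
  have hL' : Tendsto ℓ 𝒰 (nhds L) := hL
  let w : H := (InnerProductSpace.toDual ℝ H).symm (WeakDual.toStrongDual L)
  have hw : ∀ h : H, L h = inner ℝ w h := by
    intro h
    simp only [w, InnerProductSpace.toDual_symm_apply]
    rfl
  refine ⟨w, (Lp.stronglyMeasurable w).measurable, (Lp.memLp w).integrable (by norm_num), ?_⟩
  intro E hE
  have hEf : (volume : Measure (unitInterval × unitInterval)) E ≠ ⊤ := measure_ne_top _ _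
  let h : H := indicatorConstLp 2 hE hEf (1 : ℝ)
  have h1 : Tendsto (fun n => (ℓ n) h) 𝒰 (nhds (L h)) :=
    ((WeakDual.eval_continuous h).tendsto L).comp hL'
  have h2 : L h = ∫ p in E, w p := by
    rw [hw, real_inner_comm, L2.inner_indicatorConstLp_one]
  rw [← h2]
  refine h1.congr fun n => ?_
  have h3 : ℓ n h = inner ℝ (v n) h := rfl
  rw [h3, real_inner_comm, L2.inner_indicatorConstLp_one]
  exact integral_congr_ae (ae_restrict_of_ae (hmem n).coeFn_toLp)

lemma KGraphon.le_one {k : ℕ} (V : KGraphon k) (x y i) : V.W x y i ≤ 1 := by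
  rw [← V.sum_one x y]
  exact Finset.single_le_sum (f := fun i => V.W x y i) (fun j _ => V.nonneg x y j) (Finset.mem_univ i)

lemma KGraphon.abs_le_one {k : ℕ} (V : KGraphon k) (x y i) : |V.W x y i| ≤ 1 := by
  rw [abs_of_nonneg (V.nonneg x y i)]; exact V.le_one x y i

lemma KGraphon.integrable {k : ℕ} (V : KGraphon k) (i : Fin k) :
    Integrable (fun p : unitInterval × unitInterval => V.W p.1 p.2 i) :=
  Integrable.of_bound (V.meas i).aestronglyMeasurable 1
    (Eventually.of_forall fun p => V.abs_le_one p.1 p.2 i)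

lemma weak_limit (k : ℕ) (hk : 0 < k) (V : ℕ → KGraphon k) (𝒰 : Ultrafilter ℕ) :
    ∃ W : KGraphon k, ∀ i (E : Set (unitInterval × unitInterval)), MeasurableSet E →
      Tendsto (fun n => ∫ p in E, (V n).W p.1 p.2 i) 𝒰 (nhds (∫ p in E, W.W p.1 p.2 i)) := by
  classical
  have := fun i => weak_limit_scalar 𝒰 (fun n p => (V n).W p.1 p.2 i) (fun n => (V n).meas i)
    (fun n p => (V n).abs_le_one p.1 p.2 i)
  choose w hwm hwi hwt using this
  have hnonneg : ∀ᵐ p, ∀ i, 0 ≤ w i p := by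
    rw [ae_all_iff]
    intro i
    refine ae_nonneg_of_forall_setIntegral_nonneg (hwi i) fun E hE _ => ?_
    exact ge_of_tendsto' (hwt i E hE) fun n => integral_nonneg fun p => (V n).nonneg _ _ _
  have hsum : ∀ᵐ p, ∑ i, w i p = 1 := by
    refine Integrable.ae_eq_of_forall_setIntegral_eq _ _ (integrable_finsetSum _ fun i _ => hwi i)
      (integrable_const 1) fun E hE _ => ?_
    rw [integral_finsetSum _ fun i _ => (hwi i).integrableOn]
    refine tendsto_nhds_unique (tendsto_finsetSum _ fun i _ => hwt i E hE) ?_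
    refine tendsto_const_nhds.congr fun n => ?_
    rw [← integral_finsetSum _ fun i _ => ((V n).integrable i).integrableOn]
    simp only [(V n).sum_one]
  have hswap : MeasurePreserving (Prod.swap : unitInterval × unitInterval → _) volume volume :=
    Measure.measurePreserving_swap
  have hsymm : ∀ᵐ p, ∀ i, w i p.swap = w i p := by
    rw [ae_all_iff]
    intro i
    refine Integrable.ae_eq_of_forall_setIntegral_eq _ _ (hswap.integrable_comp_of_integrable (hwi i))
      (hwi i) fun E hE _ => ?_
    have hpre : ∀ f : unitInterval × unitInterval → ℝ,
        ∫ p in E, f p.swap = ∫ p in Prod.swap ⁻¹' E, f p := by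
      intro f
      rw [← hswap.setIntegral_preimage_emb MeasurableEquiv.prodComm.measurableEmbedding]
      rfl
    refine tendsto_nhds_unique ?_ (hwt i E hE)
    have h1 := hwt i _ (hswap.measurable hE)
    rw [← hpre] at h1
    refine h1.congr fun n => ?_
    rw [← hpre (fun p => (V n).W p.1 p.2 i)]
    simp only [Prod.fst_swap, Prod.snd_swap, (V n).symm]
  have hsum' := hswap.quasiMeasurePreserving.ae hsum
  have hnonneg' := hswap.quasiMeasurePreserving.ae hnonneg
  let G : Set (unitInterval × unitInterval) := {p | (∀ i, 0 ≤ w i p) ∧ (∑ i, w i p = 1) ∧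
    (∀ i, w i p.swap = w i p)}
  have hG : MeasurableSet G := by
    have e1 : MeasurableSet {p | ∀ i, 0 ≤ w i p} := by
      simp only [ofPred_forall]
      exact MeasurableSet.iInter fun i => measurableSet_le measurable_const (hwm i)
    have e2 : MeasurableSet {p | ∑ i, w i p = 1} :=
      measurableSet_eq_fun (Finset.measurable_sum _ fun i _ => hwm i) measurable_const
    have e3 : MeasurableSet {p : unitInterval × unitInterval | ∀ i, w i p.swap = w i p} := by
      simp only [ofPred_forall]
      exact MeasurableSet.iInter fun i => measurableSet_eq_fun ((hwm i).comp measurable_swap) (hwm i)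
    exact e1.inter (e2.inter e3)
  have hGs : ∀ p, p ∈ G → p.swap ∈ G := by
    rintro p ⟨h1, h2, h3⟩
    refine ⟨fun i => by rw [h3]; exact h1 i, by simp only [h3, h2], fun i => ?_⟩
    rw [Prod.swap_swap, h3]
  have hkr : (k : ℝ) ≠ 0 := by positivity
  let W : KGraphon k :=
    { W := fun x y i => if (x, y) ∈ G then w i (x, y) else 1 / k
      symm := by
        intro x y
        ext i
        by_cases h : (x, y) ∈ G
        · have h' : (y, x) ∈ G := hGs _ h
          simp only [h, h', if_true]
          exact (h.2.2 i).symm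
        · have h' : (y, x) ∉ G := fun h' => h (hGs _ h')
          simp only [h, h', if_false]
      meas := fun i => Measurable.ite hG (hwm i) measurable_const
      nonneg := by
        intro x y i
        by_cases h : (x, y) ∈ G
        · simp only [h, if_true]; exact h.1 i
        · simp only [h, if_false]; positivity
      sum_one := by
        intro x y
        by_cases h : (x, y) ∈ G
        · simp only [h, if_true]; exact h.2.1
        · simp [h, hkr] }
  refine ⟨W, fun i E hE => ?_⟩
  have hW : ∀ᵐ p, W.W p.1 p.2 i = w i p := by
    filter_upwards [hnonneg, hsum, hsymm] with p h1 h2 h3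
    exact if_pos (show (p.1, p.2) ∈ G from ⟨h1, h2, h3⟩)
  rw [integral_congr_ae (ae_restrict_of_ae hW)]
  exact hwt i E hE


lemma setIntegral_equiv (e : unitInterval ≃ᵐ unitInterval) (he : MeasurePreserving e volume volume)
    (F : unitInterval × unitInterval → ℝ) (S T : Set unitInterval) :
    ∫ p in S ×ˢ T, F (e p.1, e p.2) = ∫ p in (e.symm ⁻¹' S) ×ˢ (e.symm ⁻¹' T), F p := by
  have h : MeasurePreserving (Prod.map e e) (volume : Measure (unitInterval × unitInterval)) volume :=
    he.prod he
  have h2 := h.setIntegral_preimage_emb (e.prodCongr e).measurableEmbedding F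
    ((e.symm ⁻¹' S) ×ˢ (e.symm ⁻¹' T))
  rw [← h2]
  have h3 : Prod.map e e ⁻¹' ((e.symm ⁻¹' S) ×ˢ (e.symm ⁻¹' T)) = S ×ˢ T := by
    ext p; simp
  rw [h3]
  rfl

/-- Pull back of a `[k]`-graphon along a measurable bijection. -/
def KGraphon.pull {k : ℕ} (V : KGraphon k) (e : unitInterval ≃ᵐ unitInterval) : KGraphon k where
  W := fun x y => V.W (e x) (e y)
  symm := fun x y => V.symm _ _
  meas := fun i => (V.meas i).comp
    ((e.measurable.comp measurable_fst).prodMk (e.measurable.comp measurable_snd))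
  nonneg := fun x y i => V.nonneg _ _ i
  sum_one := fun x y => V.sum_one _ _

lemma cutDistK_nonneg {k : ℕ} (U V : KGraphon k) : 0 ≤ cutDistK U V :=
  Real.iInf_nonneg fun _ => Real.iSup_nonneg fun _ => Real.iSup_nonneg fun _ =>
    Finset.sum_nonneg fun _ _ => abs_nonneg _

lemma cutDistK_le {k : ℕ} (U V : KGraphon k) (e : unitInterval ≃ᵐ unitInterval)
    (he : MeasurePreserving e volume volume) (C : ℝ) (hC : 0 ≤ C)
    (h : ∀ S T : Set unitInterval, MeasurableSet S → MeasurableSet T →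
      ∑ i : Fin k, |∫ p in S ×ˢ T, ((U.pull e.symm).W p.1 p.2 i - V.W p.1 p.2 i)| ≤ C) :
    cutDistK U V ≤ C := by
  refine (ciInf_le ⟨0, ?_⟩ ⟨e, he, e.bijective⟩).trans ?_
  · rintro _ ⟨φ, rfl⟩
    exact Real.iSup_nonneg fun _ => Real.iSup_nonneg fun _ =>
      Finset.sum_nonneg fun _ _ => abs_nonneg _
  · refine Real.iSup_le (fun S => Real.iSup_le (fun T => ?_) hC) hC
    refine le_trans (le_of_eq ?_) (h (e.symm ⁻¹' S.1) (e.symm ⁻¹' T.1)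
      (e.symm.measurable S.2) (e.symm.measurable T.2))
    refine Finset.sum_congr rfl fun i _ => ?_
    rw [← setIntegral_equiv e he]
    simp [KGraphon.pull]

/-- The rank-one sums of the regularity lemma. -/
def stepFun (r : ℕ) (c : ℕ → ℝ) (S T : ℕ → Set unitInterval) (p : unitInterval × unitInterval) : ℝ :=
  ∑ j ∈ Finset.range r, c j * (S j ×ˢ T j).indicator 1 p

lemma stepFun_measurable (r : ℕ) (c : ℕ → ℝ) (S T : ℕ → Set unitInterval)
    (hS : ∀ j, MeasurableSet (S j)) (hT : ∀ j, MeasurableSet (T j)) :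
    Measurable (stepFun r c S T) :=
  Finset.measurable_sum _ fun j _ =>
    (measurable_one.indicator ((hS j).prod (hT j))).const_mul (c j)

lemma stepFun_bound (r : ℕ) (c : ℕ → ℝ) (S T : ℕ → Set unitInterval) (hc : ∀ j, |c j| ≤ 1) (p) :
    |stepFun r c S T p| ≤ r := by
  refine (Finset.abs_sum_le_sum_abs _ _).trans ?_
  refine (Finset.sum_le_card_nsmul _ _ 1 fun j _ => ?_).trans (by simp)
  rw [abs_mul]
  refine mul_le_one₀ (hc j) (abs_nonneg _) ?_
  by_cases hp : p ∈ S j ×ˢ T j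
  · rw [indicator_of_mem hp]; simp
  · rw [indicator_of_notMem hp]; simp

lemma stepFun_integrable (r : ℕ) (c : ℕ → ℝ) (S T : ℕ → Set unitInterval) (hc : ∀ j, |c j| ≤ 1)
    (hS : ∀ j, MeasurableSet (S j)) (hT : ∀ j, MeasurableSet (T j)) :
    Integrable (stepFun r c S T) :=
  Integrable.of_bound (stepFun_measurable r c S T hS hT).aestronglyMeasurable r
    (Eventually.of_forall fun p => stepFun_bound r c S T hc p)

/-- L1 convergence of step functions. -/
lemma stepFun_tendsto (r : ℕ) (c : ℕ → ℕ → ℝ) (S T : ℕ → ℕ → Set unitInterval)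
    (hc : ∀ n j, |c n j| ≤ 1) (hS : ∀ n j, MeasurableSet (S n j)) (hT : ∀ n j, MeasurableSet (T n j))
    (c' : ℕ → ℝ) (S' T' : ℕ → Set unitInterval) (hc' : ∀ j, |c' j| ≤ 1)
    (hS' : ∀ j, MeasurableSet (S' j)) (hT' : ∀ j, MeasurableSet (T' j))
    (h1 : ∀ j, Tendsto (fun n => c n j) atTop (nhds (c' j)))
    (h2 : ∀ᵐ x, ∀ j, ∀ᶠ n in atTop, (x ∈ S n j ↔ x ∈ S' j))
    (h3 : ∀ᵐ x, ∀ j, ∀ᶠ n in atTop, (x ∈ T n j ↔ x ∈ T' j)) :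
    Tendsto (fun n => ∫ p, |stepFun r (c n) (S n) (T n) p - stepFun r c' S' T' p|) atTop (nhds 0) := by
  have h0 : (0 : ℝ) = ∫ p : unitInterval × unitInterval, (0 : ℝ) := by simp
  rw [h0]
  refine tendsto_integral_of_dominated_convergence (fun _ => (r : ℝ) + r) ?_ (integrable_const _) ?_ ?_
  · intro n
    exact ((stepFun_measurable r _ _ _ (hS n) (hT n)).sub
      (stepFun_measurable r _ _ _ hS' hT')).abs.aestronglyMeasurable
  · intro n
    refine Eventually.of_forall fun p => ?_
    rw [Real.norm_eq_abs, abs_abs]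
    exact (abs_sub _ _).trans (add_le_add (stepFun_bound _ _ _ _ (hc n) p) (stepFun_bound _ _ _ _ hc' p))
  · have h2' : ∀ᵐ p : unitInterval × unitInterval, ∀ j, ∀ᶠ n in atTop, (p.1 ∈ S n j ↔ p.1 ∈ S' j) :=
      Measure.quasiMeasurePreserving_fst.ae h2
    have h3' : ∀ᵐ p : unitInterval × unitInterval, ∀ j, ∀ᶠ n in atTop, (p.2 ∈ T n j ↔ p.2 ∈ T' j) :=
      Measure.quasiMeasurePreserving_snd.ae h3
    filter_upwards [h2', h3'] with p hp1 hp2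
    have h4 : Tendsto (fun n => stepFun r (c n) (S n) (T n) p) atTop (nhds (stepFun r c' S' T' p)) := by
      refine tendsto_finsetSum _ fun j _ => (h1 j).mul ?_
      refine tendsto_const_nhds.congr' ?_
      filter_upwards [hp1 j, hp2 j] with n hn1 hn2
      have : p ∈ S n j ×ˢ T n j ↔ p ∈ S' j ×ˢ T' j := by
        rw [mem_prod, mem_prod, hn1, hn2]
      by_cases hp : p ∈ S' j ×ˢ T' j
      · rw [indicator_of_mem hp, indicator_of_mem (this.2 hp)]
      · rw [indicator_of_notMem hp, indicator_of_notMem (fun h => hp (this.1 h))]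
    have h5 := (h4.sub_const (stepFun r c' S' T' p)).abs
    simpa using h5

lemma greedy_graphon {k : ℕ} (V : KGraphon k) (i : Fin k) (m : ℕ) :
    ∃ (c : ℕ → ℝ) (S T : ℕ → Set unitInterval), (∀ j, |c j| ≤ 1) ∧ (∀ j, MeasurableSet (S j)) ∧
      (∀ j, MeasurableSet (T j)) ∧ ∀ S' T' : Set unitInterval, MeasurableSet S' → MeasurableSet T' →
      |∫ p in S' ×ˢ T', (V.W p.1 p.2 i - stepFun ((m + 1) ^ 2) c S T p)| ≤ 1 / ((m : ℝ) + 1) := by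
  have h1 : ∫ p : unitInterval × unitInterval, V.W p.1 p.2 i ^ 2 ≤ 1 := by
    have : ∫ p : unitInterval × unitInterval, V.W p.1 p.2 i ^ 2
        ≤ ∫ p : unitInterval × unitInterval, (1 : ℝ) := by
      refine integral_mono_of_nonneg (Eventually.of_forall fun p => sq_nonneg _)
        (integrable_const _) (Eventually.of_forall fun p => ?_)
      exact pow_le_one₀ (V.nonneg _ _ _) (V.le_one _ _ _)
    simpa using this
  refine greedy (1 / ((m : ℝ) + 1)) (by positivity) ((m + 1) ^ 2)
    (fun p => V.W p.1 p.2 i) (V.meas i) ⟨1, fun p => V.abs_le_one _ _ _⟩ h1 (h1.trans (le_of_eq ?_))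
  push_cast
  field_simp

/-- **Theorem (compactness of the space of `[k]`-graphons).**
Every sequence of `[k]`-graphons has a subsequence converging in cut distance to some
`[k]`-graphon. -/
theorem kGraphon_compactness (k : ℕ) (hk : 2 ≤ k) (Wseq : ℕ → KGraphon k) :
    ∃ g : ℕ → ℕ, StrictMono g ∧ ∃ W : KGraphon k,
      Tendsto (fun j => cutDistK (Wseq (g j)) W) atTop (nhds 0) := by
  choose c S T hc hS hT happ using fun n i m => greedy_graphon (Wseq n) i m
  -- convergent coefficients
  obtain ⟨cl, g₁, hg₁, hcl⟩ := CompactSpace.tendsto_subseq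
    (fun n => (fun q => ⟨c n q.1 q.2.1 q.2.2, abs_le.1 (hc n q.1 q.2.1 q.2.2)⟩ :
      Fin k × ℕ × ℕ → Icc (-1 : ℝ) 1))
  have hcl' : ∀ i m l, Tendsto (fun n => c (g₁ n) i m l) atTop (nhds (cl (i, m, l))) := by
    intro i m l
    have h1 := (continuous_apply (i, m, l)).continuousAt.tendsto.comp hcl
    exact (continuous_subtype_val.tendsto _).comp h1
  -- rearrangement
  let A : ℕ → ℕ → Set unitInterval := fun n j =>
    match (Encodable.decode j : Option (Bool × Fin k × ℕ × ℕ)) with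
    | some (true, i, m, l) => S (g₁ n) i m l
    | some (false, i, m, l) => T (g₁ n) i m l
    | none => ∅
  have hA : ∀ n j, MeasurableSet (A n j) := by
    intro n j
    simp only [A]
    rcases (Encodable.decode j : Option (Bool × Fin k × ℕ × ℕ)) with _ | ⟨_ | _, i, m, l⟩
    · exact MeasurableSet.empty
    · exact hT _ _ _ _
    · exact hS _ _ _ _
  obtain ⟨g₂, hg₂, e, he, B, hB, hAB⟩ := exists_rearrange A hA
  have hAS : ∀ n i m l, A n (Encodable.encode (true, i, m, l)) = S (g₁ n) i m l := by
    intro n i m l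
    simp only [A, Encodable.encodek]
  have hAT : ∀ n i m l, A n (Encodable.encode (false, i, m, l)) = T (g₁ n) i m l := by
    intro n i m l
    simp only [A, Encodable.encodek]
  let g : ℕ → ℕ := fun n => g₁ (g₂ n)
  have hg : StrictMono g := hg₁.comp hg₂
  let V : ℕ → KGraphon k := fun n => (Wseq (g n)).pull (e n).symm
  let 𝒰 : Ultrafilter ℕ := hyperfilter ℕ
  have h𝒰 : (𝒰 : Filter ℕ) ≤ atTop := Nat.hyperfilter_le_atTop
  obtain ⟨W, hW⟩ := weak_limit k (by omega) V 𝒰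
  refine ⟨g, hg, W, ?_⟩
  let r : ℕ → ℕ := fun m => (m + 1) ^ 2
  let U : ℕ → Fin k → ℕ → unitInterval × unitInterval → ℝ := fun n i m =>
    stepFun (r m) (c (g n) i m) (fun l => (e n).symm ⁻¹' S (g n) i m l)
      (fun l => (e n).symm ⁻¹' T (g n) i m l)
  let Ul : Fin k → ℕ → unitInterval × unitInterval → ℝ := fun i m =>
    stepFun (r m) (fun l => cl (i, m, l)) (fun l => B (Encodable.encode (true, i, m, l)))
      (fun l => B (Encodable.encode (false, i, m, l)))
  have hcl1 : ∀ i m l, |(cl (i, m, l) : ℝ)| ≤ 1 := fun i m l => abs_le.2 (cl (i, m, l)).2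
  have hUi : ∀ n i m, Integrable (U n i m) := fun n i m =>
    stepFun_integrable _ _ _ _ (hc _ i m) (fun l => (e n).symm.measurable (hS _ _ _ _))
      (fun l => (e n).symm.measurable (hT _ _ _ _))
  have hUli : ∀ i m, Integrable (Ul i m) := fun i m =>
    stepFun_integrable _ _ _ _ (hcl1 i m) (fun l => hB _) (fun l => hB _)
  let δ : ℕ → Fin k → ℕ → ℝ := fun n i m => ∫ p, |U n i m p - Ul i m p|
  have hδ : ∀ i m, Tendsto (fun n => δ n i m) atTop (nhds 0) := by
    intro i m
    refine stepFun_tendsto (r m) (fun n => c (g n) i m) _ _ (fun n => hc _ i m)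
      (fun n l => (e n).symm.measurable (hS _ _ _ _))
      (fun n l => (e n).symm.measurable (hT _ _ _ _)) _ _ _ (hcl1 i m) (fun l => hB _)
      (fun l => hB _) (fun l => (hcl' i m l).comp hg₂.tendsto_atTop) ?_ ?_
    · filter_upwards [hAB] with x hx l
      have := hx (Encodable.encode (true, i, m, l))
      simp only [hAS] at this
      exact this
    · filter_upwards [hAB] with x hx l
      have := hx (Encodable.encode (false, i, m, l))
      simp only [hAT] at this
      exact this
  have hVU : ∀ (n : ℕ) (i : Fin k) (m : ℕ) (S' T' : Set unitInterval), MeasurableSet S' → MeasurableSet T' →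
      |∫ p in S' ×ˢ T', ((V n).W p.1 p.2 i - U n i m p)| ≤ 1 / ((m : ℝ) + 1) := by
    intro n i m S' T' hS' hT'
    have h1 := happ (g n) i m ((e n).symm.symm ⁻¹' S') ((e n).symm.symm ⁻¹' T')
      ((e n).symm.symm.measurable hS') ((e n).symm.symm.measurable hT')
    rw [← setIntegral_equiv (e n).symm ((he n).symm _)] at h1
    exact h1
  have hUUl : ∀ n i m (E : Set (unitInterval × unitInterval)),
      |∫ p in E, (U n i m p - Ul i m p)| ≤ δ n i m := by
    intro n i m E
    refine (abs_integral_le_integral_abs).trans ?_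
    exact setIntegral_le_integral ((hUi n i m).sub (hUli i m)).abs
      (Eventually.of_forall fun p => abs_nonneg _)
  have hWU : ∀ (i : Fin k) (m : ℕ) (S' T' : Set unitInterval), MeasurableSet S' → MeasurableSet T' →
      |∫ p in S' ×ˢ T', (W.W p.1 p.2 i - Ul i m p)| ≤ 1 / ((m : ℝ) + 1) := by
    intro i m S' T' hS' hT'
    have hE := hS'.prod hT'
    have h1 := hW i _ hE
    have h2 : Tendsto (fun n => ∫ p in S' ×ˢ T', U n i m p) 𝒰 (nhds (∫ p in S' ×ˢ T', Ul i m p)) := by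
      rw [tendsto_iff_dist_tendsto_zero]
      refine squeeze_zero (fun n => dist_nonneg) (fun n => ?_) ((hδ i m).mono_left h𝒰)
      rw [Real.dist_eq, ← integral_sub (hUi n i m).integrableOn (hUli i m).integrableOn]
      exact hUUl n i m _
    rw [integral_sub (W.integrable i).integrableOn (hUli i m).integrableOn]
    refine le_of_tendsto' (h1.sub h2).abs fun n => ?_
    rw [← integral_sub ((V n).integrable i).integrableOn (hUi n i m).integrableOn]
    exact hVU n i m S' T' hS' hT'
  have hVW : ∀ (n : ℕ) (i : Fin k) (m : ℕ) (S' T' : Set unitInterval), MeasurableSet S' → MeasurableSet T' →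
      |∫ p in S' ×ˢ T', ((V n).W p.1 p.2 i - W.W p.1 p.2 i)| ≤ 2 * (1 / ((m : ℝ) + 1)) + δ n i m := by
    intro n i m S' T' hS' hT'
    have a1 := hVU n i m S' T' hS' hT'
    have a2 := hUUl n i m (S' ×ˢ T')
    have a3 := hWU i m S' T' hS' hT'
    rw [integral_sub ((V n).integrable i).integrableOn (hUi n i m).integrableOn] at a1
    rw [integral_sub (hUi n i m).integrableOn (hUli i m).integrableOn] at a2
    rw [integral_sub (W.integrable i).integrableOn (hUli i m).integrableOn] at a3
    rw [integral_sub ((V n).integrable i).integrableOn (W.integrable i).integrableOn]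
    rw [abs_le] at *
    constructor <;> linarith
  have hδ0 : ∀ n i m, 0 ≤ δ n i m := fun n i m => integral_nonneg fun p => abs_nonneg _
  have hcut : ∀ (n m : ℕ), cutDistK (Wseq (g n)) W
      ≤ ∑ i, (2 * (1 / ((m : ℝ) + 1)) + δ n i m) := by
    intro n m
    refine cutDistK_le _ _ (e n) (he n) _ (Finset.sum_nonneg fun i _ => ?_) fun S' T' hS' hT' => ?_
    · have := hδ0 n i m
      positivity
    · exact Finset.sum_le_sum fun i _ => hVW n i m S' T' hS' hT'
  refine tendsto_order.2 ⟨fun a ha => Eventually.of_forall fun n =>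
    ha.trans_le (cutDistK_nonneg _ _), fun a ha => ?_⟩
  have hm : Tendsto (fun m : ℕ => ∑ i : Fin k, (2 * (1 / ((m : ℝ) + 1)) + 0)) atTop (nhds 0) := by
    have h1 : Tendsto (fun m : ℕ => ∑ i : Fin k, (2 * (1 / ((m : ℝ) + 1)) + 0)) atTop
        (nhds (∑ i : Fin k, (2 * 0 + 0))) :=
      tendsto_finsetSum _ fun i _ =>
        (tendsto_one_div_add_atTop_nhds_zero_nat.const_mul 2).add_const 0
    simpa using h1
  obtain ⟨m, hma⟩ := (hm.eventually (gt_mem_nhds ha)).exists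
  have hn : Tendsto (fun n => ∑ i : Fin k, (2 * (1 / ((m : ℝ) + 1)) + δ n i m)) atTop
      (nhds (∑ i : Fin k, (2 * (1 / ((m : ℝ) + 1)) + 0))) :=
    tendsto_finsetSum _ fun i _ => (hδ i m).const_add _
  filter_upwards [hn.eventually (gt_mem_nhds hma)] with n hn'
  exact (hcut n m).trans_lt hn'

end
end

section
/- Let k ≥ 2 and let P be a hereditary property of [k]-decorated graphs with P_n ≠ ∅ for every n ∈ ℕ, and let ε > 0 be fixed. Then the limit π(P) := lim_{n→∞} ex(n, P_n)/binom(n,2) exists, and there exists n₀ ∈ ℕ such that for all n ≥ n₀, k^{π(P)·binom(n,2)} ≤ |P_n| ≤ k^{(π(P)+ε)·binom(n,2)}. -/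
open MeasureTheory Filter Set

noncomputable section

/-- The edge `{i,j}` for distinct `i j`. -/
def edgeOf {n : ℕ} (i j : Fin n) (h : i ≠ j) : EdgeType n :=
  if hij : i < j then ⟨(i, j), hij⟩ else ⟨(j, i), (not_lt.mp hij).lt_of_ne' h⟩

/-- The `[k]`-decorated graph induced from `c` by an injection `ψ : [N] → [n]`. -/
def inducedCol {k N n : ℕ} (ψ : Fin N → Fin n) (hψ : Function.Injective ψ)
    (c : EdgeType n → Fin k) : EdgeType N → Fin k :=
  fun e => c (edgeOf (ψ e.val.1) (ψ e.val.2) fun h => (ne_of_lt e.prop) (hψ h))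

/-- A hereditary property of `[k]`-decorated graphs. -/
def HereditaryK (k : ℕ) (P : ∀ n, Set (EdgeType n → Fin k)) : Prop :=
  ∀ (N n : ℕ) (ψ : Fin N → Fin n) (hψ : Function.Injective ψ),
    ∀ c ∈ P n, inducedCol ψ hψ c ∈ P N

/-- The realisations `⟨t⟩` of a `k`-colouring template `t` for `K_n`. -/
def realisations {k n : ℕ} (t : EdgeType n → Finset (Fin k)) :
    Set (EdgeType n → Fin k) :=
  {c | ∀ e, c e ∈ t e}

/-- The entropy `Ent(t) = log_k ∏_e |t(e)|` of a template. -/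
def templateEnt {k n : ℕ} (t : EdgeType n → Finset (Fin k)) : ℝ :=
  Real.logb k (∏ e : EdgeType n, ((t e).card : ℝ))

/-- The extremal entropy `ex(n, P_n)`: the maximal entropy of a `k`-colouring
template all of whose realisations lie in `P_n`. -/
def exTemplate {k : ℕ} (P : ∀ n, Set (EdgeType n → Fin k)) (n : ℕ) : ℝ :=
  sSup {x : ℝ | ∃ t : EdgeType n → Finset (Fin k),
    (∀ e, (t e).Nonempty) ∧ realisations t ⊆ P n ∧ x = templateEnt t}

/-! ### Finite conditional expectations -/

section CondE

open Classical in
/-- The conditional expectation of `f` on the uniform space `P` given the key `κ`. -/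
def condE {α β : Type*} (P : Finset α) (κ : α → β) (f : α → ℝ) (c : α) : ℝ :=
  (∑ c' ∈ P.filter (fun c' => κ c' = κ c), f c') / ((P.filter (fun c' => κ c' = κ c)).card : ℝ)

/-- `h` only depends on the key `κ` on `P`. -/
def KMeas {α β γ : Type*} (P : Finset α) (κ : α → β) (h : α → γ) : Prop :=
  ∀ c ∈ P, ∀ c' ∈ P, κ c = κ c' → h c = h c'

variable {α β β' : Type*} (P : Finset α) (κ : α → β) (κ' : α → β')

lemma condE_congr (f : α → ℝ) {c c' : α} (h : κ c = κ c') : condE P κ f c = condE P κ f c' := by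
  unfold condE
  rw [h]

lemma condE_kmeas (f : α → ℝ) : KMeas P κ (condE P κ f) :=
  fun _ _ _ _ h => condE_congr P κ f h

lemma sum_condE_mul (f h : α → ℝ) (hh : KMeas P κ h) :
    ∑ c ∈ P, condE P κ f c * h c = ∑ c ∈ P, f c * h c := by
  classical
  unfold condE
  have h1 : ∀ c ∈ P, (∑ c' ∈ P.filter (fun c' => κ c' = κ c), f c') /
      ((P.filter (fun c' => κ c' = κ c)).card : ℝ) * h c
      = ∑ c' ∈ P, if κ c' = κ c then
          f c' * h c' / ((P.filter (fun d => κ d = κ c')).card : ℝ) else 0 := by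
    intro c hc
    rw [← Finset.sum_filter, Finset.sum_div, Finset.sum_mul]
    refine Finset.sum_congr rfl fun c' hc' => ?_
    rw [Finset.mem_filter] at hc'
    rw [hh c' hc'.1 c hc hc'.2, hc'.2]
    ring
  rw [Finset.sum_congr rfl h1, Finset.sum_comm]
  refine Finset.sum_congr rfl fun c' hc' => ?_
  rw [← Finset.sum_filter, Finset.sum_const, nsmul_eq_mul]
  have h2 : P.filter (fun c => κ c' = κ c) = P.filter (fun d => κ d = κ c') := by
    ext x
    simp [eq_comm]
  rw [h2]
  have h3 : ((P.filter (fun d => κ d = κ c')).card : ℝ) ≠ 0 := by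
    have : 0 < (P.filter (fun d => κ d = κ c')).card :=
      Finset.card_pos.mpr ⟨c', by simp [hc']⟩
    positivity
  field_simp

lemma condE_nonneg (f : α → ℝ) (hf : ∀ c, 0 ≤ f c) (c : α) : 0 ≤ condE P κ f c := by
  unfold condE
  exact div_nonneg (Finset.sum_nonneg fun i _ => hf i) (by positivity)

lemma condE_le_one (f : α → ℝ) (hf : ∀ c, f c ≤ 1) (c : α) : condE P κ f c ≤ 1 := by
  unfold condE
  refine div_le_one_of_le₀ ?_ (by positivity)
  refine (Finset.sum_le_sum (fun i _ => hf i)).trans ?_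
  simp

lemma sum_sq_condE_sub (f : α → ℝ) (href : KMeas P κ' κ) :
    ∑ c ∈ P, (condE P κ' f c - condE P κ f c) ^ 2
      = ∑ c ∈ P, condE P κ' f c ^ 2 - ∑ c ∈ P, condE P κ f c ^ 2 := by
  have hm : KMeas P κ' (condE P κ f) := fun c hc c' hc' h =>
    condE_congr P κ f (href c hc c' hc' h)
  have h1 := sum_condE_mul P κ' f _ hm
  have h2 := sum_condE_mul P κ f _ (condE_kmeas P κ f)
  have h3 : ∑ c ∈ P, (condE P κ' f c - condE P κ f c) ^ 2
      = ∑ c ∈ P, condE P κ' f c ^ 2 - 2 * ∑ c ∈ P, condE P κ' f c * condE P κ f c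
        + ∑ c ∈ P, condE P κ f c * condE P κ f c := by
    rw [Finset.mul_sum, ← Finset.sum_sub_distrib, ← Finset.sum_add_distrib]
    exact Finset.sum_congr rfl fun c _ => by ring
  have h4 : ∑ c ∈ P, condE P κ f c ^ 2 = ∑ c ∈ P, condE P κ f c * condE P κ f c :=
    Finset.sum_congr rfl fun c _ => by ring
  rw [h3, h4, h1, ← h2]
  ring

/-- Decoupling: if each `f j` is almost determined (in mean) by the coarse key `κ` even
given the finer key `κB j`, then products almost factor. -/
lemma decouple {I : Type*} {βB : I → Type*} (κB : ∀ i, α → βB i) (f : I → α → ℝ)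
    (hf0 : ∀ i c, 0 ≤ f i c) (hf1 : ∀ i c, f i c ≤ 1)
    (hmeas : ∀ i j, i ≠ j → KMeas P (κB j) (f i))
    (href : ∀ j, KMeas P (κB j) κ) (Δ : ℝ)
    (hΔ : ∀ j, ∑ c ∈ P, |condE P (κB j) (f j) c - condE P κ (f j) c| ≤ Δ)
    (s : Finset I) : ∀ (H : α → ℝ), KMeas P κ H → (∀ c, 0 ≤ H c) → (∀ c, H c ≤ 1) →
      ∑ c ∈ P, H c * ∏ i ∈ s, condE P κ (f i) c ≤ ∑ c ∈ P, H c * ∏ i ∈ s, f i c + s.card * Δ := by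
  classical
  induction s using Finset.induction_on with
  | empty => intro H _ _ _; simp
  | insert j s hj ih =>
    intro H hH h0 h1
    have e1 := ih (fun c => H c * condE P κ (f j) c)
      (fun c hc c' hc' h => by
        show H c * _ = H c' * _
        rw [hH c hc c' hc' h, condE_congr P κ (f j) h])
      (fun c => mul_nonneg (h0 c) (condE_nonneg P κ _ (hf0 j) c))
      (fun c => mul_le_one₀ (h1 c) (condE_nonneg P κ _ (hf0 j) c) (condE_le_one P κ _ (hf1 j) c))
    have hG : KMeas P (κB j) (fun c => H c * ∏ i ∈ s, f i c) := by
      intro c hc c' hc' h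
      show H c * _ = H c' * _
      rw [hH c hc c' hc' (href j c hc c' hc' h)]
      congr 1
      refine Finset.prod_congr rfl fun i hi => ?_
      exact hmeas i j (by rintro rfl; exact hj hi) c hc c' hc' h
    have e2 := sum_condE_mul P (κB j) (f j) _ hG
    have e3 : ∑ c ∈ P, condE P κ (f j) c * (H c * ∏ i ∈ s, f i c)
        ≤ ∑ c ∈ P, condE P (κB j) (f j) c * (H c * ∏ i ∈ s, f i c) + Δ := by
      have : ∑ c ∈ P, condE P κ (f j) c * (H c * ∏ i ∈ s, f i c)
        - ∑ c ∈ P, condE P (κB j) (f j) c * (H c * ∏ i ∈ s, f i c) ≤ Δ := by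
        rw [← Finset.sum_sub_distrib]
        refine le_trans (Finset.sum_le_sum fun c _ => ?_) (hΔ j)
        have hp0 : 0 ≤ H c * ∏ i ∈ s, f i c :=
          mul_nonneg (h0 c) (Finset.prod_nonneg fun i _ => hf0 i c)
        have hp1 : H c * ∏ i ∈ s, f i c ≤ 1 :=
          mul_le_one₀ (h1 c) (Finset.prod_nonneg fun i _ => hf0 i c)
            (Finset.prod_le_one (fun i _ => hf0 i c) (fun i _ => hf1 i c))
        rw [← sub_mul, abs_sub_comm]
        calc _ ≤ |condE P κ (f j) c - condE P (κB j) (f j) c| * (H c * ∏ i ∈ s, f i c) :=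
              mul_le_mul_of_nonneg_right (le_abs_self _) hp0
          _ ≤ _ := mul_le_of_le_one_right (abs_nonneg _) hp1
      linarith
    have r1 : ∑ c ∈ P, H c * ∏ i ∈ insert j s, condE P κ (f i) c
        = ∑ c ∈ P, H c * condE P κ (f j) c * ∏ i ∈ s, condE P κ (f i) c :=
      Finset.sum_congr rfl fun c _ => by rw [Finset.prod_insert hj]; ring
    have r2 : ∑ c ∈ P, H c * ∏ i ∈ insert j s, f i c
        = ∑ c ∈ P, f j c * (H c * ∏ i ∈ s, f i c) :=
      Finset.sum_congr rfl fun c _ => by rw [Finset.prod_insert hj]; ring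
    have r3 : ∑ c ∈ P, H c * condE P κ (f j) c * ∏ i ∈ s, f i c
        = ∑ c ∈ P, condE P κ (f j) c * (H c * ∏ i ∈ s, f i c) :=
      Finset.sum_congr rfl fun c _ => by ring
    rw [r1, r2, Finset.card_insert_of_notMem hj]
    push_cast
    linarith

lemma sum_abs_le_sqrt (d : α → ℝ) (δ : ℝ) (h : ∑ c ∈ P, d c ^ 2 ≤ δ * P.card) :
    ∑ c ∈ P, |d c| ≤ P.card * Real.sqrt δ := by
  rcases P.eq_empty_or_nonempty with rfl | hne
  · simp
  have hpos : (0 : ℝ) < P.card := by exact_mod_cast hne.card_pos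
  have hδ : 0 ≤ δ := by
    have : 0 ≤ ∑ c ∈ P, d c ^ 2 := Finset.sum_nonneg fun _ _ => sq_nonneg _
    by_contra hlt
    push Not at hlt
    nlinarith
  have h1 := sq_sum_le_card_mul_sum_sq (s := P) (f := fun c => |d c|)
  simp only [sq_abs] at h1
  refine abs_le_of_sq_le_sq' ?_ (by positivity) |>.2
  rw [mul_pow, Real.sq_sqrt hδ]
  nlinarith

end CondE

/-! ### The Gibbs bound -/

/-- The weight of colour `r` in template cell `t`. -/
def wgt {k : ℕ} (θ : ℝ) (t : Finset (Fin k)) (r : Fin k) : ℝ :=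
  (if r ∈ t then (1 - θ) / (t.card : ℝ) else 0) + θ / k

lemma sum_wgt {k : ℕ} (hk : 2 ≤ k) (θ : ℝ) (t : Finset (Fin k)) (ht : t.Nonempty) :
    ∑ r, wgt θ t r = 1 := by
  unfold wgt
  rw [Finset.sum_add_distrib, Finset.sum_ite_mem]
  have h1 : (t.card : ℝ) ≠ 0 := by have := ht.card_pos; positivity
  have h2 : (k : ℝ) ≠ 0 := by positivity
  simp
  field_simp
  ring

lemma wgt_pos {k : ℕ} (hk : 2 ≤ k) (θ : ℝ) (h0 : 0 < θ) (h1 : θ < 1) (t : Finset (Fin k))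
    (r : Fin k) : 0 < wgt θ t r := by
  unfold wgt
  have h2 : (0 : ℝ) < k := by positivity
  have : 0 < θ / k := by positivity
  have : 0 < 1 - θ := by linarith
  split_ifs <;> positivity

lemma neg_log_wgt_le {k : ℕ} (hk : 2 ≤ k) (θ : ℝ) (h0 : 0 < θ) (h1 : θ < 1) (t : Finset (Fin k))
    (ht : t.Nonempty) (r : Fin k) :
    -Real.log (wgt θ t r) ≤ Real.log t.card - Real.log (1 - θ)
      + (if r ∈ t then 0 else 1) * Real.log (k / θ) := by
  have h2 : (0 : ℝ) < k := by positivity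
  have hc : (1 : ℝ) ≤ t.card := by exact_mod_cast ht.card_pos
  have hθ : 0 < 1 - θ := by linarith
  have hq : 0 < θ / k := by positivity
  by_cases hr : r ∈ t
  · have : (1 - θ) / t.card ≤ wgt θ t r := by
      unfold wgt; rw [if_pos hr]; linarith
    have h3 := Real.log_le_log (by positivity) this
    rw [Real.log_div hθ.ne' (by positivity)] at h3
    simp [hr]; linarith
  · have h4 : Real.log t.card ≥ 0 := Real.log_nonneg hc
    have h5 : Real.log (1 - θ) ≤ 0 := Real.log_nonpos hθ.le (by linarith)
    unfold wgt
    simp only [hr, if_false, zero_add, one_mul]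
    rw [Real.log_div h0.ne' h2.ne', Real.log_div h2.ne' h0.ne']
    linarith

/-- Restriction of a colouring to a set of edges. -/
def rkey {E : Type*} {k : ℕ} (A : Finset E) (c : E → Fin k) : A → Fin k := fun e => c e

lemma rkey_eq {E : Type*} {k : ℕ} {A : Finset E} {c c' : E → Fin k} :
    rkey A c = rkey A c' ↔ ∀ e ∈ A, c e = c' e := by
  constructor
  · intro h e he
    exact congrFun h ⟨e, he⟩
  · intro h
    funext e
    exact h e e.2

lemma gibbs_core {α : Type*} (P : Finset α) (hP : P.Nonempty) (Q : α → ℝ) (hQ : ∀ c, 0 < Q c)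
    (K : ℝ) (hK : 0 < K) (h : ∑ c ∈ P, Q c ≤ K) :
    P.card * Real.log P.card ≤ P.card * Real.log K + ∑ c ∈ P, -Real.log (Q c) := by
  have hp : (0 : ℝ) < P.card := by exact_mod_cast hP.card_pos
  -- `log x ≤ x - 1` with `x = |P| Q / K`
  have h1 : ∑ c ∈ P, Real.log (P.card * Q c / K) ≤ ∑ c ∈ P, (P.card * Q c / K - 1) :=
    Finset.sum_le_sum fun c _ =>
      Real.log_le_sub_one_of_pos (by have := hQ c; positivity)
  have h2 : ∑ c ∈ P, (P.card * Q c / K - 1) ≤ 0 := by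
    rw [Finset.sum_sub_distrib, ← Finset.sum_div, ← Finset.mul_sum]
    simp only [Finset.sum_const, nsmul_eq_mul, mul_one]
    rw [sub_nonpos, div_le_iff₀ hK]
    exact mul_le_mul_of_nonneg_left h hp.le
  have h3 : ∑ c ∈ P, Real.log (P.card * Q c / K)
      = P.card * Real.log P.card - P.card * Real.log K + ∑ c ∈ P, Real.log (Q c) := by
    have : ∀ c ∈ P, Real.log (P.card * Q c / K)
        = Real.log P.card - Real.log K + Real.log (Q c) := by
      intro c _
      have := hQ c
      rw [Real.log_div (by positivity) hK.ne', Real.log_mul hp.ne' this.ne']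
      ring
    rw [Finset.sum_congr rfl this, Finset.sum_add_distrib]
    simp
  rw [Finset.sum_neg_distrib]
  linarith

lemma gibbs {E : Type*} [Fintype E] [DecidableEq E] {k : ℕ} (hk : 2 ≤ k)
    (P : Finset (E → Fin k)) (hP : P.Nonempty) (A : Finset E)
    (T : (E → Fin k) → E → Finset (Fin k)) (hT : KMeas P (rkey A) T)
    (hTn : ∀ c ∈ P, ∀ e, (T c e).Nonempty) (θ : ℝ) (h0 : 0 < θ) (h1 : θ < 1) :
    P.card * Real.log P.card ≤ P.card * (A.card * Real.log k)
      + ∑ c ∈ P, ∑ e ∈ Aᶜ, -Real.log (wgt θ (T c e) (c e)) := by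
  classical
  have hkpos : (0 : ℝ) < k := by positivity
  have key : ∑ c ∈ P, ∏ e ∈ Aᶜ, wgt θ (T c e) (c e) ≤ (k : ℝ) ^ A.card := by
    rw [← Finset.sum_fiberwise (s := P) (g := rkey A)]
    have hfib : ∀ a : A → Fin k,
        ∑ c ∈ P.filter (fun c => rkey A c = a), ∏ e ∈ Aᶜ, wgt θ (T c e) (c e) ≤ 1 := by
      intro a
      rcases (P.filter (fun c => rkey A c = a)).eq_empty_or_nonempty with h | ⟨c0, hc0⟩
      · rw [h]; simp
      rw [Finset.mem_filter] at hc0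
      let v : E → Fin k → ℝ := fun e r =>
        if e ∈ A then (if r = c0 e then 1 else 0) else wgt θ (T c0 e) r
      have hv : ∀ e r, 0 ≤ v e r := by
        intro e r
        simp only [v]
        split_ifs
        · exact zero_le_one
        · exact le_rfl
        · exact (wgt_pos hk θ h0 h1 _ _).le
      calc ∑ c ∈ P.filter (fun c => rkey A c = a), ∏ e ∈ Aᶜ, wgt θ (T c e) (c e)
          ≤ ∑ c ∈ P.filter (fun c => rkey A c = a), ∏ e, v e (c e) := by
            refine Finset.sum_le_sum fun c hc => ?_
            rw [Finset.mem_filter] at hc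
            have hcc : rkey A c = rkey A c0 := hc.2.trans hc0.2.symm
            rw [← Finset.prod_mul_prod_compl A (fun e => v e (c e))]
            have e1 : ∏ e ∈ A, v e (c e) = 1 := by
              refine Finset.prod_eq_one fun e he => ?_
              simp [v, he, rkey_eq.1 hcc e he]
            rw [e1, one_mul]
            refine le_of_eq (Finset.prod_congr rfl fun e he => ?_)
            rw [Finset.mem_compl] at he
            simp only [v, he, if_false]
            rw [hT c hc.1 c0 hc0.1 hcc]
        _ ≤ ∑ c : E → Fin k, ∏ e, v e (c e) :=
            Finset.sum_le_sum_of_subset_of_nonneg (Finset.subset_univ _)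
              fun c _ _ => Finset.prod_nonneg fun e _ => hv _ _
        _ = ∏ e, ∑ r, v e r := by
            rw [Finset.prod_univ_sum]
            simp
        _ = 1 := by
            refine Finset.prod_eq_one fun e _ => ?_
            by_cases he : e ∈ A
            · simp [v, he]
            · simp only [v, he, if_false]
              exact sum_wgt hk θ _ (hTn c0 hc0.1 e)
    refine (Finset.sum_le_sum fun a _ => hfib a).trans ?_
    simp
  have := gibbs_core P hP _ (fun c => Finset.prod_pos fun e _ =>
    wgt_pos hk θ h0 h1 (T c e) (c e)) _ (by positivity) key
  rw [Real.log_pow] at this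
  refine this.trans (le_of_eq ?_)
  congr 1
  refine Finset.sum_congr rfl fun c _ => ?_
  rw [Real.log_prod (fun e _ => (wgt_pos hk θ h0 h1 _ _).ne'), Finset.sum_neg_distrib]

/-! ### Conditional colour probabilities and the associated templates -/

/-- Conditional probability that edge `e` has colour `r` given the colours on `A`. -/
def gcol {E : Type*} {k : ℕ} (P : Finset (E → Fin k)) (A : Finset E) (e : E) (r : Fin k)
    (c : E → Fin k) : ℝ :=
  condE P (rkey A) (fun c' => if c' e = r then 1 else 0) c

open Classical in
/-- The set of colours of weight at least `η`. -/
def tplOf {k : ℕ} (η : ℝ) (v : Fin k → ℝ) : Finset (Fin k) :=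
  Finset.univ.filter (fun r => η ≤ v r)

/-- The template of colours of conditional probability at least `η`. -/
def tpl {E : Type*} {k : ℕ} (P : Finset (E → Fin k)) (A : Finset E) (η : ℝ)
    (c : E → Fin k) (e : E) : Finset (Fin k) :=
  tplOf η (fun r => gcol P A e r c)

lemma mem_tpl {E : Type*} {k : ℕ} {P : Finset (E → Fin k)} {A : Finset E} {η : ℝ}
    {c : E → Fin k} {e : E} {r : Fin k} : r ∈ tpl P A η c e ↔ η ≤ gcol P A e r c := by
  simp [tpl, tplOf]

section Col

variable {E : Type*} {k : ℕ} (P : Finset (E → Fin k)) (A : Finset E)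

lemma gcol_nonneg (e : E) (r : Fin k) (c : E → Fin k) : 0 ≤ gcol P A e r c :=
  condE_nonneg _ _ _ (fun c => by split_ifs <;> norm_num) c

lemma gcol_le_one (e : E) (r : Fin k) (c : E → Fin k) : gcol P A e r c ≤ 1 :=
  condE_le_one _ _ _ (fun c => by split_ifs <;> norm_num) c

lemma sum_gcol (e : E) (c : E → Fin k) (hc : c ∈ P) : ∑ r, gcol P A e r c = 1 := by
  classical
  unfold gcol condE
  rw [← Finset.sum_div, Finset.sum_comm]
  have h3 : ((P.filter (fun d => rkey A d = rkey A c)).card : ℝ) ≠ 0 := by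
    have : 0 < (P.filter (fun d => rkey A d = rkey A c)).card :=
      Finset.card_pos.mpr ⟨c, by simp [hc]⟩
    positivity
  rw [div_eq_one_iff_eq]
  · simp
  · convert h3

lemma tpl_kmeas (η : ℝ) : KMeas P (rkey A) (tpl P A η) := by
  intro c hc c' hc' h
  funext e
  unfold tpl
  have : ∀ r, gcol P A e r c = gcol P A e r c' := fun r => condE_congr P (rkey A) _ h
  simp only [this]

lemma tpl_nonempty (hk : 2 ≤ k) (η : ℝ) (hη : η ≤ 1 / k) (c : E → Fin k) (hc : c ∈ P) (e : E) :
    (tpl P A η c e).Nonempty := by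
  by_contra hne
  rw [Finset.not_nonempty_iff_eq_empty] at hne
  have hkpos : (0 : ℝ) < k := by positivity
  have hlt : ∀ r, gcol P A e r c < η := by
    intro r
    by_contra hr
    push Not at hr
    have : r ∈ tpl P A η c e := mem_tpl.2 hr
    rw [hne] at this
    simp at this
  have h1 := sum_gcol P A e c hc
  have : ∑ r, gcol P A e r c < ∑ _r : Fin k, η :=
    Finset.sum_lt_sum_of_nonempty ⟨⟨0, by omega⟩, Finset.mem_univ _⟩ fun r _ => hlt r
  rw [h1] at this
  simp at this
  rw [le_div_iff₀ hkpos] at hη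
  linarith

lemma sum_notMem_tpl (η : ℝ) (hη : 0 < η) (e : E) :
    ∑ c ∈ P, (if c e ∈ tpl P A η c e then (0 : ℝ) else 1) ≤ P.card * (k * η) := by
  classical
  have h1 : ∀ c ∈ P, (if c e ∈ tpl P A η c e then (0 : ℝ) else 1)
      = ∑ r, (if c e = r then (1 : ℝ) else 0) * (if η ≤ gcol P A e r c then 0 else 1) := by
    intro c _
    simp only [mem_tpl, Finset.mem_univ, ite_mul, one_mul, zero_mul,
      Finset.sum_ite_eq, if_true]
  rw [Finset.sum_congr rfl h1, Finset.sum_comm]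
  have h2 : ∀ r, ∑ c ∈ P, (if c e = r then (1 : ℝ) else 0) * (if η ≤ gcol P A e r c then 0 else 1)
      ≤ P.card * η := by
    intro r
    rw [← sum_condE_mul P (rkey A) (fun c => if c e = r then (1 : ℝ) else 0)
      (fun c => if η ≤ gcol P A e r c then 0 else 1)]
    · rw [← nsmul_eq_mul, ← Finset.sum_const]
      refine Finset.sum_le_sum fun c _ => ?_
      show gcol P A e r c * _ ≤ η
      split_ifs with h
      · simp [hη.le]
      · push Not at h
        linarith
    · intro c _ c' _ h
      have : gcol P A e r c = gcol P A e r c' := condE_congr P (rkey A) _ h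
      simp only [this]
  refine (Finset.sum_le_sum fun r _ => h2 r).trans (le_of_eq ?_)
  simp
  ring

lemma entropy_bound [Fintype E] [DecidableEq E] (hk : 2 ≤ k) (hP : P.Nonempty)
    (θ : ℝ) (h0 : 0 < θ) (h1 : θ < 1) (η : ℝ) (hη : 0 < η) (hη' : η ≤ 1 / k) :
    P.card * Real.log P.card ≤ P.card * (A.card * Real.log k)
      + ∑ e ∈ Aᶜ, ∑ c ∈ P, Real.log (tpl P A η c e).card
      + P.card * (Fintype.card E * (-Real.log (1 - θ) + k * η * Real.log (k / θ))) := by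
  have hkpos : (2 : ℝ) ≤ k := by exact_mod_cast hk
  have hlog : 0 ≤ Real.log (k / θ) := by
    apply Real.log_nonneg
    rw [le_div_iff₀ h0]; linarith
  have hlog1 : 0 ≤ -Real.log (1 - θ) := by
    have := Real.log_nonpos (x := 1 - θ) (by linarith) (by linarith)
    linarith
  have hg := gibbs hk P hP A (tpl P A η) (tpl_kmeas P A η)
    (fun c hc e => tpl_nonempty P A hk η hη' c hc e) θ h0 h1
  refine hg.trans ?_
  rw [Finset.sum_comm, add_assoc]
  refine add_le_add le_rfl ?_
  have hstep : ∀ e ∈ Aᶜ, ∑ c ∈ P, -Real.log (wgt θ (tpl P A η c e) (c e))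
      ≤ ∑ c ∈ P, Real.log (tpl P A η c e).card
        + P.card * (-Real.log (1 - θ) + k * η * Real.log (k / θ)) := by
    intro e _
    calc _ ≤ ∑ c ∈ P, (Real.log (tpl P A η c e).card - Real.log (1 - θ)
      + (if c e ∈ tpl P A η c e then 0 else 1) * Real.log (k / θ)) :=
          Finset.sum_le_sum fun c hc => neg_log_wgt_le hk θ h0 h1 _
            (tpl_nonempty P A hk η hη' c hc e) _
      _ = ∑ c ∈ P, Real.log (tpl P A η c e).card + P.card * (-Real.log (1 - θ))
          + (∑ c ∈ P, (if c e ∈ tpl P A η c e then (0 : ℝ) else 1)) * Real.log (k / θ) := by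
          rw [Finset.sum_add_distrib, Finset.sum_sub_distrib, Finset.sum_mul]
          simp
          ring
      _ ≤ _ := by
          have := mul_le_mul_of_nonneg_right (sum_notMem_tpl P A η hη e) hlog
          linarith
  refine (Finset.sum_le_sum hstep).trans ?_
  rw [Finset.sum_add_distrib, Finset.sum_const, nsmul_eq_mul]
  refine add_le_add le_rfl ?_
  have hc : ((Aᶜ).card : ℝ) ≤ Fintype.card E := by
    exact_mod_cast Finset.card_le_univ _
  have hnn : 0 ≤ -Real.log (1 - θ) + k * η * Real.log (k / θ) := by positivity
  calc _ ≤ (Fintype.card E : ℝ) * (P.card * (-Real.log (1 - θ) + k * η * Real.log (k / θ))) :=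
        mul_le_mul_of_nonneg_right hc (by positivity)
    _ = _ := by ring

/-! ### Relabelling -/

lemma image_relabel (τ : Equiv.Perm E) (hτ : ∀ c ∈ P, (fun e => c (τ e)) ∈ P) [DecidableEq (E → Fin k)]:
    P.image (fun c e => c (τ e)) = P := by
  apply Finset.eq_of_subset_of_card_le
  · intro c hc
    rw [Finset.mem_image] at hc
    obtain ⟨d, hd, rfl⟩ := hc
    exact hτ d hd
  · rw [Finset.card_image_of_injective]
    intro c d h
    funext e
    have := congrFun h (τ.symm e)
    simpa using this

lemma relabel_inj (τ : Equiv.Perm E) : Function.Injective (fun (c : E → Fin k) e => c (τ e)) := by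
  intro c d h
  funext e
  have := congrFun h (τ.symm e)
  simpa using this

lemma sum_relabel (τ : Equiv.Perm E) (hτ : ∀ c ∈ P, (fun e => c (τ e)) ∈ P)
    (F : (E → Fin k) → ℝ) : ∑ c ∈ P, F (fun e => c (τ e)) = ∑ c ∈ P, F c := by
  classical
  conv_rhs => rw [← image_relabel P τ hτ]
  rw [Finset.sum_image fun c _ d _ h => relabel_inj τ h]

lemma gcol_relabel (τ : Equiv.Perm E) (hτ : ∀ c ∈ P, (fun e => c (τ e)) ∈ P)
    (A' : Finset E) (hA : ∀ e, e ∈ A ↔ τ e ∈ A') (e : E) (r : Fin k) (c : E → Fin k) :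
    gcol P A' (τ e) r c = gcol P A e r (fun e => c (τ e)) := by
  classical
  have hk : ∀ d, rkey A' d = rkey A' c ↔ rkey A (fun e => d (τ e)) = rkey A (fun e => c (τ e)) := by
    intro d
    rw [rkey_eq, rkey_eq]
    constructor
    · intro h e he
      exact h _ ((hA e).1 he)
    · intro h e he
      have := h (τ.symm e) ((hA _).2 (by simpa using he))
      simpa using this
  unfold gcol condE
  have h1 : ∀ F : (E → Fin k) → ℝ,
      ∑ d ∈ P.filter (fun d => rkey A' d = rkey A' c), F (fun e => d (τ e))
      = ∑ d ∈ P.filter (fun d => rkey A d = rkey A (fun e => c (τ e))), F d := by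
    intro F
    rw [Finset.sum_filter, Finset.sum_filter,
      ← sum_relabel P τ hτ (fun d => if rkey A d = rkey A (fun e => c (τ e)) then F d else 0)]
    refine Finset.sum_congr rfl fun d _ => ?_
    simp only [hk]
  have h2 := h1 (fun _ => 1)
  have h3 := h1 (fun d => if d e = r then 1 else 0)
  simp only [Finset.sum_const, nsmul_eq_mul, mul_one] at h2
  congr 1
  · convert h3
  · have h2' : (P.filter (fun d => rkey A' d = rkey A' c)).card
        = (P.filter (fun d => rkey A d = rkey A (fun e => c (τ e)))).card := by exact_mod_cast h2
    congr 1
    convert h2'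

lemma sum_gcol_relabel (τ : Equiv.Perm E) (hτ : ∀ c ∈ P, (fun e => c (τ e)) ∈ P)
    (A' : Finset E) (hA : ∀ e, e ∈ A ↔ τ e ∈ A') (e : E) (F : (Fin k → ℝ) → ℝ) :
    ∑ c ∈ P, F (fun r => gcol P A' (τ e) r c) = ∑ c ∈ P, F (fun r => gcol P A e r c) := by
  rw [← sum_relabel P τ hτ (fun c => F (fun r => gcol P A e r c))]
  refine Finset.sum_congr rfl fun c _ => ?_
  simp only [gcol_relabel P A τ hτ A' hA e]

end Col

/-! ### Edges of complete graphs -/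

/-- The map on edges induced by an injection of vertices. -/
def edgeMap {N n : ℕ} (ψ : Fin N → Fin n) (hψ : Function.Injective ψ) (e : EdgeType N) :
    EdgeType n :=
  edgeOf (ψ e.val.1) (ψ e.val.2) fun h => (ne_of_lt e.prop) (hψ h)

lemma edgeOf_cases {n : ℕ} (i j : Fin n) (h : i ≠ j) :
    ((edgeOf i j h).val.1 = i ∧ (edgeOf i j h).val.2 = j) ∨
    ((edgeOf i j h).val.1 = j ∧ (edgeOf i j h).val.2 = i) := by
  by_cases hij : i < j
  · have h3 : edgeOf i j h = ⟨(i, j), hij⟩ := dif_pos hij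
    rw [h3]
    exact Or.inl ⟨rfl, rfl⟩
  · have h3 : edgeOf i j h = ⟨(j, i), (not_lt.mp hij).lt_of_ne' h⟩ := dif_neg hij
    rw [h3]
    exact Or.inr ⟨rfl, rfl⟩

lemma EdgeType.ext' {n : ℕ} {e e' : EdgeType n} (h1 : e.val.1 = e'.val.1)
    (h2 : e.val.2 = e'.val.2) : e = e' :=
  Subtype.ext (Prod.ext h1 h2)

lemma edgeMap_injective {N n : ℕ} (ψ : Fin N → Fin n) (hψ : Function.Injective ψ) :
    Function.Injective (edgeMap ψ hψ) := by
  intro e e' h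
  have h1 := edgeOf_cases (ψ e.val.1) (ψ e.val.2) fun h => (ne_of_lt e.prop) (hψ h)
  have h2 := edgeOf_cases (ψ e'.val.1) (ψ e'.val.2) fun h => (ne_of_lt e'.prop) (hψ h)
  have l1 := e.prop
  have l2 := e'.prop
  unfold edgeMap at h
  rw [h] at h1
  rcases h1 with ⟨a1, a2⟩ | ⟨a1, a2⟩ <;> rcases h2 with ⟨b1, b2⟩ | ⟨b1, b2⟩
  · exact EdgeType.ext' (hψ (a1.symm.trans b1)) (hψ (a2.symm.trans b2))
  · have c1 := hψ (a1.symm.trans b1)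
    have c2 := hψ (a2.symm.trans b2)
    rw [c1, c2] at l1
    exact absurd l1 (lt_asymm l2)
  · have c1 := hψ (a1.symm.trans b1)
    have c2 := hψ (a2.symm.trans b2)
    rw [c1, c2] at l1
    exact absurd l1 (lt_asymm l2)
  · exact EdgeType.ext' (hψ (a2.symm.trans b2)) (hψ (a1.symm.trans b1))

/-- The permutation of edges induced by a permutation of vertices. -/
def edgePerm {N : ℕ} (σ : Equiv.Perm (Fin N)) : Equiv.Perm (EdgeType N) :=
  Equiv.ofBijective (edgeMap σ σ.injective)
    ((Finite.injective_iff_bijective).1 (edgeMap_injective σ σ.injective))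

/-- Edges meeting the vertex set `U`. -/
def touch {N : ℕ} (U : Finset (Fin N)) : Finset (EdgeType N) :=
  Finset.univ.filter (fun e => e.val.1 ∈ U ∨ e.val.2 ∈ U)

lemma mem_touch {N : ℕ} {U : Finset (Fin N)} {e : EdgeType N} :
    e ∈ touch U ↔ e.val.1 ∈ U ∨ e.val.2 ∈ U := by
  simp [touch]

lemma edgeMap_mem_touch {N n : ℕ} (ψ : Fin N → Fin n) (hψ : Function.Injective ψ)
    (e : EdgeType N) (U : Finset (Fin n)) :
    edgeMap ψ hψ e ∈ touch U ↔ ψ e.val.1 ∈ U ∨ ψ e.val.2 ∈ U := by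
  rw [mem_touch]
  unfold edgeMap
  rcases edgeOf_cases (ψ e.val.1) (ψ e.val.2) fun h => (ne_of_lt e.prop) (hψ h) with
    ⟨a, b⟩ | ⟨a, b⟩ <;> rw [a, b]
  exact or_comm

lemma edgeMap_eq {N n : ℕ} (ψ : Fin N → Fin n) (hψ : Function.Injective ψ)
    (e : EdgeType N) (e' : EdgeType n) (h1 : ψ e.val.1 = e'.val.1) (h2 : ψ e.val.2 = e'.val.2) :
    edgeMap ψ hψ e = e' := by
  have l := e'.prop
  rw [← h1, ← h2] at l
  have h3 : edgeMap ψ hψ e = ⟨(ψ e.val.1, ψ e.val.2), l⟩ := dif_pos l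
  rw [h3]
  exact EdgeType.ext' h1 h2

lemma card_edgeType (N : ℕ) : Fintype.card (EdgeType N) = N.choose 2 := by
  have h : Fintype.card (EdgeType N) = ((Finset.univ : Finset (Fin N)).powersetCard 2).card := by
    rw [← Finset.card_univ]
    refine Finset.card_bij (fun e _ => {e.val.1, e.val.2}) ?_ ?_ ?_
    · intro e _
      simp [Finset.mem_powersetCard, Finset.card_pair (ne_of_lt e.prop)]
    · intro e _ e' _ h
      have l1 := e.prop
      have l2 := e'.prop
      have m1 : e.val.1 ∈ ({e'.val.1, e'.val.2} : Finset (Fin N)) := by rw [← h]; simp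
      have m2 : e.val.2 ∈ ({e'.val.1, e'.val.2} : Finset (Fin N)) := by rw [← h]; simp
      simp only [Finset.mem_insert, Finset.mem_singleton] at m1 m2
      apply EdgeType.ext' <;> rcases m1 with m1 | m1 <;> rcases m2 with m2 | m2 <;> grind
    · intro s hs
      rw [Finset.mem_powersetCard] at hs
      obtain ⟨a, b, hab, rfl⟩ := Finset.card_eq_two.1 hs.2
      rcases lt_or_gt_of_ne hab with h | h
      · exact ⟨⟨(a, b), h⟩, Finset.mem_univ _, rfl⟩
      · exact ⟨⟨(b, a), h⟩, Finset.mem_univ _, Finset.pair_comm _ _⟩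
  rw [h]
  simp

lemma card_touch_le {N : ℕ} (U : Finset (Fin N)) : (touch U).card ≤ U.card * N := by
  have : (touch U).card ≤ (U ×ˢ (Finset.univ : Finset (Fin N))).card := by
    refine Finset.card_le_card_of_injOn
      (fun e => if e.val.1 ∈ U then (e.val.1, e.val.2) else (e.val.2, e.val.1)) ?_ ?_
    · intro e he
      have he' := mem_touch.1 he
      simp only [Finset.coe_product, Set.mem_prod]
      split_ifs with h
      · simp [h]
      · simp [he'.resolve_left h]
    · intro e _ e' _ h
      have l1 := e.prop
      have l2 := e'.prop
      dsimp only at h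
      split_ifs at h <;> simp only [Prod.mk.injEq] at h
      · exact EdgeType.ext' h.1 h.2
      · rw [h.1, h.2] at l1; exact absurd l1 (lt_asymm l2)
      · rw [h.1, h.2] at l1; exact absurd l1 (lt_asymm l2)
      · exact EdgeType.ext' h.2 h.1
  simpa using this

lemma exists_perm {N : ℕ} (U U' : Finset (Fin N)) (hU : U.card = U'.card) (a b a' b' : Fin N)
    (hab : a ≠ b) (hab' : a' ≠ b') (ha : a ∉ U) (hb : b ∉ U) (ha' : a' ∉ U') (hb' : b' ∉ U') :
    ∃ σ : Equiv.Perm (Fin N), (∀ x, x ∈ U ↔ σ x ∈ U') ∧ σ a = a' ∧ σ b = b' := by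
  have e0 : {x // x ∈ U} ≃ {x // x ∈ U'} := Fintype.equivOfCardEq (by simpa using hU)
  let σ0 : Equiv.Perm (Fin N) := e0.extendSubtype
  have h0 : ∀ x, x ∈ U ↔ σ0 x ∈ U' := by
    intro x
    constructor
    · exact fun hx => e0.extendSubtype_mem x hx
    · intro hx
      by_contra hn
      exact e0.extendSubtype_not_mem x hn hx
  have hsw : ∀ (x y z : Fin N), x ∉ U' → y ∉ U' → (z ∈ U' ↔ Equiv.swap x y z ∈ U') := by
    intro x y z hx hy
    rcases eq_or_ne z x with rfl | hzx
    · simp [hx, hy]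
    rcases eq_or_ne z y with rfl | hzy
    · simp [hx, hy]
    rw [Equiv.swap_apply_of_ne_of_ne hzx hzy]
  have g1 : σ0 a ∉ U' := fun h => ha ((h0 a).2 h)
  have g2 : σ0 b ∉ U' := fun h => hb ((h0 b).2 h)
  let σ1 : Equiv.Perm (Fin N) := σ0.trans (Equiv.swap (σ0 a) a')
  have h1 : ∀ x, x ∈ U ↔ σ1 x ∈ U' := fun x => (h0 x).trans (hsw _ _ _ g1 ha')
  have e1 : σ1 a = a' := by simp [σ1]
  have g3 : σ1 b ∉ U' := fun h => hb ((h1 b).2 h)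
  refine ⟨σ1.trans (Equiv.swap (σ1 b) b'), fun x => (h1 x).trans (hsw _ _ _ g3 hb'), ?_, ?_⟩
  · simp only [Equiv.trans_apply, e1]
    refine Equiv.swap_apply_of_ne_of_ne ?_ hab'
    rw [← e1]
    exact fun h => hab (σ1.injective h)
  · simp

lemma sum_gcol_symm {k N : ℕ} (P : Finset (EdgeType N → Fin k))
    (hP : ∀ (σ : Equiv.Perm (Fin N)), ∀ c ∈ P, inducedCol σ σ.injective c ∈ P)
    (U U' : Finset (Fin N)) (hU : U.card = U'.card) (e e' : EdgeType N)
    (he : e ∉ touch U) (he' : e' ∉ touch U') (F : (Fin k → ℝ) → ℝ) :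
    ∑ c ∈ P, F (fun r => gcol P (touch U') e' r c)
      = ∑ c ∈ P, F (fun r => gcol P (touch U) e r c) := by
  rw [mem_touch] at he he'
  push Not at he he'
  obtain ⟨σ, h1, h2, h3⟩ := exists_perm U U' hU e.val.1 e.val.2 e'.val.1 e'.val.2
    (ne_of_lt e.prop) (ne_of_lt e'.prop) he.1 he.2 he'.1 he'.2
  have : edgePerm σ e = e' := edgeMap_eq σ σ.injective e e' h2 h3
  rw [← this]
  refine sum_gcol_relabel P (touch U) (edgePerm σ) (fun c hc => hP σ c hc) (touch U') ?_ e F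
  intro x
  rw [mem_touch, h1, h1]
  exact (edgeMap_mem_touch σ σ.injective x U').symm

/-! ### Templates and extremal entropy -/

lemma templateEnt_eq {k n : ℕ} (t : EdgeType n → Finset (Fin k))
    (ht : ∀ e, (t e).Nonempty) :
    templateEnt t = (∑ e, Real.log (t e).card) / Real.log k := by
  unfold templateEnt Real.logb
  rw [Real.log_prod]
  intro e _
  have := (ht e).card_pos
  positivity

lemma templateEnt_nonneg {k n : ℕ} (t : EdgeType n → Finset (Fin k))
    (ht : ∀ e, (t e).Nonempty) : 0 ≤ templateEnt t := by
  rw [templateEnt_eq t ht]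
  refine div_nonneg (Finset.sum_nonneg fun e _ => ?_) (Real.log_natCast_nonneg k)
  exact Real.log_natCast_nonneg _

lemma templateEnt_le {k n : ℕ} (hk : 2 ≤ k) (t : EdgeType n → Finset (Fin k))
    (ht : ∀ e, (t e).Nonempty) : templateEnt t ≤ n.choose 2 := by
  have hlk : 0 < Real.log k := Real.log_pos (by exact_mod_cast hk)
  rw [templateEnt_eq t ht, div_le_iff₀ hlk, ← card_edgeType n, ← Finset.card_univ,
    ← nsmul_eq_mul, ← Finset.sum_const]
  refine Finset.sum_le_sum fun e _ => Real.log_le_log ?_ ?_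
  · exact_mod_cast (ht e).card_pos
  · have := Finset.card_le_univ (t e)
    rw [Fintype.card_fin] at this
    exact_mod_cast this

lemma ex_bddAbove {k : ℕ} (hk : 2 ≤ k) (P : ∀ n, Set (EdgeType n → Fin k)) (n : ℕ) :
    BddAbove {x : ℝ | ∃ t : EdgeType n → Finset (Fin k),
    (∀ e, (t e).Nonempty) ∧ realisations t ⊆ P n ∧ x = templateEnt t} := by
  refine ⟨n.choose 2, ?_⟩
  rintro x ⟨t, ht, _, rfl⟩
  exact templateEnt_le hk t ht

lemma templateEnt_le_ex {k : ℕ} (hk : 2 ≤ k) (P : ∀ n, Set (EdgeType n → Fin k)) (n : ℕ)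
    (t : EdgeType n → Finset (Fin k)) (ht : ∀ e, (t e).Nonempty) (h : realisations t ⊆ P n) :
    templateEnt t ≤ exTemplate P n :=
  le_csSup (ex_bddAbove hk P n) ⟨t, ht, h, rfl⟩

lemma ex_set_nonempty {k : ℕ} (P : ∀ n, Set (EdgeType n → Fin k))
    (hne : ∀ n, (P n).Nonempty) (n : ℕ) :
    {x : ℝ | ∃ t : EdgeType n → Finset (Fin k),
    (∀ e, (t e).Nonempty) ∧ realisations t ⊆ P n ∧ x = templateEnt t}.Nonempty := by
  obtain ⟨c, hc⟩ := hne n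
  refine ⟨_, fun e => {c e}, fun e => Finset.singleton_nonempty _, ?_, rfl⟩
  intro d hd
  have : d = c := funext fun e => Finset.mem_singleton.1 (hd e)
  rwa [this]

lemma ex_nonneg {k : ℕ} (hk : 2 ≤ k) (P : ∀ n, Set (EdgeType n → Fin k))
    (hne : ∀ n, (P n).Nonempty) (n : ℕ) : 0 ≤ exTemplate P n := by
  obtain ⟨x, t, ht, h, rfl⟩ := ex_set_nonempty P hne n
  exact (templateEnt_nonneg t ht).trans (templateEnt_le_ex hk P n t ht h)

lemma ex_le_log_card {k : ℕ} (hk : 2 ≤ k) (P : ∀ n, Set (EdgeType n → Fin k))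
    (hne : ∀ n, (P n).Nonempty) (n : ℕ) :
    exTemplate P n ≤ Real.log (Nat.card (P n)) / Real.log k := by
  classical
  have hlk : 0 < Real.log k := Real.log_pos (by exact_mod_cast hk)
  refine csSup_le (ex_set_nonempty P hne n) ?_
  rintro x ⟨t, ht, h, rfl⟩
  unfold templateEnt Real.logb
  refine div_le_div_of_nonneg_right ?_ hlk.le
  have h1 : (Fintype.piFinset t).card ≤ Nat.card (P n) := by
    rw [Nat.card_eq_card_toFinset (P n)]
    refine Finset.card_le_card fun c hc => ?_
    rw [Set.mem_toFinset]
    exact h fun e => Fintype.mem_piFinset.1 hc e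
  rw [Fintype.card_piFinset] at h1
  refine Real.log_le_log ?_ ?_
  · exact Finset.prod_pos fun e _ => by exact_mod_cast (ht e).card_pos
  · exact_mod_cast h1

/-! ### The main finite estimate -/

/-- Energy of the conditional colour distribution. -/
def energy {k N : ℕ} (P : Finset (EdgeType N → Fin k)) (U : Finset (Fin N)) (e : EdgeType N) : ℝ :=
  ∑ c ∈ P, ∑ r, gcol P (touch U) e r c ^ 2

lemma energy_nonneg {k N : ℕ} (P : Finset (EdgeType N → Fin k)) (U : Finset (Fin N))
    (e : EdgeType N) : 0 ≤ energy P U e :=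
  Finset.sum_nonneg fun _ _ => Finset.sum_nonneg fun _ _ => sq_nonneg _

lemma energy_le {k N : ℕ} (P : Finset (EdgeType N → Fin k)) (U : Finset (Fin N))
    (e : EdgeType N) : energy P U e ≤ P.card := by
  unfold energy
  have : (P.card : ℝ) = ∑ c ∈ P, 1 := by simp
  rw [this]
  refine Finset.sum_le_sum fun c hc => ?_
  rw [← sum_gcol P (touch U) e c hc]
  refine Finset.sum_le_sum fun r _ => ?_
  have h0 := gcol_nonneg P (touch U) e r c
  have h1 := gcol_le_one P (touch U) e r c
  nlinarith

lemma exists_small_step (φ : ℕ → ℝ) (p : ℝ) (M : ℕ) (hM : 0 < M) (h0 : 0 ≤ φ 0) (h1 : φ M ≤ p) :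
    ∃ j < M, φ (j + 1) - φ j ≤ p / M := by
  by_contra hcon
  push Not at hcon
  have h2 : ∑ j ∈ Finset.range M, p / M < ∑ j ∈ Finset.range M, (φ (j + 1) - φ j) :=
    Finset.sum_lt_sum_of_nonempty ⟨0, by simpa using hM⟩ fun j hj => hcon j (by simpa using hj)
  rw [Finset.sum_range_sub] at h2
  have hM' : (M : ℝ) ≠ 0 := by positivity
  simp at h2
  rw [mul_div_cancel₀ _ hM'] at h2
  linarith

lemma rkey_refine {k N : ℕ} (P : Finset (EdgeType N → Fin k)) (U U' : Finset (Fin N))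
    (h : U ⊆ U') : KMeas P (rkey (touch U')) (rkey (touch U)) := by
  intro c _ c' _ hcc
  rw [rkey_eq] at hcc ⊢
  intro e he
  refine hcc e ?_
  rw [mem_touch] at he ⊢
  exact he.imp (fun x => h x) (fun x => h x)

lemma sum_abs_step {k N : ℕ} (P : Finset (EdgeType N → Fin k)) (U U' : Finset (Fin N))
    (h : U ⊆ U') (e : EdgeType N) (δ : ℝ) (hδ : energy P U' e - energy P U e ≤ δ * P.card)
    (r : Fin k) :
    ∑ c ∈ P, |gcol P (touch U') e r c - gcol P (touch U) e r c| ≤ P.card * Real.sqrt δ := by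
  apply sum_abs_le_sqrt
  refine le_trans ?_ hδ
  unfold energy
  rw [Finset.sum_comm, Finset.sum_comm (s := P) (t := Finset.univ), ← Finset.sum_sub_distrib]
  have hr : ∀ r, ∑ c ∈ P, gcol P (touch U') e r c ^ 2 - ∑ c ∈ P, gcol P (touch U) e r c ^ 2
      = ∑ c ∈ P, (gcol P (touch U') e r c - gcol P (touch U) e r c) ^ 2 := fun r =>
    (sum_sq_condE_sub P (rkey (touch U)) (rkey (touch U')) _ (rkey_refine P U U' h)).symm
  rw [Finset.sum_congr rfl fun r _ => hr r]
  exact Finset.single_le_sum (f := fun r =>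
    ∑ c ∈ P, (gcol P (touch U') e r c - gcol P (touch U) e r c) ^ 2)
    (fun r _ => Finset.sum_nonneg fun _ _ => sq_nonneg _) (Finset.mem_univ r)

lemma edge_endpoint {n : ℕ} (i j : EdgeType n) (h : i ≠ j) :
    (i.val.1 ≠ j.val.1 ∧ i.val.1 ≠ j.val.2) ∨ (i.val.2 ≠ j.val.1 ∧ i.val.2 ≠ j.val.2) := by
  have l1 := i.prop
  have l2 := j.prop
  by_contra hcon
  apply h
  apply EdgeType.ext' <;> grind

/-- Probability bound for templates with a bad realisation. -/
lemma bad_template {k N n : ℕ} (P : Finset (EdgeType N → Fin k)) (U : Finset (Fin N))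
    (ι : Fin n → Fin N) (hι : Function.Injective ι)
    (δ : ℝ) (η : ℝ) (hη : 0 < η)
    (hδ : ∀ i : EdgeType n,
      energy P (U ∪ (Finset.univ \ {i.val.1, i.val.2}).image ι) (edgeMap ι hι i)
        - energy P U (edgeMap ι hι i) ≤ δ * P.card)
    (ρ : EdgeType n → Fin k) (hρ : ∀ c ∈ P, inducedCol ι hι c ≠ ρ)
    (t : EdgeType n → Finset (Fin k)) (ht : ∀ e, ρ e ∈ t e) :
    ((P.filter (fun c => (fun i => tpl P (touch U) η c (edgeMap ι hι i)) = t)).card : ℝ)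
      * η ^ (n.choose 2) ≤ n.choose 2 * (P.card * Real.sqrt δ) := by
  classical
  let f : EdgeType n → (EdgeType N → Fin k) → ℝ := fun i c =>
    if c (edgeMap ι hι i) = ρ i then 1 else 0
  let H : (EdgeType N → Fin k) → ℝ := fun c =>
    if (fun i => tpl P (touch U) η c (edgeMap ι hι i)) = t then 1 else 0
  let B : EdgeType n → Finset (Fin N) := fun i =>
    U ∪ (Finset.univ \ {i.val.1, i.val.2}).image ι
  have hm : Fintype.card (EdgeType n) = n.choose 2 := card_edgeType n
  have hf0 : ∀ i c, 0 ≤ f i c := fun i c => by simp only [f]; split_ifs <;> norm_num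
  have hf1 : ∀ i c, f i c ≤ 1 := fun i c => by simp only [f]; split_ifs <;> norm_num
  have hH0 : ∀ c, 0 ≤ H c := fun c => by simp only [H]; split_ifs <;> norm_num
  have hH1 : ∀ c, H c ≤ 1 := fun c => by simp only [H]; split_ifs <;> norm_num
  have hdec := decouple P (rkey (touch U)) (fun i => rkey (touch (B i))) f hf0 hf1
    (by
      intro i j hij c _ c' _ h
      rw [rkey_eq] at h
      have : edgeMap ι hι i ∈ touch (B j) := by
        rw [edgeMap_mem_touch]
        rcases edge_endpoint i j hij with hh | hh
        · left
          refine Finset.mem_union_right _ (Finset.mem_image_of_mem _ ?_)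
          simp [hh.1, hh.2]
        · right
          refine Finset.mem_union_right _ (Finset.mem_image_of_mem _ ?_)
          simp [hh.1, hh.2]
      simp only [f, h _ this])
    (fun j => rkey_refine P U (B j) Finset.subset_union_left)
    (P.card * Real.sqrt δ)
    (fun j => sum_abs_step P U (B j) Finset.subset_union_left (edgeMap ι hι j) δ (hδ j) (ρ j))
    Finset.univ H
    (by
      intro c hc c' hc' h
      simp only [H, tpl_kmeas P (touch U) η c hc c' hc' h])
    hH0 hH1
  rw [Finset.card_univ, hm] at hdec
  have hz : ∑ c ∈ P, H c * ∏ i, f i c = 0 := by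
    refine Finset.sum_eq_zero fun c hc => ?_
    have hne := hρ c hc
    have : ∃ i, c (edgeMap ι hι i) ≠ ρ i := by
      by_contra hcon
      push Not at hcon
      exact hne (funext hcon)
    obtain ⟨i, hi⟩ := this
    rw [Finset.prod_eq_zero (Finset.mem_univ i) (by simp only [f]; rw [if_neg hi]), mul_zero]
  rw [hz, zero_add] at hdec
  refine le_trans ?_ hdec
  rw [← nsmul_eq_mul, ← Finset.sum_const, Finset.sum_filter]
  refine Finset.sum_le_sum fun c _ => ?_
  simp only [H]
  split_ifs with hT
  · rw [one_mul, ← hm, ← Finset.card_univ, ← Finset.prod_const]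
    refine Finset.prod_le_prod (fun _ _ => hη.le) fun i _ => ?_
    have h1 : ρ i ∈ tpl P (touch U) η c (edgeMap ι hι i) := by
      rw [congrFun hT i]
      exact ht i
    exact mem_tpl.1 h1
  · simp

lemma sum_ent_le {k N n : ℕ} (hk : 2 ≤ k) (Q : ∀ n, Set (EdgeType n → Fin k))
    (hQ : HereditaryK k Q) (hne : ∀ n, (Q n).Nonempty)
    (P : Finset (EdgeType N → Fin k)) (hPQ : ∀ c, c ∈ P ↔ c ∈ Q N) (U : Finset (Fin N))
    (ι : Fin n → Fin N) (hι : Function.Injective ι)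
    (δ : ℝ) (η : ℝ) (hη : 0 < η) (hη' : η ≤ 1 / k)
    (hδ : ∀ i : EdgeType n,
      energy P (U ∪ (Finset.univ \ {i.val.1, i.val.2}).image ι) (edgeMap ι hι i)
        - energy P U (edgeMap ι hι i) ≤ δ * P.card) :
    ∑ c ∈ P, templateEnt (fun i => tpl P (touch U) η c (edgeMap ι hι i))
      ≤ P.card * (exTemplate Q n + n.choose 2 * (Fintype.card (EdgeType n → Finset (Fin k)) *
        (n.choose 2 * Real.sqrt δ / η ^ (n.choose 2)))) := by
  classical
  set T : (EdgeType N → Fin k) → EdgeType n → Finset (Fin k) :=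
    fun c i => tpl P (touch U) η c (edgeMap ι hι i) with hTdef
  have hTn : ∀ c ∈ P, ∀ e, (T c e).Nonempty := fun c hc e =>
    tpl_nonempty P (touch U) hk η hη' c hc _
  have hex := ex_nonneg hk Q hne n
  have h1 : ∀ c ∈ P, templateEnt (T c) ≤ exTemplate Q n
      + n.choose 2 * (if realisations (T c) ⊆ Q n then 0 else 1) := by
    intro c hc
    split_ifs with h
    · have := templateEnt_le_ex hk Q n (T c) (hTn c hc) h
      linarith
    · have := templateEnt_le hk (T c) (hTn c hc)
      linarith
  have h2 : ∑ c ∈ P, (if realisations (T c) ⊆ Q n then (0 : ℝ) else 1)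
      ≤ Fintype.card (EdgeType n → Finset (Fin k)) *
        (P.card * (n.choose 2 * Real.sqrt δ / η ^ (n.choose 2))) := by
    rw [← Finset.sum_fiberwise (s := P) (g := T), ← Finset.card_univ, ← nsmul_eq_mul,
      ← Finset.sum_const]
    refine Finset.sum_le_sum fun t _ => ?_
    have hrhs : 0 ≤ P.card * (n.choose 2 * Real.sqrt δ / η ^ (n.choose 2)) := by positivity
    by_cases hgood : realisations t ⊆ Q n
    · refine le_trans (le_of_eq ?_) hrhs
      refine Finset.sum_eq_zero fun c hc => ?_
      rw [(Finset.mem_filter.1 hc).2, if_pos hgood]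
    · rw [Set.not_subset] at hgood
      obtain ⟨ρ, hρ1, hρ2⟩ := hgood
      have hb := bad_template P U ι hι δ η hη hδ ρ (fun c hc h => hρ2 (by
        rw [← h]
        exact hQ n N ι hι c ((hPQ c).1 hc))) t hρ1
      have hle : ∑ c ∈ P.filter (fun c => T c = t),
          (if realisations (T c) ⊆ Q n then (0 : ℝ) else 1)
          ≤ (P.filter (fun c => T c = t)).card := by
        rw [Finset.card_eq_sum_ones]
        push_cast
        exact Finset.sum_le_sum fun c _ => by split_ifs <;> norm_num
      refine hle.trans ?_
      rw [← mul_div_assoc, le_div_iff₀ (by positivity)]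
      refine hb.trans (le_of_eq (by ring))
  refine (Finset.sum_le_sum h1).trans ?_
  rw [Finset.sum_add_distrib, ← Finset.mul_sum]
  simp only [Finset.sum_const, nsmul_eq_mul]
  have h3 := mul_le_mul_of_nonneg_left h2 (Nat.cast_nonneg (α := ℝ) (n.choose 2))
  refine (add_le_add le_rfl h3).trans (le_of_eq (by ring))

/-- The initial segment of `q` vertices. -/
def seg (N q : ℕ) : Finset (Fin N) := Finset.univ.filter (fun x => x.val < q)

lemma mem_seg {N q : ℕ} {x : Fin N} : x ∈ seg N q ↔ x.val < q := by simp [seg]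

lemma card_seg {N q : ℕ} (h : q ≤ N) : (seg N q).card = q := by
  have : seg N q = (Finset.univ : Finset (Fin q)).map (Fin.castLEEmb h) := by
    ext x
    simp only [mem_seg, Finset.mem_map, Finset.mem_univ, true_and]
    constructor
    · intro hx
      exact ⟨⟨x, hx⟩, rfl⟩
    · rintro ⟨y, rfl⟩
      exact y.2
  rw [this]
  simp

lemma main_finite {k N n M : ℕ} (hk : 2 ≤ k) (hn : 2 ≤ n) (hM : 0 < M)
    (hN : M * n + n ≤ N) (Q : ∀ n, Set (EdgeType n → Fin k))
    (hQ : HereditaryK k Q) (hne : ∀ n, (Q n).Nonempty)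
    (θ : ℝ) (h0 : 0 < θ) (h1 : θ < 1) (η : ℝ) (hη : 0 < η) (hη' : η ≤ 1 / k) :
    Real.log (Nat.card (Q N)) ≤ (M * n * N : ℝ) * Real.log k
      + N.choose 2 * (Real.log k * (exTemplate Q n / n.choose 2 +
        (Fintype.card (EdgeType n → Finset (Fin k)) *
        (n.choose 2 * Real.sqrt (1 / M) / η ^ (n.choose 2))))
        + (-Real.log (1 - θ) + k * η * Real.log (k / θ))) := by
  classical
  set P : Finset (EdgeType N → Fin k) := (Q N).toFinset with hPdef
  have hPQ : ∀ c, c ∈ P ↔ c ∈ Q N := fun c => by simp [hPdef]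
  have hcard : Nat.card (Q N) = P.card := Nat.card_eq_card_toFinset (Q N)
  have hPne : P.Nonempty := by
    obtain ⟨c, hc⟩ := hne N
    exact ⟨c, (hPQ c).2 hc⟩
  have hp : (0 : ℝ) < P.card := by exact_mod_cast hPne.card_pos
  have hsym : ∀ (σ : Equiv.Perm (Fin N)), ∀ c ∈ P, inducedCol σ σ.injective c ∈ P :=
    fun σ c hc => (hPQ _).2 (hQ N N σ σ.injective c ((hPQ c).1 hc))
  have hlk : 0 < Real.log k := Real.log_pos (by exact_mod_cast hk)
  obtain ⟨s, rfl⟩ : ∃ s, n = s + 2 := ⟨n - 2, by omega⟩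
  have hMs : M * s + s + 2 ≤ N := by nlinarith
  let e0 : EdgeType N := ⟨(⟨N - 2, by omega⟩, ⟨N - 1, by omega⟩), by
    show (N - 2 : ℕ) < N - 1
    omega⟩
  have he0 : ∀ q, q ≤ N - 2 → e0 ∉ touch (seg N q) := by
    intro q hq h
    rw [mem_touch, mem_seg, mem_seg] at h
    simp only [e0] at h
    omega
  obtain ⟨j, hj, hstep⟩ := exists_small_step (fun j => energy P (seg N (j * s)) e0) P.card M hM
    (energy_nonneg _ _ _) (energy_le _ _ _)
  have hjs : (j + 1) * s ≤ M * s := Nat.mul_le_mul_right s hj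
  have hjs' : (j + 1) * s = j * s + s := by ring
  set q := j * s with hq
  have hqN : q + s + 2 ≤ N := by omega
  set U := seg N q with hU
  have hUc : U.card = q := card_seg (by omega)
  let ι : Fin (s + 2) → Fin N := fun a => ⟨q + a, by omega⟩
  have hι : Function.Injective ι := by
    intro a b h
    have : q + a.val = q + b.val := congrArg Fin.val h
    exact Fin.ext (by omega)
  have hιU : ∀ a, ι a ∉ U := by
    intro a h
    rw [hU, mem_seg] at h
    simp only [ι] at h
    omega
  have hιt : ∀ i, edgeMap ι hι i ∉ touch U := by
    intro i h
    rw [edgeMap_mem_touch] at h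
    exact h.elim (hιU _) (hιU _)
  have hδ : ∀ i : EdgeType (s + 2),
      energy P (U ∪ (Finset.univ \ {i.val.1, i.val.2}).image ι) (edgeMap ι hι i)
        - energy P U (edgeMap ι hι i) ≤ (1 / M : ℝ) * P.card := by
    intro i
    have hlt := i.prop
    have c1 : (U ∪ (Finset.univ \ {i.val.1, i.val.2}).image ι).card = (seg N ((j + 1) * s)).card := by
      rw [card_seg (by omega), Finset.card_union_of_disjoint, hUc,
        Finset.card_image_of_injective _ hι, Finset.card_sdiff_of_subset (Finset.subset_univ _),
        Finset.card_pair (ne_of_lt hlt), Finset.card_univ, Fintype.card_fin, hjs']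
      · omega
      · rw [Finset.disjoint_left]
        intro x hx hx'
        obtain ⟨a, _, rfl⟩ := Finset.mem_image.1 hx'
        exact hιU a hx
    have c2 : edgeMap ι hι i ∉ touch (U ∪ (Finset.univ \ {i.val.1, i.val.2}).image ι) := by
      rw [edgeMap_mem_touch]
      simp only [Finset.mem_union, hιU, false_or, hι.mem_finset_image]
      simp
    have s1 := sum_gcol_symm P hsym _ _ c1 _ e0 c2 (he0 _ (by omega)) (fun v => ∑ r, v r ^ 2)
    have s2 := sum_gcol_symm P hsym U U rfl _ e0 (hιt i) (he0 _ (by omega)) (fun v => ∑ r, v r ^ 2)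
    have s3 : energy P (seg N ((j + 1) * s)) e0 = energy P
        (U ∪ (Finset.univ \ {i.val.1, i.val.2}).image ι) (edgeMap ι hι i) := s1
    have s4 : energy P U e0 = energy P U (edgeMap ι hι i) := s2
    rw [← s3, ← s4]
    refine hstep.trans (le_of_eq (by ring))
  have hent := sum_ent_le hk Q hQ hne P hPQ U ι hι (1 / M) η hη hη' hδ
  -- the common value of the expected log-sizes
  set Λ : ℝ := ∑ c ∈ P, Real.log (tpl P (touch U) η c e0).card with hΛ
  have hΛe : ∀ e, e ∉ touch U → ∑ c ∈ P, Real.log (tpl P (touch U) η c e).card = Λ := by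
    intro e he
    exact sum_gcol_symm P hsym U U rfl e0 e (he0 _ (by omega)) he
      (fun v => Real.log (tplOf η v).card)
  have hΛ0 : 0 ≤ Λ := Finset.sum_nonneg fun c _ => Real.log_natCast_nonneg _
  have hm : Fintype.card (EdgeType (s + 2)) = (s + 2).choose 2 := card_edgeType _
  have hmpos : (0 : ℝ) < (s + 2).choose 2 := by
    exact_mod_cast Nat.choose_pos (by omega)
  have hentΛ : ∑ c ∈ P, templateEnt (fun i => tpl P (touch U) η c (edgeMap ι hι i))
      = (s + 2).choose 2 * Λ / Real.log k := by
    have : ∀ c ∈ P, templateEnt (fun i => tpl P (touch U) η c (edgeMap ι hι i))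
        = (∑ i, Real.log (tpl P (touch U) η c (edgeMap ι hι i)).card) / Real.log k := fun c hc =>
      templateEnt_eq _ fun e => tpl_nonempty P (touch U) hk η hη' c hc _
    rw [Finset.sum_congr rfl this, ← Finset.sum_div, Finset.sum_comm,
      Finset.sum_congr rfl fun i _ => hΛe _ (hιt i)]
    simp [hm]
  rw [hentΛ, div_le_iff₀ hlk] at hent
  have hΛle : Λ ≤ P.card * (Real.log k * (exTemplate Q (s + 2) / (s + 2).choose 2 +
        (Fintype.card (EdgeType (s + 2) → Finset (Fin k)) *
        ((s + 2).choose 2 * Real.sqrt (1 / M) / η ^ ((s + 2).choose 2))))) := by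
    rw [← mul_le_mul_iff_right₀ hmpos]
    refine hent.trans (le_of_eq ?_)
    field_simp
  have hE := entropy_bound P (touch U) hk hPne θ h0 h1 η hη hη'
  rw [card_edgeType, Finset.sum_congr rfl fun e he => hΛe e (Finset.mem_compl.1 he),
    Finset.sum_const, nsmul_eq_mul] at hE
  have hAc : (((touch U)ᶜ).card : ℝ) ≤ N.choose 2 := by
    rw [← card_edgeType N]
    exact_mod_cast Finset.card_le_univ _
  have hA : ((touch U).card : ℝ) ≤ M * (s + 2 : ℕ) * N := by
    have a1 := card_touch_le U
    rw [hUc] at a1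
    have a2 : q * N ≤ M * (s + 2) * N := Nat.mul_le_mul_right N (by nlinarith)
    exact_mod_cast a1.trans a2
  have t1 := mul_le_mul_of_nonneg_right hAc hΛ0
  have t2 := mul_le_mul_of_nonneg_left hΛle (Nat.cast_nonneg (α := ℝ) (N.choose 2))
  have t3 := mul_le_mul_of_nonneg_left (mul_le_mul_of_nonneg_right hA hlk.le) hp.le
  rw [hcard, ← mul_le_mul_iff_right₀ hp]
  refine (hE.trans (add_le_add (add_le_add t3 (t1.trans t2)) le_rfl)).trans (le_of_eq ?_)
  ring

/-! ### The asymptotic estimate -/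

lemma asymptotic {k n : ℕ} (hk : 2 ≤ k) (hn : 2 ≤ n) (Q : ∀ n, Set (EdgeType n → Fin k))
    (hQ : HereditaryK k Q) (hne : ∀ n, (Q n).Nonempty) (ε : ℝ) (hε : 0 < ε) :
    ∃ N₀ : ℕ, 2 ≤ N₀ ∧ ∀ N ≥ N₀, Real.log (Nat.card (Q N))
      ≤ (exTemplate Q n / n.choose 2 + ε) * N.choose 2 * Real.log k := by
  have hlk : 0 < Real.log k := Real.log_pos (by exact_mod_cast hk)
  have hkpos : (2 : ℝ) ≤ k := by exact_mod_cast hk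
  set L := Real.log k with hL
  set ε1 := ε * L / 4 with hε1
  have hε1pos : 0 < ε1 := by positivity
  set θ := 1 - Real.exp (-ε1) with hθ
  have hθ0 : 0 < θ := by
    have : Real.exp (-ε1) < 1 := Real.exp_lt_one_iff.mpr (by linarith)
    linarith
  have hθ1 : θ < 1 := by
    have := Real.exp_pos (-ε1)
    linarith
  have hθl : -Real.log (1 - θ) = ε1 := by
    rw [hθ, sub_sub_cancel, Real.log_exp, neg_neg]
  set R := Real.log (k / θ) with hR
  have hR0 : 0 ≤ R := by
    apply Real.log_nonneg
    rw [le_div_iff₀ hθ0]; linarith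
  set η := min (1 / (k : ℝ)) (ε1 / (k * (R + 1))) with hη
  have hη0 : 0 < η := lt_min (by positivity) (by positivity)
  have hη1 : η ≤ 1 / k := min_le_left _ _
  have hηR : k * η * R ≤ ε1 := by
    have h1 : η ≤ ε1 / (k * (R + 1)) := min_le_right _ _
    rw [le_div_iff₀ (by positivity)] at h1
    have : 0 ≤ η * k := by positivity
    nlinarith
  set K : ℝ := Fintype.card (EdgeType n → Finset (Fin k)) * (n.choose 2 / η ^ (n.choose 2)) with hK
  have hK0 : 0 ≤ K := by positivity
  set δ := ε / (4 * (K + 1)) with hδ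
  have hδ0 : 0 < δ := by positivity
  obtain ⟨M, hM⟩ := exists_nat_gt (1 / δ ^ 2)
  have hMpos : (0 : ℝ) < M := lt_trans (by positivity) hM
  have hMpos' : 0 < M := by exact_mod_cast hMpos
  have hMs : Real.sqrt (1 / M) ≤ δ := by
    rw [Real.sqrt_le_left hδ0.le, div_le_iff₀ hMpos]
    rw [div_lt_iff₀ (by positivity)] at hM
    linarith
  have hKM : K * Real.sqrt (1 / M) ≤ ε / 4 := by
    have h1 : K * Real.sqrt (1 / M) ≤ K * δ := mul_le_mul_of_nonneg_left hMs hK0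
    have h2 : δ * (4 * (K + 1)) = ε := by rw [hδ]; field_simp
    nlinarith
  obtain ⟨N₁, hN₁⟩ := exists_nat_gt (2 * (M * n * L) / ε1 + 1)
  refine ⟨max N₁ (M * n + n), le_max_of_le_right (by nlinarith), fun N hN => ?_⟩
  have hNa : N₁ ≤ N := le_trans (le_max_left _ _) hN
  have hNb : M * n + n ≤ N := le_trans (le_max_right _ _) hN
  have hmain := main_finite hk hn hMpos' hNb Q hQ hne θ hθ0 hθ1 η hη0 hη1
  have hNr : 2 * (M * n * L) / ε1 + 1 < N := lt_of_lt_of_le hN₁ (by exact_mod_cast hNa)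
  have hch : (N.choose 2 : ℝ) = N * (N - 1) / 2 := Nat.cast_choose_two ℝ N
  have hA : (M * n * N : ℝ) * L ≤ ε1 * N.choose 2 := by
    have h3 : 2 * (M * n * L) / ε1 ≤ N - 1 := by linarith
    rw [div_le_iff₀ hε1pos] at h3
    rw [hch]
    have : (0 : ℝ) ≤ N := by positivity
    nlinarith
  have hKe : (Fintype.card (EdgeType n → Finset (Fin k)) *
        (n.choose 2 * Real.sqrt (1 / M) / η ^ (n.choose 2)) : ℝ) = K * Real.sqrt (1 / M) := by
    rw [hK]; ring
  rw [hθl, hKe] at hmain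
  refine hmain.trans ?_
  have hc0 : (0 : ℝ) ≤ N.choose 2 := by positivity
  have hin : L * (exTemplate Q n / n.choose 2 + K * Real.sqrt (1 / M)) + (ε1 + k * η * R)
      ≤ L * (exTemplate Q n / n.choose 2) + 3 * ε1 := by
    have := mul_le_mul_of_nonneg_left hKM hlk.le
    have h4 : L * (ε / 4) = ε1 := by rw [hε1]; ring
    nlinarith
  have h5 := mul_le_mul_of_nonneg_left hin hc0
  have h6 : ε * L = 4 * ε1 := by rw [hε1]; ring
  calc _ ≤ ε1 * N.choose 2 + N.choose 2 * (L * (exTemplate Q n / n.choose 2) + 3 * ε1) :=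
        add_le_add hA h5
    _ = (exTemplate Q n / n.choose 2) * N.choose 2 * L + (4 * ε1) * N.choose 2 := by ring
    _ = _ := by rw [← h6]; ring

/-- **Theorem (counting colourings in a hereditary property).**
Let `P` be a hereditary property of `[k]`-decorated graphs with `P_n ≠ ∅` for all `n`
and let `ε > 0`.  Then `π(P) = lim ex(n,P_n)/C(n,2)` exists and there is `n₀` such
that for all `n ≥ n₀`, `k^{π(P)·C(n,2)} ≤ |P_n| ≤ k^{(π(P)+ε)·C(n,2)}`. -/
theorem counting_decorated_graphs (k : ℕ) (hk : 2 ≤ k)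
    (P : ∀ n, Set (EdgeType n → Fin k)) (hP : HereditaryK k P)
    (hne : ∀ n, (P n).Nonempty) (ε : ℝ) (hε : 0 < ε) :
    ∃ π : ℝ,
      Tendsto (fun n : ℕ => exTemplate P n / (n.choose 2 : ℝ)) atTop (nhds π) ∧
      ∃ n₀ : ℕ, ∀ n ≥ n₀,
        (k : ℝ) ^ (π * (n.choose 2 : ℝ)) ≤ (Nat.card (P n) : ℝ) ∧
        (Nat.card (P n) : ℝ) ≤ (k : ℝ) ^ ((π + ε) * (n.choose 2 : ℝ)) := by
  have hlk : 0 < Real.log k := Real.log_pos (by exact_mod_cast hk)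
  have hkpos : (0 : ℝ) < k := by positivity
  set b : ℕ → ℝ := fun n => exTemplate P n / (n.choose 2 : ℝ) with hb
  have hb0 : ∀ n, 0 ≤ b n := fun n => div_nonneg (ex_nonneg hk P hne n) (by positivity)
  have hbdd : BddBelow (Set.range fun n => b (n + 2)) := ⟨0, by rintro _ ⟨n, rfl⟩; exact hb0 _⟩
  have hcpos : ∀ n, 2 ≤ n → (0 : ℝ) < n.choose 2 := fun n hn => by
    exact_mod_cast Nat.choose_pos hn
  have hle : ∀ n, 2 ≤ n → (⨅ m, b (m + 2)) ≤ b n := by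
    intro n hn
    obtain ⟨m, rfl⟩ : ∃ m, n = m + 2 := ⟨n - 2, by omega⟩
    exact ciInf_le hbdd m
  -- upper bound on `log |P_N|`
  have hup : ∀ ε' > 0, ∃ N₀ : ℕ, 2 ≤ N₀ ∧ ∀ N ≥ N₀, Real.log (Nat.card (P N))
      ≤ ((⨅ m, b (m + 2)) + ε') * N.choose 2 * Real.log k := by
    intro ε' hε'
    obtain ⟨m, hm⟩ := exists_lt_of_ciInf_lt
      (show (⨅ m, b (m + 2)) < (⨅ m, b (m + 2)) + ε' / 2 by linarith)
    obtain ⟨N₀, h2, hN₀⟩ := asymptotic hk (n := m + 2) (by omega) P hP hne (ε' / 2) (by linarith)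
    refine ⟨N₀, h2, fun N hN => (hN₀ N hN).trans ?_⟩
    have : exTemplate P (m + 2) / ((m + 2).choose 2 : ℝ) + ε' / 2 ≤ (⨅ m, b (m + 2)) + ε' := by
      have : exTemplate P (m + 2) / ((m + 2).choose 2 : ℝ) = b (m + 2) := rfl
      linarith
    gcongr
  -- lower bound on `log |P_N|`
  have hlow : ∀ n, 2 ≤ n → b n * n.choose 2 * Real.log k ≤ Real.log (Nat.card (P n)) := by
    intro n hn
    have h1 := ex_le_log_card hk P hne n
    rw [le_div_iff₀ hlk] at h1
    have h2 : b n * n.choose 2 = exTemplate P n := div_mul_cancel₀ _ (hcpos n hn).ne'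
    rwa [h2]
  have hcard : ∀ n, (0 : ℝ) < Nat.card (P n) := by
    intro n
    have : Nonempty (P n) := (hne n).to_subtype
    exact_mod_cast Nat.card_pos
  refine ⟨⨅ m, b (m + 2), ?_, ?_⟩
  · rw [Metric.tendsto_atTop]
    intro ε' hε'
    obtain ⟨N₀, h2, hN₀⟩ := hup (ε' / 2) (by linarith)
    refine ⟨N₀, fun N hN => ?_⟩
    have hN2 : 2 ≤ N := h2.trans hN
    have h3 := (hlow N hN2).trans (hN₀ N hN)
    have h4 : b N ≤ (⨅ m, b (m + 2)) + ε' / 2 :=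
      le_of_mul_le_mul_right (le_of_mul_le_mul_right h3 hlk) (hcpos N hN2)
    have h5 := hle N hN2
    rw [Real.dist_eq, abs_lt]
    constructor <;> linarith
  · obtain ⟨N₀, h2, hN₀⟩ := hup ε hε
    refine ⟨N₀, fun N hN => ⟨?_, ?_⟩⟩
    · have hN2 : 2 ≤ N := h2.trans hN
      rw [Real.rpow_def_of_pos hkpos, ← Real.le_log_iff_exp_le (hcard N)]
      refine le_trans ?_ (hlow N hN2)
      rw [mul_comm]
      have := hle N hN2
      gcongr
    · rw [Real.rpow_def_of_pos hkpos, ← Real.log_le_iff_le_exp (hcard N)]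
      refine (hN₀ N hN).trans (le_of_eq (by ring))

end
end
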